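/- arXiv:2106.12697 — 2 statements merged into one kernel-verified Lean document; each statement's English description precedes it below -/
import Mathlib

section
/- Let C be a commutative Noetherian ring with Krull dimension D < ∞ and let A = C[x_1,…,x_n]. Let V be an A-module equipped with a quadratic form q. Suppose the orthogonal direct sum of (V,q) with a hyperbolic plane (the free module A^2 with form (u,v) ↦ uv) is isometric to the free module A^{2r} (respectively A^{2r+1}) with the split quadratic form Σ_{i=1}^r x_i x_{−i} (respectively x_0^2 + Σ_{i=1}^r x_i x_{−i}), where r ≥ max(3, D+2). Then V is a free A-module and q is isometric to the split quadratic form of the corresponding rank, namely Σ_{i=1}^{r−1} x_i x_{−i} (respectively x_0^2 + Σ_{i=1}^{r−1} x_i x_{−i}). -/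
open Matrix

section EvenDefs

variable {R : Type*} [CommRing R]

/-- In the basis `e_1,…,e_r,e_{-r},…,e_{-1}` of `R^{2r}` (0-indexed by `Fin (2*r)`),
the position of `e_{-i}` given the position of `e_i` (and vice versa). -/
def negE (r : ℕ) (i : Fin (2 * r)) : Fin (2 * r) := ⟨2 * r - 1 - i.val, by omega⟩

/-- The split quadratic form `q(x) = ∑_{i=1}^r x_i x_{-i}` on `R^{2r}`. -/
def quadE (r : ℕ) (x : Fin (2 * r) → R) : R :=
  ∑ i : Fin r, x ⟨i.val, by omega⟩ * x ⟨2 * r - 1 - i.val, by omega⟩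

/-- The even split orthogonal group `O(2r,R)`, as a set of matrices. -/
def OE (r : ℕ) (R : Type*) [CommRing R] : Set (Matrix (Fin (2 * r)) (Fin (2 * r)) R) :=
  {g | IsUnit g ∧ ∀ x : Fin (2 * r) → R, quadE r (g.mulVec x) = quadE r x}

/-- The elementary orthogonal transvection `T_{i,j}(ξ) = e + ξ e_{i,j} - ξ e_{-j,-i}`. -/
def TE (r : ℕ) (i j : Fin (2 * r)) (ξ : R) : Matrix (Fin (2 * r)) (Fin (2 * r)) R :=
  1 + ξ • Matrix.single i j 1 - ξ • Matrix.single (negE r j) (negE r i) 1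

/-- Being an elementary orthogonal transvection (even case): `T_{i,j}(ξ)` with `i ≠ ±j`. -/
def IsElemE (r : ℕ) (g : Matrix (Fin (2 * r)) (Fin (2 * r)) R) : Prop :=
  ∃ i j : Fin (2 * r), ∃ ξ : R, i ≠ j ∧ i ≠ negE r j ∧ g = TE r i j ξ

/-- `EO(2r,R)^{≤N}` : products of at most `N` elementary orthogonal transvections. -/
def EOE (r N : ℕ) (R : Type*) [CommRing R] : Set (Matrix (Fin (2 * r)) (Fin (2 * r)) R) :=
  {g | ∃ L : List (Matrix (Fin (2 * r)) (Fin (2 * r)) R),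
    L.length ≤ N ∧ (∀ m ∈ L, IsElemE r m) ∧ g = L.prod}

/-- `IUm_{2r}(R)` : isotropic unimodular columns. -/
def IUmE (r : ℕ) (R : Type*) [CommRing R] : Set (Fin (2 * r) → R) :=
  {b | Ideal.span (Set.range b) = ⊤ ∧ quadE r b = 0}

end EvenDefs
section OddDefs

variable {R : Type*} [CommRing R]

/-- Position of the middle basis vector `e_0` in the basis
`e_1,…,e_r,e_0,e_{-r},…,e_{-1}` of `R^{2r+1}`. -/
def midO (r : ℕ) : Fin (2 * r + 1) := ⟨r, by omega⟩

/-- Position of `e_{-i}` given the position of `e_i` (odd case); fixes the middle position. -/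
def negO (r : ℕ) (i : Fin (2 * r + 1)) : Fin (2 * r + 1) := ⟨2 * r - i.val, by omega⟩

/-- The split quadratic form `q(x) = x_0^2 + ∑_{i=1}^r x_i x_{-i}` on `R^{2r+1}`. -/
def quadO (r : ℕ) (x : Fin (2 * r + 1) → R) : R :=
  x (midO r) * x (midO r) + ∑ i : Fin r, x ⟨i.val, by omega⟩ * x ⟨2 * r - i.val, by omega⟩

/-- The odd split orthogonal group `O(2r+1,R)`, as a set of matrices. -/
def OO (r : ℕ) (R : Type*) [CommRing R] : Set (Matrix (Fin (2 * r + 1)) (Fin (2 * r + 1)) R) :=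
  {g | IsUnit g ∧ ∀ x : Fin (2 * r + 1) → R, quadO r (g.mulVec x) = quadO r x}

/-- Long root elementary transvection `T_{i,j}(ξ) = e + ξ e_{i,j} - ξ e_{-j,-i}` (odd case). -/
def TOlong (r : ℕ) (i j : Fin (2 * r + 1)) (ξ : R) :
    Matrix (Fin (2 * r + 1)) (Fin (2 * r + 1)) R :=
  1 + ξ • Matrix.single i j 1 - ξ • Matrix.single (negO r j) (negO r i) 1

/-- Short root elementary transvection
`T_{i,0}(ξ) = e + 2ξ e_{i,0} - ξ e_{0,-i} - ξ² e_{i,-i}`. -/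
def TOshort (r : ℕ) (i : Fin (2 * r + 1)) (ξ : R) :
    Matrix (Fin (2 * r + 1)) (Fin (2 * r + 1)) R :=
  1 + (2 * ξ) • Matrix.single i (midO r) 1
    - ξ • Matrix.single (midO r) (negO r i) 1
    - (ξ * ξ) • Matrix.single i (negO r i) 1

/-- Being an elementary orthogonal transvection (odd case). -/
def IsElemO (r : ℕ) (g : Matrix (Fin (2 * r + 1)) (Fin (2 * r + 1)) R) : Prop :=
  (∃ i j : Fin (2 * r + 1), ∃ ξ : R, i ≠ midO r ∧ j ≠ midO r ∧ i ≠ j ∧ i ≠ negO r j ∧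
      g = TOlong r i j ξ) ∨
  (∃ i : Fin (2 * r + 1), ∃ ξ : R, i ≠ midO r ∧ g = TOshort r i ξ)

/-- `EO(2r+1,R)^{≤N}` : products of at most `N` elementary orthogonal transvections. -/
def EOO (r N : ℕ) (R : Type*) [CommRing R] :
    Set (Matrix (Fin (2 * r + 1)) (Fin (2 * r + 1)) R) :=
  {g | ∃ L : List (Matrix (Fin (2 * r + 1)) (Fin (2 * r + 1)) R),
    L.length ≤ N ∧ (∀ m ∈ L, IsElemO r m) ∧ g = L.prod}

/-- `IUm_{2r+1}(R)` : columns `b` with `q(b) = 0` such that the row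
`(b_1,…,b_r,2b_0,b_{-r},…,b_{-1})` is unimodular. -/
def IUmO (r : ℕ) (R : Type*) [CommRing R] : Set (Fin (2 * r + 1) → R) :=
  {b | Ideal.span (Set.range fun i => if i = midO r then 2 * b i else b i) = ⊤ ∧ quadO r b = 0}

end OddDefs


/-! ### Krull dimension and Kronecker's theorem -/

universe u

lemma hc_minimal_nilp {A : Type*} [CommRing A] (a : A) (p : Ideal A) [p.IsPrime]
    (hp : p ∈ minimalPrimes A) (ha : a ∈ p) : ∃ z ∉ p, IsNilpotent (z * a) := by
  by_contra! hcon
  let M : Submonoid A := p.primeCompl ⊔ Submonoid.powers a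
  have hdis : Disjoint ((⊥ : Ideal A) : Set A) (M : Set A) := by
    rw [Set.disjoint_left]
    intro x hx hxM
    obtain ⟨z, hz, w, ⟨k, rfl⟩, rfl⟩ := Submonoid.mem_sup.1 hxM
    apply hcon z hz
    refine ⟨k + 1, ?_⟩
    have : z * a ^ k = 0 := hx
    calc (z * a) ^ (k + 1) = (z * a ^ k) * (z ^ k * a) := by ring
      _ = 0 := by rw [this, zero_mul]
  obtain ⟨Q, hQ, -, hQM⟩ := Ideal.exists_le_prime_disjoint _ M hdis
  have hQp : Q ≤ p := by
    intro x hx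
    by_contra hxp
    exact Set.disjoint_left.1 hQM hx (Submonoid.mem_sup_left (show x ∈ p.primeCompl from hxp))
  have : p ≤ Q := hp.2 ⟨hQ, bot_le⟩ hQp
  exact Set.disjoint_left.1 hQM (this ha) (Submonoid.mem_sup_right (Submonoid.mem_powers a))

lemma hc_dim_boundary {A : Type*} [CommRing A] (a : A) (N : Ideal A) (ha : a ∈ N)
    (hN : ∀ z : A, IsNilpotent (z * a) → z ∈ N) :
    ringKrullDim (A ⧸ N) + 1 ≤ ringKrullDim A := by
  by_cases hr' : N = ⊤
  · rw [hr', ringKrullDim_eq_bot_of_subsingleton]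
    simp
  have : Nonempty (PrimeSpectrum.zeroLocus (R := A) N) := by
    rwa [Set.nonempty_coe_sort, Set.nonempty_iff_ne_empty, ne_eq,
      PrimeSpectrum.zeroLocus_empty_iff_eq_top]
  have := Ideal.Quotient.nontrivial_iff.mpr hr'
  have := (Ideal.Quotient.mk N).domain_nontrivial
  rw [ringKrullDim_quotient, Order.krullDim_eq_iSup_length, ringKrullDim,
    Order.krullDim_eq_iSup_length, ← WithBot.coe_one, ← WithBot.coe_add,
    ENat.iSup_add, WithBot.coe_le_coe, iSup_le_iff]
  intro l
  obtain ⟨p, hp, hp'⟩ := Ideal.exists_minimalPrimes_le (J := l.head.1.asIdeal) bot_le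
  let p' : PrimeSpectrum A := ⟨p, hp.1.1⟩
  have hNl : N ≤ l.head.1.asIdeal := by
    have := l.head.2
    rwa [PrimeSpectrum.mem_zeroLocus] at this
  have hp' : p' < l.head := by
    refine lt_of_le_of_ne hp' fun h ↦ ?_
    have hap : a ∈ p := by
      have := hNl ha
      rw [← h] at this
      exact this
    have hpp : p ∈ minimalPrimes A := hp
    have : p.IsPrime := hp.1.1
    obtain ⟨z, hz, hza⟩ := hc_minimal_nilp a p hpp hap
    have := hNl (hN z hza)
    rw [← h] at this
    exact hz this
  let l1 : LTSeries (PrimeSpectrum A) := l.map Subtype.val (Subtype.strictMono_coe _)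
  have hl1 : l1.head = l.head.1 := LTSeries.head_map _ _ _
  let l2 : LTSeries (PrimeSpectrum A) := l1.cons p' (by
    change p' < l1.head
    rw [hl1]; exact hp')
  have hlen : l2.length = l.length + 1 := RelSeries.cons_length _ _ _
  have h3 : (l2.length : ℕ∞) ≤ ⨆ q : LTSeries (PrimeSpectrum A), (q.length : ℕ∞) :=
    le_iSup (fun q : LTSeries (PrimeSpectrum A) => (q.length : ℕ∞)) l2
  rw [hlen] at h3
  exact_mod_cast h3

/-- Kronecker's theorem (after Coquand), for `Fin n`-indexed families. -/
lemma hc_kronecker_fin (n : ℕ) : ∀ (A : Type u) [CommRing A], ringKrullDim A < (n : WithBot ℕ∞) →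
    ∀ (a : Fin n → A) (b : A), ∃ c : Fin n → A, ∀ P : Ideal A, P.IsPrime →
      (∀ i, a i + c i * b ∈ P) → b ∈ P := by
  induction n with
  | zero =>
    intro A _ hA a b
    refine ⟨0, fun P hP _ => ?_⟩
    have : Nontrivial A := by
      refine ⟨0, 1, fun h => hP.ne_top ?_⟩
      rw [Ideal.eq_top_iff_one, ← h]; exact P.zero_mem
    have := ringKrullDim_nonneg_of_nontrivial (R := A)
    exact absurd hA (not_lt.2 (by simpa using this))
  | succ n ih =>
    intro A _ hA a b
    let an := a (Fin.last n)
    let J : Ideal A :=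
      { carrier := {z | IsNilpotent (z * an)}
        add_mem' := by
          intro x y hx hy
          change IsNilpotent ((x + y) * an)
          rw [add_mul]
          exact (Commute.all _ _).isNilpotent_add hx hy
        zero_mem' := by
          change IsNilpotent (0 * an)
          rw [zero_mul]; exact IsNilpotent.zero
        smul_mem' := by
          intro c x hx
          change IsNilpotent (c * x * an)
          rw [mul_assoc]
          exact (Commute.all _ _).isNilpotent_mul_left hx }
    let N : Ideal A := Ideal.span {an} ⊔ J
    have hd := hc_dim_boundary an N (Ideal.mem_sup_left (Ideal.mem_span_singleton_self _))
      (fun z hz => Ideal.mem_sup_right hz)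
    have hd' : ringKrullDim (A ⧸ N) < (n : WithBot ℕ∞) := by
      have h2 := lt_of_le_of_lt hd hA
      push_cast at h2
      exact lt_of_add_lt_add_right h2
    obtain ⟨c, hc⟩ := ih (A ⧸ N) hd' (fun i => Ideal.Quotient.mk N (a i.castSucc))
      (Ideal.Quotient.mk N b)
    choose c' hc' using fun i => Ideal.Quotient.mk_surjective (c i)
    -- the ideal generated by the first entries
    let K : Ideal A := Ideal.span (Set.range fun i : Fin n => a i.castSucc + c' i * b)
    have hb : b ∈ (K ⊔ N).radical := by
      rw [Ideal.radical_eq_sInf, Ideal.mem_sInf]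
      rintro P ⟨hKP, hP⟩
      have hNP : N ≤ P := le_trans le_sup_right hKP
      have hker : RingHom.ker (Ideal.Quotient.mk N) ≤ P := by rwa [Ideal.mk_ker]
      have := hP
      have hP' : (P.map (Ideal.Quotient.mk N)).IsPrime :=
        Ideal.map_isPrime_of_surjective Ideal.Quotient.mk_surjective hker
      have := hc _ hP' (fun i => by
        rw [← hc' i, ← map_mul, ← map_add]
        apply Ideal.mem_map_of_mem
        exact hKP (Ideal.mem_sup_left (Ideal.subset_span ⟨i, rfl⟩)))
      rw [Ideal.mem_quotient_iff_mem hNP] at this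
      exact this
    obtain ⟨k, hk⟩ := hb
    obtain ⟨u, hu, w, hw, huw⟩ := Submodule.mem_sup.1 hk
    obtain ⟨y, hy, z, hz, hyz⟩ := Submodule.mem_sup.1 hw
    refine ⟨Fin.snoc (α := fun _ => A) c' z, fun P hP h => ?_⟩
    have hKP : K ≤ P := by
      rw [Ideal.span_le]
      rintro _ ⟨i, rfl⟩
      simpa using h i.castSucc
    have hlast : an + z * b ∈ P := by simpa using h (Fin.last n)
    have hza : z * an ∈ P := by
      obtain ⟨m, hm⟩ := hz
      exact hP.mem_of_pow_mem m (by rw [hm]; exact P.zero_mem)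
    have han : an ∈ P := by
      have : an * an ∈ P := by
        have e : an * an = an * (an + z * b) - b * (z * an) := by ring
        rw [e]
        exact P.sub_mem (P.mul_mem_left _ hlast) (P.mul_mem_left _ hza)
      exact (hP.mem_or_mem this).elim id id
    have hzb : z * b ∈ P := by
      have e : z * b = (an + z * b) - an := by ring
      rw [e]; exact P.sub_mem hlast han
    rcases hP.mem_or_mem hzb with hzP | hbP
    · apply hP.mem_of_pow_mem k
      rw [← huw, ← hyz]
      refine P.add_mem (hKP hu) (P.add_mem ?_ hzP)
      exact (Ideal.span_le.2 (by simpa using han) : Ideal.span {an} ≤ P) hy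
    · exact hbP

lemma hc_kronecker {A : Type u} [CommRing A] {ι : Type*} [Fintype ι] (n : ℕ)
    (hn : n ≤ Fintype.card ι) (hA : ringKrullDim A < (n : WithBot ℕ∞)) (a : ι → A) (b : A) :
    ∃ c : ι → A, ∀ P : Ideal A, P.IsPrime → (∀ i, a i + c i * b ∈ P) → b ∈ P := by
  let e := Fintype.equivFin ι
  have hA' : ringKrullDim A < ((Fintype.card ι : ℕ) : WithBot ℕ∞) :=
    lt_of_lt_of_le hA (by exact_mod_cast hn)
  obtain ⟨c, hc⟩ := hc_kronecker_fin _ A hA' (a ∘ e.symm) b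
  refine ⟨c ∘ e, fun P hP h => hc P hP fun i => ?_⟩
  simpa using h (e.symm i)


/-! ### Localization of polynomial rings at monic polynomials -/

open Polynomial in
/-- The multiplicative set of monic polynomials. -/
def hcMonic (B : Type*) [CommRing B] : Submonoid B[X] where
  carrier := {p | p.Monic}
  one_mem' := monic_one
  mul_mem' := fun hp hq => Monic.mul hp hq

/-- `B(x)`: the polynomial ring with monic polynomials inverted. -/
abbrev hcML (B : Type*) [CommRing B] : Type _ := Localization (hcMonic B)

open Polynomial in
lemma hc_exists_monic {C : Type*} [CommRing C] (p : Ideal C) [p.IsMaximal] (P : Ideal C[X])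
    [P.IsMaximal] (hP : P.comap (Polynomial.C) = p) : ∃ f ∈ P, f.Monic := by
  have hle : p.map (Polynomial.C) ≤ P := by
    rw [Ideal.map_le_iff_le_comap, hP]
  -- an element of `P` not in `p[X]`
  obtain ⟨f, hfP, hf⟩ : ∃ f ∈ P, f ∉ p.map (Polynomial.C) := by
    by_contra! hcon
    have heq : P = p.map (Polynomial.C) := le_antisymm hcon hle
    let _ : Field (C ⧸ p) := Ideal.Quotient.field p
    have hmax : (p.map (Polynomial.C : C →+* C[X])).IsMaximal := heq ▸ ‹P.IsMaximal›
    have hF := (Ideal.Quotient.maximal_ideal_iff_isField_quotient _).1 hmax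
    exact Polynomial.not_isField (C ⧸ p)
      ((Ideal.polynomialQuotientEquivQuotientPolynomial p).toMulEquiv.isField hF)
  -- the reduction is nonzero
  let φ := Polynomial.mapRingHom (Ideal.Quotient.mk p)
  let _ : Field (C ⧸ p) := Ideal.Quotient.field p
  have hker : RingHom.ker φ = p.map (Polynomial.C) := by
    have := Polynomial.ker_mapRingHom (Ideal.Quotient.mk p)
    rw [Ideal.mk_ker] at this
    exact this
  have hφ : φ f ≠ 0 := fun h => hf (hker ▸ (RingHom.mem_ker.2 h))
  obtain ⟨c, hc⟩ := Ideal.Quotient.mk_surjective (I := p) ((φ f).leadingCoeff⁻¹)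
  have hm : (Polynomial.C ((φ f).leadingCoeff⁻¹) * φ f).Monic := by
    rw [mul_comm]; exact monic_mul_leadingCoeff_inv hφ
  obtain ⟨g, hg1, -, hg2⟩ := Polynomial.lifts_and_natDegree_eq_and_monic (f := Ideal.Quotient.mk p)
    (p := Polynomial.C ((φ f).leadingCoeff⁻¹) * φ f)
    ((Polynomial.mem_lifts _).2 ⟨Polynomial.C c * f, by
      rw [Polynomial.map_mul, Polynomial.map_C, hc]; rfl⟩) hm
  refine ⟨g, ?_, hg2⟩
  have h1 : g - Polynomial.C c * f ∈ P := by
    apply hle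
    rw [← hker, RingHom.mem_ker, map_sub, map_mul, sub_eq_zero]
    have h2 : φ (Polynomial.C c) = Polynomial.C ((φ f).leadingCoeff⁻¹) := by
      change Polynomial.map _ (Polynomial.C c) = _
      rw [Polynomial.map_C, hc]
    rw [h2]; exact hg1
  have h2 := P.add_mem h1 (P.mul_mem_left (Polynomial.C c) hfP)
  simpa using h2

open Polynomial in
lemma hc_dim_ML {C : Type*} [CommRing C] [IsNoetherianRing C] (D : ℕ)
    (hD : ringKrullDim C ≤ (D : WithBot ℕ∞)) : ringKrullDim (hcML C) ≤ (D : WithBot ℕ∞) := by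
  have key : ∀ Q : Ideal C, Q.IsPrime → Q.height ≤ (D : ℕ∞) := fun Q hQ => by
    have := (ringKrullDim_le_iff_height_le _).1 hD hQ
    exact_mod_cast this
  rw [ringKrullDim_le_iff_isMaximal_height_le]
  intro M hM
  rw [← IsLocalization.height_under (hcMonic C) M]
  have hMp := hM.isPrime
  set P := M.under C[X] with hPdef
  have hPp : P.IsPrime := inferInstance
  have hdisj : ∀ f ∈ P, ¬ f.Monic := by
    intro f hf hfm
    apply hM.ne_top
    apply Ideal.eq_top_of_isUnit_mem _ (show algebraMap C[X] (hcML C) f ∈ M from hf)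
    exact IsLocalization.map_units (hcML C) (⟨f, hfm⟩ : hcMonic C)
  suffices h : P.height ≤ (D : ℕ∞) by exact_mod_cast h
  have hmaxle : ∀ P' : Ideal C[X], P'.IsMaximal → P'.height ≤ (D : ℕ∞) + 1 := by
    intro P' hP'
    rw [height_eq_height_add_one (P'.under C) P']
    gcongr
    exact key _ inferInstance
  by_cases hPm : P.IsMaximal
  · by_cases hpm : (P.under C).IsMaximal
    · obtain ⟨f, hf, hfm⟩ := hc_exists_monic (P.under C) P rfl
      exact absurd hfm (hdisj f hf)
    · rw [height_eq_height_add_one (P.under C) P]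
      obtain ⟨m, hm, hle⟩ := (P.under C).exists_le_maximal (Ideal.IsPrime.ne_top inferInstance)
      have hlt : P.under C < m := lt_of_le_of_ne hle (fun h => hpm (h ▸ hm))
      have := hm.isPrime
      exact le_trans (Ideal.height_add_one_le_of_lt_of_isPrime hlt) (key m this)
  · obtain ⟨m, hm, hle⟩ := P.exists_le_maximal hPp.ne_top
    have hlt : P < m := lt_of_le_of_ne hle (fun h => hPm (h ▸ hm))
    have := hm.isPrime
    have h1 := le_trans (Ideal.height_add_one_le_of_lt_of_isPrime hlt) (hmaxle m hm)
    exact (ENat.add_le_add_iff_right (by simp)).1 h1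


/-! ### Quadratic forms given by integer matrices and their orthogonal groups -/

section HCForm

variable {J : Type*} [Fintype J] [DecidableEq J] (U : Matrix J J ℤ)
variable {R S : Type*} [CommRing R] [CommRing S]

/-- The quadratic form attached to an integer matrix. -/
def hcQ (v : J → R) : R := ∑ i, ∑ j, (U i j : R) * (v i * v j)

/-- Its polarization. -/
def hcB (v w : J → R) : R := ∑ i, ∑ j, (U i j : R) * (v i * w j + w i * v j)

lemma hcQ_add (v w : J → R) : hcQ U (v + w) = hcQ U v + hcQ U w + hcB U v w := by
  simp only [hcQ, hcB, ← Finset.sum_add_distrib, Pi.add_apply]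
  refine Finset.sum_congr rfl fun i _ => Finset.sum_congr rfl fun j _ => by ring

lemma hcQ_smul (c : R) (v : J → R) : hcQ U (c • v) = c ^ 2 * hcQ U v := by
  simp only [hcQ, Finset.mul_sum, Pi.smul_apply, smul_eq_mul]
  refine Finset.sum_congr rfl fun i _ => Finset.sum_congr rfl fun j _ => by ring

lemma hcB_comm (v w : J → R) : hcB U v w = hcB U w v := by
  simp only [hcB]
  refine Finset.sum_congr rfl fun i _ => Finset.sum_congr rfl fun j _ => by ring

lemma hcB_add_left (v v' w : J → R) : hcB U (v + v') w = hcB U v w + hcB U v' w := by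
  simp only [hcB, ← Finset.sum_add_distrib, Pi.add_apply]
  refine Finset.sum_congr rfl fun i _ => Finset.sum_congr rfl fun j _ => by ring

lemma hcB_smul_left (c : R) (v w : J → R) : hcB U (c • v) w = c * hcB U v w := by
  simp only [hcB, Finset.mul_sum, Pi.smul_apply, smul_eq_mul]
  refine Finset.sum_congr rfl fun i _ => Finset.sum_congr rfl fun j _ => by ring

lemma hcB_add_right (v w w' : J → R) : hcB U v (w + w') = hcB U v w + hcB U v w' := by
  rw [hcB_comm, hcB_add_left, hcB_comm U w, hcB_comm U w']

lemma hcB_smul_right (c : R) (v w : J → R) : hcB U v (c • w) = c * hcB U v w := by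
  rw [hcB_comm, hcB_smul_left, hcB_comm]

lemma hcB_neg_left (v w : J → R) : hcB U (-v) w = - hcB U v w := by
  have := hcB_smul_left U (-1) v w
  simpa using this

lemma hcB_neg_right (v w : J → R) : hcB U v (-w) = - hcB U v w := by
  rw [hcB_comm, hcB_neg_left, hcB_comm]

lemma hcB_sub_left (v v' w : J → R) : hcB U (v - v') w = hcB U v w - hcB U v' w := by
  rw [sub_eq_add_neg, hcB_add_left, hcB_neg_left, sub_eq_add_neg]

lemma hcB_sub_right (v w w' : J → R) : hcB U v (w - w') = hcB U v w - hcB U v w' := by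
  rw [sub_eq_add_neg, hcB_add_right, hcB_neg_right, sub_eq_add_neg]

lemma hcQ_neg (v : J → R) : hcQ U (-v) = hcQ U v := by
  simp [hcQ]

lemma hcQ_sub (v w : J → R) : hcQ U (v - w) = hcQ U v + hcQ U w - hcB U v w := by
  rw [sub_eq_add_neg, hcQ_add, hcQ_neg, hcB_neg_right, sub_eq_add_neg]

lemma hcB_self (v : J → R) : hcB U v v = 2 * hcQ U v := by
  simp only [hcQ, hcB, Finset.mul_sum]
  refine Finset.sum_congr rfl fun i _ => Finset.sum_congr rfl fun j _ => by ring

lemma hcQ_map (φ : R →+* S) (v : J → R) : hcQ U (φ ∘ v) = φ (hcQ U v) := by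
  simp [hcQ, map_sum]

lemma hcB_map (φ : R →+* S) (v w : J → R) : hcB U (φ ∘ v) (φ ∘ w) = φ (hcB U v w) := by
  simp [hcB, map_sum]

lemma hcB_zero_left (w : J → R) : hcB U 0 w = 0 := by simp [hcB]

/-- An isometry preserves the polarization. -/
lemma hcB_of_isom (f : (J → R) →ₗ[R] (J → R)) (h : ∀ v, hcQ U (f v) = hcQ U v) (v w : J → R) :
    hcB U (f v) (f w) = hcB U v w := by
  have h1 := h (v + w)
  rw [map_add, hcQ_add, hcQ_add, h, h] at h1
  exact add_left_cancel h1

/-- It is enough to check the isometry condition on the standard basis. -/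
lemma hc_isom_of_basis (M : Matrix J J R)
    (h1 : ∀ i, hcQ U (M *ᵥ Pi.single i 1) = hcQ U (Pi.single i (1 : R)))
    (h2 : ∀ i j, hcQ U (M *ᵥ (Pi.single i 1 + Pi.single j 1)) =
      hcQ U (Pi.single i (1 : R) + Pi.single j 1)) (v : J → R) :
    hcQ U (M *ᵥ v) = hcQ U v := by
  have hB : ∀ i j, hcB U (M *ᵥ Pi.single i 1) (M *ᵥ Pi.single j 1) =
      hcB U (Pi.single i (1 : R)) (Pi.single j 1) := by
    intro i j
    have := h2 i j
    rw [mulVec_add, hcQ_add, hcQ_add, h1, h1] at this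
    exact add_left_cancel this
  have hB2 : ∀ (s : Finset J) j, hcB U (M *ᵥ ∑ i ∈ s, v i • Pi.single i 1) (M *ᵥ Pi.single j 1) =
      hcB U (∑ i ∈ s, v i • Pi.single i (1 : R)) (Pi.single j 1) := by
    intro s j
    induction s using Finset.induction_on with
    | empty => simp [hcB_zero_left]
    | insert a s ha ih =>
      rw [Finset.sum_insert ha, mulVec_add, hcB_add_left, hcB_add_left, ih, mulVec_smul,
        hcB_smul_left, hcB_smul_left, hB]
  have hQ2 : ∀ (s : Finset J), hcQ U (M *ᵥ ∑ i ∈ s, v i • Pi.single i 1) =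
      hcQ U (∑ i ∈ s, v i • Pi.single i (1 : R)) := by
    intro s
    induction s using Finset.induction_on with
    | empty => simp
    | insert a s ha ih =>
      rw [Finset.sum_insert ha, mulVec_add, hcQ_add, hcQ_add, ih, mulVec_smul, hcQ_smul, hcQ_smul,
        h1, hcB_comm, hcB_smul_right, hB2, hcB_comm U (v a • _), hcB_smul_right]
  have hv : v = ∑ i, v i • Pi.single i (1 : R) := by
    simpa using pi_eq_sum_univ' v
  rw [hv]
  exact hQ2 _

/-- The orthogonal group of the form. -/
def hcO (R : Type*) [CommRing R] : Subgroup (GL J R) where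
  carrier := {g | ∀ v : J → R, hcQ U (g.1 *ᵥ v) = hcQ U v}
  one_mem' := fun v => by simp
  mul_mem' := by
    intro a b ha hb v
    rw [Units.val_mul, ← mulVec_mulVec, ha, hb]
  inv_mem' := by
    intro a ha v
    have h := ha ((a⁻¹).1 *ᵥ v)
    rw [mulVec_mulVec, ← Units.val_mul, mul_inv_cancel, Units.val_one, one_mulVec] at h
    exact h.symm

lemma hc_comp_single [DecidableEq J] (φ : R →+* S) (i : J) :
    φ ∘ (Pi.single i (1 : R)) = Pi.single i (1 : S) := by
  ext j
  by_cases h : j = i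
  · subst h; simp
  · simp [h]

lemma hc_map_mulVec (φ : R →+* S) (M : Matrix J J R) (v : J → R) :
    (M.map φ) *ᵥ (φ ∘ v) = φ ∘ (M *ᵥ v) := by
  ext i
  simp [mulVec, dotProduct, map_sum]

lemma hcO_map (φ : R →+* S) {g : GL J R} (hg : g ∈ hcO U R) :
    Matrix.GeneralLinearGroup.map φ g ∈ hcO U S := by
  have hval : (Matrix.GeneralLinearGroup.map φ g).1 = g.1.map φ := rfl
  refine hc_isom_of_basis U _ (fun i => ?_) (fun i j => ?_)
  · rw [hval, ← hc_comp_single φ, hc_map_mulVec, hcQ_map, hcQ_map, hg]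
  · have : (Pi.single i (1 : S) + Pi.single j 1) =
        φ ∘ (Pi.single i (1 : R) + Pi.single j 1) := by
      rw [← hc_comp_single φ, ← hc_comp_single φ]
      ext k; simp
    rw [hval, this, hc_map_mulVec, hcQ_map, hcQ_map, hg]

lemma hc_glmap_mulVec (φ : R →+* S) (g : GL J R) (v : J → R) :
    (Matrix.GeneralLinearGroup.map φ g).1 *ᵥ (φ ∘ v) = φ ∘ (g.1 *ᵥ v) :=
  hc_map_mulVec φ g.1 v

/-- Build an element of the orthogonal group from linear maps. -/
noncomputable def hcMk (f f' : (J → R) →ₗ[R] (J → R)) (h1 : ∀ v, f (f' v) = v)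
    (h2 : ∀ v, f' (f v) = v) : GL J R where
  val := LinearMap.toMatrix' f
  inv := LinearMap.toMatrix' f'
  val_inv := by
    rw [← LinearMap.toMatrix'_mul]
    rw [show f * f' = 1 from LinearMap.ext h1, LinearMap.toMatrix'_one]
  inv_val := by
    rw [← LinearMap.toMatrix'_mul]
    rw [show f' * f = 1 from LinearMap.ext h2, LinearMap.toMatrix'_one]

lemma hcMk_mulVec (f f' : (J → R) →ₗ[R] (J → R)) (h1 h2) (v : J → R) :
    (hcMk f f' h1 h2).1 *ᵥ v = f v := by
  change LinearMap.toMatrix' f *ᵥ v = f v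
  rw [LinearMap.toMatrix'_mulVec]

lemma hcMk_mem (f f' : (J → R) →ₗ[R] (J → R)) (h1 h2) (h : ∀ v, hcQ U (f v) = hcQ U v) :
    hcMk f f' h1 h2 ∈ hcO U R := by
  intro v
  rw [hcMk_mulVec, h]

/-- If `f` over `R` is compatible with `k` over `S`, then the image of `f` acts as `k`. -/
lemma hcMk_map_mulVec (φ : R →+* S) (f f' : (J → R) →ₗ[R] (J → R)) (h1 h2)
    (k : (J → S) →ₗ[S] (J → S)) (hk : ∀ v : J → R, k (φ ∘ v) = φ ∘ (f v)) (v : J → S) :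
    (Matrix.GeneralLinearGroup.map φ (hcMk f f' h1 h2)).1 *ᵥ v = k v := by
  have : (Matrix.GeneralLinearGroup.map φ (hcMk f f' h1 h2)).1 = LinearMap.toMatrix' k := by
    ext i j
    rw [LinearMap.toMatrix'_apply]
    have e : (fun j' => if j' = j then (1 : S) else 0) = φ ∘ (Pi.single j (1 : R)) := by
      rw [hc_comp_single]
      ext l; simp [Pi.single_apply]
    first
      | rw [e]
      | rw [show (Pi.single j (1 : S) : J → S) = φ ∘ (Pi.single j (1 : R)) from
          (hc_comp_single φ j).symm]
    rw [hk]
    change φ (LinearMap.toMatrix' f i j) = _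
    rw [LinearMap.toMatrix'_apply]
    simp [Pi.single_apply]
  rw [this, LinearMap.toMatrix'_mulVec]

/-- The relation: `w` is obtained from `v` by the image of an orthogonal matrix over `R`. -/
def hcRel (φ : R →+* S) (v w : J → S) : Prop :=
  ∃ g ∈ hcO U R, (Matrix.GeneralLinearGroup.map φ g).1 *ᵥ v = w

variable {U}

lemma hcRel.trans {φ : R →+* S} {v w x : J → S} (h1 : hcRel U φ v w) (h2 : hcRel U φ w x) :
    hcRel U φ v x := by
  obtain ⟨g, hg, rfl⟩ := h1
  obtain ⟨g', hg', rfl⟩ := h2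
  refine ⟨g' * g, mul_mem hg' hg, ?_⟩
  rw [map_mul, Units.val_mul, mulVec_mulVec]

lemma hcRel.symm {φ : R →+* S} {v w : J → S} (h1 : hcRel U φ v w) : hcRel U φ w v := by
  obtain ⟨g, hg, rfl⟩ := h1
  refine ⟨g⁻¹, inv_mem hg, ?_⟩
  rw [mulVec_mulVec, ← Units.val_mul, ← map_mul, inv_mul_cancel, map_one, Units.val_one,
    one_mulVec]

lemma hcRel.isom {φ : R →+* S} {v w : J → S} (h1 : hcRel U φ v w) : hcQ U w = hcQ U v := by
  obtain ⟨g, hg, rfl⟩ := h1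
  exact hcO_map U φ hg v

lemma hcRel.map {φ : R →+* R} (hφ : φ = RingHom.id R) {v w : J → R} (h1 : hcRel U φ v w)
    (ψ : R →+* S) : hcRel U (RingHom.id S) (ψ ∘ v) (ψ ∘ w) := by
  obtain ⟨g, hg, rfl⟩ := h1
  refine ⟨Matrix.GeneralLinearGroup.map ψ g, hcO_map U ψ hg, ?_⟩
  subst hφ
  have e1 : (Matrix.GeneralLinearGroup.map (RingHom.id S)) (Matrix.GeneralLinearGroup.map ψ g) =
    Matrix.GeneralLinearGroup.map ψ g := by ext; rfl
  have e2 : (Matrix.GeneralLinearGroup.map (RingHom.id R)) g = g := by ext; rfl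
  rw [e1, e2, hc_glmap_mulVec]

variable (U)

/-- Eichler transvection. -/
def hcE (e w : J → R) : (J → R) →ₗ[R] (J → R) where
  toFun v := v + hcB U v e • w - (hcB U v w + hcQ U w * hcB U v e) • e
  map_add' v v' := by
    ext i
    simp only [hcB_add_left, Pi.add_apply, Pi.sub_apply, Pi.smul_apply, smul_eq_mul]
    ring
  map_smul' c v := by
    ext i
    simp only [hcB_smul_left, Pi.add_apply, Pi.sub_apply, Pi.smul_apply, smul_eq_mul,
      RingHom.id_apply]
    ring

lemma hcE_apply (e w v : J → R) : hcE U e w v =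
    v + hcB U v e • w - (hcB U v w + hcQ U w * hcB U v e) • e := rfl

lemma hcE_inv (e w : J → R) (he : hcQ U e = 0) (hew : hcB U w e = 0) (v : J → R) :
    hcE U e w (hcE U e (-w) v) = v := by
  have hee : hcB U e e = 0 := by rw [hcB_self, he, mul_zero]
  have hew' : hcB U e w = 0 := by rw [hcB_comm, hew]
  have hww : hcB U w w = 2 * hcQ U w := hcB_self U w
  simp only [hcE_apply, hcB_add_left, hcB_sub_left, hcB_smul_left, hcB_neg_left, hcB_neg_right,
    hcQ_neg, hee, hew, hew', hww, smul_neg]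
  ext i
  simp only [Pi.add_apply, Pi.sub_apply, Pi.smul_apply, smul_eq_mul, Pi.neg_apply]
  ring

lemma hcE_isom (e w : J → R) (he : hcQ U e = 0) (hew : hcB U w e = 0) (v : J → R) :
    hcQ U (hcE U e w v) = hcQ U v := by
  simp only [hcE_apply, hcQ_sub, hcQ_add, hcQ_smul, hcB_add_left, hcB_smul_left,
    hcB_smul_right, he, hew]
  ring

/-- Reflection. -/
def hcS (w : J → R) (c : R) : (J → R) →ₗ[R] (J → R) where
  toFun v := v - (c * hcB U v w) • w
  map_add' v v' := by
    ext i
    simp only [hcB_add_left, Pi.add_apply, Pi.sub_apply, Pi.smul_apply, smul_eq_mul]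
    ring
  map_smul' c v := by
    ext i
    simp only [hcB_smul_left, Pi.sub_apply, Pi.smul_apply, smul_eq_mul,
      RingHom.id_apply]
    ring

lemma hcS_apply (w : J → R) (c : R) (v : J → R) : hcS U w c v = v - (c * hcB U v w) • w := rfl

lemma hcS_inv (w : J → R) (c : R) (hc : c * hcQ U w = 1) (v : J → R) :
    hcS U w c (hcS U w c v) = v := by
  simp only [hcS_apply, hcB_sub_left, hcB_smul_left, hcB_self]
  ext i
  simp only [Pi.sub_apply, Pi.smul_apply, smul_eq_mul]
  linear_combination (2 * c * hcB U v w * w i) * hc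

lemma hcS_isom (w : J → R) (c : R) (hc : c * hcQ U w = 1) (v : J → R) :
    hcQ U (hcS U w c v) = hcQ U v := by
  simp only [hcS_apply, hcQ_sub, hcQ_smul, hcB_smul_right]
  linear_combination (c * hcB U v w ^ 2) * hc

/-- The transvection as an element of the orthogonal group. -/
noncomputable def hcEg (e w : J → R) (he : hcQ U e = 0) (hew : hcB U w e = 0) : GL J R :=
  hcMk (hcE U e w) (hcE U e (-w)) (hcE_inv U e w he hew)
    (fun v => by
      have := hcE_inv U e (-w) he (by rw [hcB_neg_left, hew, neg_zero]) v
      rwa [neg_neg] at this)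

lemma hcEg_mem (e w : J → R) (he hew) : hcEg U e w he hew ∈ hcO U R :=
  hcMk_mem U _ _ _ _ (hcE_isom U e w he hew)

lemma hcEg_mulVec (e w : J → R) (he hew) (v : J → R) :
    (hcEg U e w he hew).1 *ᵥ v = hcE U e w v := hcMk_mulVec _ _ _ _ v

lemma hcEg_map (φ : R →+* S) (e w : J → R) (he hew) (v : J → S) :
    (Matrix.GeneralLinearGroup.map φ (hcEg U e w he hew)).1 *ᵥ v =
      hcE U (φ ∘ e) (φ ∘ w) v := by
  refine hcMk_map_mulVec φ _ _ _ _ (hcE U (φ ∘ e) (φ ∘ w)) (fun v => ?_) v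
  ext i
  simp [hcE_apply, hcB_map, hcQ_map]

/-- The reflection as an element of the orthogonal group. -/
noncomputable def hcSg (w : J → R) (c : R) (hc : c * hcQ U w = 1) : GL J R :=
  hcMk (hcS U w c) (hcS U w c) (hcS_inv U w c hc) (hcS_inv U w c hc)

lemma hcSg_mem (w : J → R) (c : R) (hc) : hcSg U w c hc ∈ hcO U R :=
  hcMk_mem U _ _ _ _ (hcS_isom U w c hc)

lemma hcSg_mulVec (w : J → R) (c : R) (hc) (v : J → R) :
    (hcSg U w c hc).1 *ᵥ v = hcS U w c v := hcMk_mulVec _ _ _ _ v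

lemma hcSg_map (φ : R →+* S) (w : J → R) (c : R) (hc) (v : J → S) :
    (Matrix.GeneralLinearGroup.map φ (hcSg U w c hc)).1 *ᵥ v =
      hcS U (φ ∘ w) (φ c) v := by
  refine hcMk_map_mulVec φ _ _ _ _ (hcS U (φ ∘ w) (φ c)) (fun v => ?_) v
  ext i
  simp [hcS_apply, hcB_map]

end HCForm


/-! ### The split form and transitivity in small dimension -/

section HCSplit

variable {ι κ : Type*} [Fintype ι] [DecidableEq ι] [Fintype κ] [DecidableEq κ]
variable {R S : Type*} [CommRing R] [CommRing S]

/-- The matrix of the split form `∑ x_i y_i + ∑ z_k ^ 2`. -/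
def hcU (ι κ : Type*) [DecidableEq ι] [DecidableEq κ] : Matrix (ι ⊕ ι ⊕ κ) (ι ⊕ ι ⊕ κ) ℤ
  | Sum.inl i, Sum.inr (Sum.inl j) => if i = j then 1 else 0
  | Sum.inr (Sum.inr k), Sum.inr (Sum.inr l) => if k = l then 1 else 0
  | _, _ => 0

lemma hcQ_split (v : ι ⊕ ι ⊕ κ → R) : hcQ (hcU ι κ) v =
    ∑ i, v (Sum.inl i) * v (Sum.inr (Sum.inl i)) + ∑ k, v (Sum.inr (Sum.inr k)) ^ 2 := by
  simp [hcQ, hcU, Fintype.sum_sum_type, pow_two]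

lemma hcB_split (v w : ι ⊕ ι ⊕ κ → R) : hcB (hcU ι κ) v w =
    ∑ i, (v (Sum.inl i) * w (Sum.inr (Sum.inl i)) + w (Sum.inl i) * v (Sum.inr (Sum.inl i)))
      + 2 * ∑ k, v (Sum.inr (Sum.inr k)) * w (Sum.inr (Sum.inr k)) := by
  simp [hcB, hcU, Fintype.sum_sum_type, Finset.mul_sum]
  refine Finset.sum_congr rfl fun k _ => by ring

/-- positive hyperbolic basis vector -/
abbrev hcp (R : Type*) [CommRing R] (κ : Type*) [DecidableEq κ] (o : ι) : ι ⊕ ι ⊕ κ → R :=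
  Pi.single (Sum.inl o) 1
/-- negative hyperbolic basis vector -/
abbrev hcm (R : Type*) [CommRing R] (κ : Type*) [DecidableEq κ] (o : ι) : ι ⊕ ι ⊕ κ → R :=
  Pi.single (Sum.inr (Sum.inl o)) 1

lemma hcB_p (o : ι) (v : ι ⊕ ι ⊕ κ → R) :
    hcB (hcU ι κ) v (hcp R κ o) = v (Sum.inr (Sum.inl o)) := by
  rw [hcB_split]
  simp [Pi.single_apply]

lemma hcB_m (o : ι) (v : ι ⊕ ι ⊕ κ → R) :
    hcB (hcU ι κ) v (hcm R κ o) = v (Sum.inl o) := by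
  rw [hcB_split]
  simp [Pi.single_apply]

lemma hcQ_p (o : ι) : hcQ (hcU ι κ) (hcp R κ o) = 0 := by
  rw [hcQ_split]
  simp [Pi.single_apply]

lemma hcQ_m (o : ι) : hcQ (hcU ι κ) (hcm R κ o) = 0 := by
  rw [hcQ_split]
  simp [Pi.single_apply]

/-- Moving by the transvection along `e_o`. -/
lemma hc_moveP (φ : R →+* S) (hφ : Function.Surjective φ) (o : ι) (v w : ι ⊕ ι ⊕ κ → S)
    (hw : w (Sum.inr (Sum.inl o)) = 0) :
    hcRel (hcU ι κ) φ v (hcE (hcU ι κ) (hcp S κ o) w v) := by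
  classical
  choose f hf using hφ
  let w' : ι ⊕ ι ⊕ κ → R := fun j => if w j = 0 then 0 else f (w j)
  have hw' : φ ∘ w' = w := by
    ext j
    by_cases h : w j = 0 <;> simp [w', h, hf]
  have h0 : hcB (hcU ι κ) w' (hcp R κ o) = 0 := by rw [hcB_p]; simp [w', hw]
  refine ⟨hcEg (hcU ι κ) (hcp R κ o) w' (hcQ_p o) h0, hcEg_mem _ _ _ _ _, ?_⟩
  rw [hcEg_map, hc_comp_single, hw']

/-- Moving by the transvection along `e_{-o}`. -/
lemma hc_moveM (φ : R →+* S) (hφ : Function.Surjective φ) (o : ι) (v w : ι ⊕ ι ⊕ κ → S)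
    (hw : w (Sum.inl o) = 0) :
    hcRel (hcU ι κ) φ v (hcE (hcU ι κ) (hcm S κ o) w v) := by
  classical
  choose f hf using hφ
  let w' : ι ⊕ ι ⊕ κ → R := fun j => if w j = 0 then 0 else f (w j)
  have hw' : φ ∘ w' = w := by
    ext j
    by_cases h : w j = 0 <;> simp [w', h, hf]
  have h0 : hcB (hcU ι κ) w' (hcm R κ o) = 0 := by rw [hcB_m]; simp [w', hw]
  refine ⟨hcEg (hcU ι κ) (hcm R κ o) w' (hcQ_m o) h0, hcEg_mem _ _ _ _ _, ?_⟩
  rw [hcEg_map, hc_comp_single, hw']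

/-- vector supported on the positive part -/
def hcX (κ : Type*) (d : ι → S) : ι ⊕ ι ⊕ κ → S := Sum.elim d 0
/-- vector supported on the negative part -/
def hcY (κ : Type*) (d : ι → S) : ι ⊕ ι ⊕ κ → S := Sum.elim 0 (Sum.elim d 0)

lemma hcE_pX (o : ι) (d : ι → S) (hd : d o = 0) (v : ι ⊕ ι ⊕ κ → S) :
    (hcE (hcU ι κ) (hcp S κ o) (hcX κ d) v) (Sum.inl o) =
      v (Sum.inl o) - ∑ i, d i * v (Sum.inr (Sum.inl i)) ∧
    (∀ i, i ≠ o → (hcE (hcU ι κ) (hcp S κ o) (hcX κ d) v) (Sum.inl i) =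
      v (Sum.inl i) + d i * v (Sum.inr (Sum.inl o))) ∧
    (∀ j, (hcE (hcU ι κ) (hcp S κ o) (hcX κ d) v) (Sum.inr j) = v (Sum.inr j)) := by
  refine ⟨?_, ?_, ?_⟩
  · rw [hcE_apply, hcB_p]
    simp [hcB_split, hcQ_split, hcX, hd]
  · intro i hi
    rw [hcE_apply, hcB_p]
    simp [hcB_split, hcQ_split, hcX, hi]; ring
  · intro j
    rw [hcE_apply, hcB_p]
    simp [hcB_split, hcQ_split, hcX]

lemma hcE_pY (o : ι) (d : ι → S) (v : ι ⊕ ι ⊕ κ → S) :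
    (hcE (hcU ι κ) (hcp S κ o) (hcY κ d) v) (Sum.inl o) =
      v (Sum.inl o) - ∑ i, v (Sum.inl i) * d i := by
  rw [hcE_apply, hcB_p]
  simp [hcB_split, hcQ_split, hcY]

lemma hcE_mX (o : ι) (d : ι → S) (v : ι ⊕ ι ⊕ κ → S) :
    (hcE (hcU ι κ) (hcm S κ o) (hcX κ d) v) (Sum.inr (Sum.inl o)) =
      v (Sum.inr (Sum.inl o)) - ∑ i, d i * v (Sum.inr (Sum.inl i)) ∧
    (∀ i, i ≠ o → (hcE (hcU ι κ) (hcm S κ o) (hcX κ d) v) (Sum.inl i) =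
      v (Sum.inl i) + d i * v (Sum.inl o)) := by
  refine ⟨?_, ?_⟩
  · rw [hcE_apply, hcB_m]
    simp [hcB_split, hcQ_split, hcX]
  · intro i hi
    rw [hcE_apply, hcB_m]
    simp [hcB_split, hcQ_split, hcX]; ring

/-- The isotropic vector with first coordinate `1` can be moved to `e_o`. -/
lemma hc_clear (φ : R →+* S) (hφ : Function.Surjective φ) (o : ι) (v : ι ⊕ ι ⊕ κ → S)
    (hQ : hcQ (hcU ι κ) v = 0) (h1 : v (Sum.inl o) = 1) :
    hcRel (hcU ι κ) φ v (hcp S κ o) := by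
  classical
  let w : ι ⊕ ι ⊕ κ → S := fun j =>
    if j = Sum.inl o then 0 else if j = Sum.inr (Sum.inl o) then 0 else - v j
  have hrel := hc_moveM φ hφ o v w (by simp [w])
  set v' := hcE (hcU ι κ) (hcm S κ o) w v with hv'
  have hQ' : hcQ (hcU ι κ) v' = 0 := by rw [hrel.isom, hQ]
  have e1 : v' (Sum.inl o) = 1 := by
    rw [hv', hcE_apply, hcB_m]; simp [w, h1]
  have e2 : ∀ j, j ≠ Sum.inl o → j ≠ Sum.inr (Sum.inl o) → v' j = 0 := by
    intro j h1' h2'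
    rw [hv', hcE_apply, hcB_m]
    simp [w, h1, h1', h2', Pi.single_apply]
  have e3 : v' (Sum.inr (Sum.inl o)) = 0 := by
    rw [hcQ_split, Finset.sum_eq_single o, e1, Finset.sum_eq_zero] at hQ'
    · simpa using hQ'
    · intro k _; rw [e2 _ (by simp) (by simp)]; simp
    · intro i _ hi; rw [e2 _ (by simpa using hi) (by simp)]; simp
    · simp
  have : v' = hcp S κ o := by
    ext j
    by_cases hj : j = Sum.inl o
    · subst hj; simp [e1]
    · by_cases hj' : j = Sum.inr (Sum.inl o)
      · subst hj'; simp [e3]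
      · rw [e2 j hj hj']; simp [hj]
  rwa [this] at hrel

/-- Isotropic unimodular vectors. -/
def hcIUm (v : ι ⊕ ι ⊕ κ → S) : Prop :=
  hcQ (hcU ι κ) v = 0 ∧ ∃ w w' : ι → S,
    ∑ i, (w i * v (Sum.inl i) + w' i * v (Sum.inr (Sum.inl i))) = 1

lemma hcIUm.map {v : ι ⊕ ι ⊕ κ → R} (h : hcIUm v) (φ : R →+* S) : hcIUm (φ ∘ v) := by
  obtain ⟨h1, w, w', h2⟩ := h
  refine ⟨by rw [hcQ_map, h1, map_zero], φ ∘ w, φ ∘ w', ?_⟩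
  have := congrArg φ h2
  simpa [map_sum] using this

lemma hc_unimod {α : Type*} [Fintype α] (f : α → S)
    (h : ∀ P : Ideal S, P.IsPrime → (∀ i, f i ∈ P) → False) : ∃ t : α → S, ∑ i, t i * f i = 1 := by
  have : Ideal.span (Set.range f) = ⊤ := by
    by_contra hne
    obtain ⟨P, hP, hle⟩ := Ideal.exists_le_maximal _ hne
    exact h P hP.isPrime fun i => hle (Ideal.subset_span ⟨i, rfl⟩)
  have h1 : (1 : S) ∈ Ideal.span (Set.range f) := this ▸ Submodule.mem_top
  rwa [Ideal.mem_span_range_iff_exists_fun] at h1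

lemma hc_unimod' (o : ι) (f g : ι → S)
    (h : ∀ P : Ideal S, P.IsPrime → (∀ i, f i ∈ P) → (∀ i, i ≠ o → g i ∈ P) → False) :
    ∃ t s : ι → S, s o = 0 ∧ ∑ i, t i * f i + ∑ i, s i * g i = 1 := by
  obtain ⟨t, ht⟩ := hc_unimod (Sum.elim f (fun i => if i = o then 0 else g i))
    (fun P hP hh => h P hP (fun i => hh (Sum.inl i)) (fun i hi => by
      have := hh (Sum.inr i)
      simpa [hi] using this))
  refine ⟨fun i => t (Sum.inl i), fun i => if i = o then 0 else t (Sum.inr i), by simp, ?_⟩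
  rw [← ht, Fintype.sum_sum_type]
  congr 1
  refine Finset.sum_congr rfl fun i _ => ?_
  by_cases hi : i = o <;> simp [hi]

end HCSplit

section HCBase

universe u₁
variable {ι κ : Type*} [Fintype ι] [DecidableEq ι] [Fintype κ] [DecidableEq κ]
variable {R : Type*} {S : Type u₁} [CommRing R] [CommRing S]

lemma hc_kronecker' (o : ι) (n : ℕ) (hn : n + 1 ≤ Fintype.card ι)
    (hS : ringKrullDim S < (n : WithBot ℕ∞)) (a : ι → S) (b : S) :
    ∃ c : ι → S, c o = 0 ∧
      ∀ P : Ideal S, P.IsPrime → (∀ i, i ≠ o → a i + c i * b ∈ P) → b ∈ P := by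
  have hcard : n ≤ Fintype.card {i // i ≠ o} := by
    rw [Fintype.card_subtype_compl, Fintype.card_subtype_eq]; omega
  obtain ⟨c, hc⟩ := hc_kronecker n hcard hS (fun i : {i // i ≠ o} => a i) b
  refine ⟨fun i => if h : i ≠ o then c ⟨i, h⟩ else 0, by simp, fun P hP h => hc P hP ?_⟩
  rintro ⟨i, hi⟩
  have := h i hi
  simpa [hi] using this

theorem hc_base (φ : R →+* S) (hφ : Function.Surjective φ) (o : ι) (n : ℕ)
    (hn : n + 1 ≤ Fintype.card ι) (hS : ringKrullDim S < (n : WithBot ℕ∞))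
    (v : ι ⊕ ι ⊕ κ → S) (hv : hcIUm v) : hcRel (hcU ι κ) φ v (hcp S κ o) := by
  obtain ⟨hQ, w, w', hw⟩ := hv
  have hv0 : ∀ P : Ideal S, P.IsPrime → (∀ i, v (Sum.inl i) ∈ P) →
      (∀ i, v (Sum.inr (Sum.inl i)) ∈ P) → False := by
    intro P hP h1 h2
    apply hP.ne_top
    rw [Ideal.eq_top_iff_one, ← hw]
    exact Ideal.sum_mem _ fun i _ => add_mem (P.mul_mem_left _ (h1 i)) (P.mul_mem_left _ (h2 i))
  clear hw
  -- step 1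
  obtain ⟨d, hd0, hd⟩ := hc_kronecker' o n hn hS (fun i => v (Sum.inl i)) (v (Sum.inr (Sum.inl o)))
  have r1 := hc_moveP φ hφ o v (hcX κ d) rfl
  obtain ⟨p1, p2, p3⟩ := hcE_pX (κ := κ) o d hd0 v
  set v1 := hcE (hcU ι κ) (hcp S κ o) (hcX κ d) v
  have hv1 : ∀ P : Ideal S, P.IsPrime → (∀ i, v1 (Sum.inl i) ∈ P) →
      (∀ i, i ≠ o → v1 (Sum.inr (Sum.inl i)) ∈ P) → False := by
    intro P hP h1 h2
    have hb : v (Sum.inr (Sum.inl o)) ∈ P := hd P hP fun i hi => by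
      have := h1 i
      rwa [p2 i hi] at this
    have hy : ∀ i, v (Sum.inr (Sum.inl i)) ∈ P := by
      intro i
      by_cases hi : i = o
      · rwa [hi]
      · have := h2 i hi
        rwa [p3] at this
    refine hv0 P hP (fun i => ?_) hy
    by_cases hi : i = o
    · subst hi
      have := h1 i
      rw [p1] at this
      have h3 : ∑ j, d j * v (Sum.inr (Sum.inl j)) ∈ P :=
        Ideal.sum_mem _ fun j _ => P.mul_mem_left _ (hy j)
      have h4 := add_mem this h3
      rwa [sub_add_cancel] at h4
    · have := h1 i
      rw [p2 i hi] at this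
      exact (add_mem_cancel_right (P.mul_mem_left _ hb)).1 this
  have hQ1 : hcQ (hcU ι κ) v1 = 0 := by rw [r1.isom, hQ]
  refine r1.trans ?_
  clear_value v1
  clear hv0 hQ p1 p2 p3 hd r1
  -- step 2
  obtain ⟨t, s, hs0, hs⟩ := hc_unimod' o (fun i => v1 (Sum.inl i))
    (fun i => v1 (Sum.inr (Sum.inl i))) hv1
  obtain ⟨c, hc0, hc⟩ := hc_kronecker' o n hn hS
    (fun i => v1 (Sum.inl i) + (v1 (Sum.inr (Sum.inl o)) - 1) * s i * v1 (Sum.inl o))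
    (v1 (Sum.inl o) ^ 2)
  let d2 : ι → S := fun i => (v1 (Sum.inr (Sum.inl o)) - 1) * s i + c i * v1 (Sum.inl o)
  have hd2 : d2 o = 0 := by simp [d2, hs0, hc0]
  have r2 := hc_moveM φ hφ o v1 (hcX κ d2) (by simp [hcX, hd2])
  obtain ⟨p1, p2⟩ := hcE_mX (κ := κ) o d2 v1
  set v2 := hcE (hcU ι κ) (hcm S κ o) (hcX κ d2) v1
  have hv2 : ∀ P : Ideal S, P.IsPrime → (∀ i, i ≠ o → v2 (Sum.inl i) ∈ P) →
      v2 (Sum.inr (Sum.inl o)) ∈ P → False := by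
    intro P hP h1 h2
    have ha : v1 (Sum.inl o) ∈ P := hP.mem_of_pow_mem 2 (hc P hP fun i hi => by
      have := h1 i hi
      rw [p2 i hi] at this
      convert this using 1
      simp only [d2]; ring)
    have hx : ∀ i, v1 (Sum.inl i) ∈ P := by
      intro i
      by_cases hi : i = o
      · rwa [hi]
      · have := h1 i hi
        rw [p2 i hi] at this
        exact (add_mem_cancel_right (P.mul_mem_left _ ha)).1 this
    apply hP.ne_top
    rw [Ideal.eq_top_iff_one]
    have e : (1 : S) = v2 (Sum.inr (Sum.inl o))
        + v1 (Sum.inl o) * ∑ i, c i * v1 (Sum.inr (Sum.inl i))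
        - (v1 (Sum.inr (Sum.inl o)) - 1) * ∑ i, t i * v1 (Sum.inl i) := by
      have e2 : ∑ i, d2 i * v1 (Sum.inr (Sum.inl i)) =
          (v1 (Sum.inr (Sum.inl o)) - 1) * ∑ i, s i * v1 (Sum.inr (Sum.inl i)) +
          v1 (Sum.inl o) * ∑ i, c i * v1 (Sum.inr (Sum.inl i)) := by
        simp only [d2, Finset.mul_sum, ← Finset.sum_add_distrib]
        refine Finset.sum_congr rfl fun i _ => by ring
      rw [p1, e2]
      linear_combination (v1 (Sum.inr (Sum.inl o)) - 1) * hs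
    rw [e]
    exact sub_mem (add_mem h2 (P.mul_mem_right _ ha))
      (P.mul_mem_left _ (Ideal.sum_mem _ fun i _ => P.mul_mem_left _ (hx i)))
  have hQ2 : hcQ (hcU ι κ) v2 = 0 := by rw [r2.isom, hQ1]
  refine r2.trans ?_
  clear_value v2
  clear hv1 hQ1 p1 p2 hc r2
  -- step 3
  obtain ⟨d3, hd30, hd3⟩ := hc_kronecker' o n hn hS (fun i => v2 (Sum.inl i))
    (v2 (Sum.inr (Sum.inl o)))
  have r3 := hc_moveP φ hφ o v2 (hcX κ d3) rfl
  obtain ⟨p1, p2, p3⟩ := hcE_pX (κ := κ) o d3 hd30 v2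
  set v3 := hcE (hcU ι κ) (hcp S κ o) (hcX κ d3) v2
  have hv3 : ∀ P : Ideal S, P.IsPrime → (∀ i, i ≠ o → v3 (Sum.inl i) ∈ P) → False := by
    intro P hP h1
    have hb : v2 (Sum.inr (Sum.inl o)) ∈ P := hd3 P hP fun i hi => by
      have := h1 i hi
      rwa [p2 i hi] at this
    refine hv2 P hP (fun i hi => ?_) hb
    have := h1 i hi
    rw [p2 i hi] at this
    exact (add_mem_cancel_right (P.mul_mem_left _ hb)).1 this
  have hQ3 : hcQ (hcU ι κ) v3 = 0 := by rw [r3.isom, hQ2]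
  refine r3.trans ?_
  clear_value v3
  clear hv2 hQ2 p1 p2 p3 hd3 r3
  -- step 4
  obtain ⟨_, s3, hs30, hs3⟩ := hc_unimod' o (fun _ => (0 : S)) (fun i => v3 (Sum.inl i))
    (fun P hP _ h => hv3 P hP h)
  simp only [mul_zero, Finset.sum_const_zero, zero_add] at hs3
  let d4 : ι → S := fun i => (v3 (Sum.inl o) - 1) * s3 i
  have hd4 : d4 o = 0 := by simp [d4, hs30]
  have r4 := hc_moveP φ hφ o v3 (hcY κ d4) hd4
  refine r4.trans (hc_clear φ hφ o _ (by rw [r4.isom, hQ3]) ?_)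
  rw [hcE_pY]
  have e2 : ∑ i, v3 (Sum.inl i) * d4 i = (v3 (Sum.inl o) - 1) * ∑ i, s3 i * v3 (Sum.inl i) := by
    simp only [d4, Finset.mul_sum]
    refine Finset.sum_congr rfl fun i _ => by ring
  rw [e2, hs3]
  ring

end HCBase


/-! ### Lifting orthogonal matrices from a field -/

section HCLift

variable {ι κ : Type*} [Fintype ι] [DecidableEq ι] [Fintype κ] [DecidableEq κ]
variable {R F : Type*} [CommRing R]

lemma hcG_B {S : Type*} [CommRing S] {g : GL (ι ⊕ ι ⊕ κ) S} (hg : g ∈ hcO (hcU ι κ) S) (w w') :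
    hcB (hcU ι κ) (g.1 *ᵥ w) (g.1 *ᵥ w') = hcB (hcU ι κ) w w' :=
  hcB_of_isom _ (Matrix.mulVecLin g.1) (fun v => hg v) w w'

lemma hc_fix_inl {S : Type*} [CommRing S] {g : GL (ι ⊕ ι ⊕ κ) S} (hg : g ∈ hcO (hcU ι κ) S)
    {o : ι} (h : g.1 *ᵥ hcm S κ o = hcm S κ o) (w : ι ⊕ ι ⊕ κ → S) :
    (g.1 *ᵥ w) (Sum.inl o) = w (Sum.inl o) := by
  rw [← hcB_m (κ := κ) o w, ← hcG_B hg, h, hcB_m]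

lemma hc_fix_inr {S : Type*} [CommRing S] {g : GL (ι ⊕ ι ⊕ κ) S} (hg : g ∈ hcO (hcU ι κ) S)
    {o : ι} (h : g.1 *ᵥ hcp S κ o = hcp S κ o) (w : ι ⊕ ι ⊕ κ → S) :
    (g.1 *ᵥ w) (Sum.inr (Sum.inl o)) = w (Sum.inr (Sum.inl o)) := by
  rw [← hcB_p (κ := κ) o w, ← hcG_B hg, h, hcB_p]

lemma hcp_map {S : Type*} [CommRing S] (φ : R →+* S) (o : ι) :
    hcp S κ o = φ ∘ hcp R κ o := by
  ext j; by_cases h : j = Sum.inl o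
  · subst h; simp
  · simp [h]

lemma hcm_map {S : Type*} [CommRing S] (φ : R →+* S) (o : ι) :
    hcm S κ o = φ ∘ hcm R κ o := by
  ext j; by_cases h : j = Sum.inr (Sum.inl o)
  · subst h; simp
  · simp [h]

/-- Orthogonal matrices which fix the hyperbolic basis vectors indexed by `s`. -/
def hcG (κ : Type*) [Fintype κ] [DecidableEq κ] (s : Finset ι) (R : Type*) [CommRing R] :
    Subgroup (GL (ι ⊕ ι ⊕ κ) R) where
  carrier := {g | g ∈ hcO (hcU ι κ) R ∧ ∀ i ∈ s, g.1 *ᵥ hcp R κ i = hcp R κ i ∧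
    g.1 *ᵥ hcm R κ i = hcm R κ i}
  one_mem' := ⟨one_mem _, fun i _ => by
    rw [Units.val_one, one_mulVec, one_mulVec]; exact ⟨rfl, rfl⟩⟩
  mul_mem' := by
    rintro a b ⟨ha, ha'⟩ ⟨hb, hb'⟩
    refine ⟨mul_mem ha hb, fun i hi => ?_⟩
    rw [Units.val_mul, ← mulVec_mulVec, ← mulVec_mulVec, (hb' i hi).1, (hb' i hi).2]
    exact ha' i hi
  inv_mem' := by
    rintro a ⟨ha, ha'⟩
    refine ⟨inv_mem ha, fun i hi => ?_⟩
    have key : ∀ v : ι ⊕ ι ⊕ κ → R, a.1 *ᵥ v = v → (a⁻¹).1 *ᵥ v = v := by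
      intro v hv
      nth_rewrite 1 [← hv]
      rw [mulVec_mulVec, ← Units.val_mul, inv_mul_cancel, Units.val_one, one_mulVec]
    exact ⟨key _ (ha' i hi).1, key _ (ha' i hi).2⟩

lemma hcG_map {S : Type*} [CommRing S] (φ : R →+* S) (s : Finset ι) {g : GL (ι ⊕ ι ⊕ κ) R}
    (hg : g ∈ hcG κ s R) : Matrix.GeneralLinearGroup.map φ g ∈ hcG κ s S := by
  refine ⟨hcO_map _ φ hg.1, fun i hi => ?_⟩
  constructor
  · rw [hcp_map φ, hc_glmap_mulVec, (hg.2 i hi).1]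
  · rw [hcm_map φ, hc_glmap_mulVec, (hg.2 i hi).2]

variable [Field F]

lemma hc_lift_vec (π : R →+* F) (hπ : Function.Surjective π) {α : Type*} (w : α → F) :
    ∃ w' : α → R, π ∘ w' = w ∧ ∀ j, w j = 0 → w' j = 0 := by
  classical
  choose f hf using hπ
  refine ⟨fun j => if w j = 0 then 0 else f (w j), ?_, fun j hj => by simp [hj]⟩
  ext j
  by_cases h : w j = 0 <;> simp [h, hf]

lemma hcG_moveP (π : R →+* F) (hπ : Function.Surjective π) (s : Finset ι) (o : ι) (ho : o ∉ s)
    (w : ι ⊕ ι ⊕ κ → F) (hw : w (Sum.inr (Sum.inl o)) = 0)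
    (hs : ∀ i ∈ s, w (Sum.inl i) = 0 ∧ w (Sum.inr (Sum.inl i)) = 0) :
    ∃ g ∈ hcG κ s R, g.1 *ᵥ hcp R κ o = hcp R κ o ∧
      ∀ v, (Matrix.GeneralLinearGroup.map π g).1 *ᵥ v = hcE (hcU ι κ) (hcp F κ o) w v := by
  obtain ⟨w', hw', hw0⟩ := hc_lift_vec π hπ w
  have h0 : hcB (hcU ι κ) w' (hcp R κ o) = 0 := by rw [hcB_p]; exact hw0 _ hw
  refine ⟨hcEg (hcU ι κ) (hcp R κ o) w' (hcQ_p o) h0, ⟨hcEg_mem _ _ _ _ _, fun i hi => ?_⟩,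
    ?_, fun v => ?_⟩
  · have hio : i ≠ o := fun h => ho (h ▸ hi)
    obtain ⟨h1, h2⟩ := hs i hi
    rw [hcEg_mulVec, hcEg_mulVec, hcE_apply, hcE_apply, hcB_p, hcB_p, hcB_comm, hcB_p,
      hcB_comm, hcB_m, hw0 _ h1, hw0 _ h2]
    simp [Pi.single_apply, hio.symm]
  · rw [hcEg_mulVec, hcE_apply, hcB_p, hcB_comm, hcB_p, hw0 _ hw]
    simp
  · rw [hcEg_map, hc_comp_single, hw']

lemma hcG_moveM (π : R →+* F) (hπ : Function.Surjective π) (s : Finset ι) (o : ι) (ho : o ∉ s)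
    (w : ι ⊕ ι ⊕ κ → F) (hw : w (Sum.inl o) = 0)
    (hs : ∀ i ∈ s, w (Sum.inl i) = 0 ∧ w (Sum.inr (Sum.inl i)) = 0) :
    ∃ g ∈ hcG κ s R, 
      ∀ v, (Matrix.GeneralLinearGroup.map π g).1 *ᵥ v = hcE (hcU ι κ) (hcm F κ o) w v := by
  obtain ⟨w', hw', hw0⟩ := hc_lift_vec π hπ w
  have h0 : hcB (hcU ι κ) w' (hcm R κ o) = 0 := by rw [hcB_m]; exact hw0 _ hw
  refine ⟨hcEg (hcU ι κ) (hcm R κ o) w' (hcQ_m o) h0, ⟨hcEg_mem _ _ _ _ _, fun i hi => ?_⟩,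
    fun v => ?_⟩
  · have hio : i ≠ o := fun h => ho (h ▸ hi)
    obtain ⟨h1, h2⟩ := hs i hi
    rw [hcEg_mulVec, hcEg_mulVec, hcE_apply, hcE_apply, hcB_m, hcB_m, hcB_comm, hcB_p,
      hcB_comm, hcB_m, hw0 _ h1, hw0 _ h2]
    simp [Pi.single_apply, hio.symm]
  · rw [hcEg_map, hc_comp_single, hw']

/-- The reflection in `e_o - u e_{-o}`. -/
lemma hcG_moveS (π : R →+* F) (hu : ∀ x : F, x ≠ 0 → ∃ y : Rˣ, π y = x)
    (s : Finset ι) (o : ι) (ho : o ∉ s) (u : F) (hu0 : u ≠ 0) :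
    ∃ g ∈ hcG κ s R, 
      ∀ v, (Matrix.GeneralLinearGroup.map π g).1 *ᵥ v =
        hcS (hcU ι κ) (hcp F κ o - u • hcm F κ o) (-u⁻¹) v := by
  obtain ⟨y, rfl⟩ := hu u hu0
  have hQ : hcQ (hcU ι κ) (hcp R κ o - (y : R) • hcm R κ o) = - y := by
    rw [hcQ_sub, hcQ_smul, hcQ_p, hcQ_m, hcB_smul_right, hcB_m]
    simp
  refine ⟨hcSg (hcU ι κ) (hcp R κ o - (y : R) • hcm R κ o) (-(y⁻¹ : Rˣ)) (by rw [hQ]; simp),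
    ⟨hcSg_mem _ _ _ _, fun i hi => ?_⟩, fun v => ?_⟩
  · have hio : i ≠ o := fun h => ho (h ▸ hi)
    rw [hcSg_mulVec, hcSg_mulVec, hcS_apply, hcS_apply, hcB_sub_right, hcB_sub_right,
      hcB_smul_right, hcB_smul_right, hcB_p, hcB_m, hcB_p, hcB_m]
    simp [Pi.single_apply, hio.symm]
  · rw [hcSg_map]
    congr 1
    have e1 : π ∘ (hcp R κ o - (y : R) • hcm R κ o) = hcp F κ o - π y • hcm F κ o := by
      rw [hcp_map π, hcm_map π]
      ext j; simp
    have e2 : π (-(y⁻¹ : Rˣ)) = -(π y)⁻¹ := by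
      rw [map_neg]
      congr 1
      apply eq_inv_of_mul_eq_one_left
      rw [← map_mul]; simp
    rw [e1, e2]

/-- Transitivity of the liftable group on isotropic vectors. -/
lemma hcG_trans [Subsingleton κ] (π : R →+* F) (hπ : Function.Surjective π)
    (hu : ∀ x : F, x ≠ 0 → ∃ y : Rˣ, π y = x)
    (s : Finset ι) (o : ι) (ho : o ∉ s) (v : ι ⊕ ι ⊕ κ → F) (hv0 : v ≠ 0)
    (hQ : hcQ (hcU ι κ) v = 0)
    (hs : ∀ i ∈ s, v (Sum.inl i) = 0 ∧ v (Sum.inr (Sum.inl i)) = 0) :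
    ∃ g ∈ hcG κ s R, (Matrix.GeneralLinearGroup.map π g).1 *ᵥ v = hcp F κ o := by
  classical
  -- reduction to first coordinate `1`
  have clear : ∀ v : ι ⊕ ι ⊕ κ → F, hcQ (hcU ι κ) v = 0 →
      (∀ i ∈ s, v (Sum.inl i) = 0 ∧ v (Sum.inr (Sum.inl i)) = 0) → v (Sum.inl o) = 1 →
      ∃ g ∈ hcG κ s R, (Matrix.GeneralLinearGroup.map π g).1 *ᵥ v = hcp F κ o := by
    intro v hQ hs h1
    let w : ι ⊕ ι ⊕ κ → F := fun j =>
      if j = Sum.inl o then 0 else if j = Sum.inr (Sum.inl o) then 0 else - v j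
    obtain ⟨g, hg, hgv⟩ := hcG_moveM (κ := κ) π hπ s o ho w (by simp [w]) (fun i hi => by
      have hio : i ≠ o := fun h => ho (h ▸ hi)
      simp [w, hio, hs i hi])
    refine ⟨g, hg, ?_⟩
    have hQ' : hcQ (hcU ι κ) ((Matrix.GeneralLinearGroup.map π g).1 *ᵥ v) = 0 := by
      rw [hcO_map _ π hg.1, hQ]
    rw [hgv] at hQ' ⊢
    set v' := hcE (hcU ι κ) (hcm F κ o) w v with hv'
    have e1 : v' (Sum.inl o) = 1 := by
      rw [hv', hcE_apply, hcB_m]; simp [w, h1]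
    have e2 : ∀ j, j ≠ Sum.inl o → j ≠ Sum.inr (Sum.inl o) → v' j = 0 := by
      intro j h1' h2'
      rw [hv', hcE_apply, hcB_m]
      simp [w, h1, h1', h2']
    have e3 : v' (Sum.inr (Sum.inl o)) = 0 := by
      rw [hcQ_split, Finset.sum_eq_single o, e1, Finset.sum_eq_zero] at hQ'
      · simpa using hQ'
      · intro k _; rw [e2 _ (by simp) (by simp)]; simp
      · intro i _ hi; rw [e2 _ (by simpa using hi) (by simp)]; simp
      · simp
    ext j
    by_cases hj : j = Sum.inl o
    · subst hj; simp [e1]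
    · by_cases hj' : j = Sum.inr (Sum.inl o)
      · subst hj'; simp [e3]
      · rw [e2 j hj hj']; simp [hj]
  -- combining
  have comb : ∀ v : ι ⊕ ι ⊕ κ → F, hcQ (hcU ι κ) v = 0 →
      (∀ i ∈ s, v (Sum.inl i) = 0 ∧ v (Sum.inr (Sum.inl i)) = 0) →
      (∃ g ∈ hcG κ s R, ∃ v', (Matrix.GeneralLinearGroup.map π g).1 *ᵥ v = v' ∧
        v' (Sum.inl o) = 1) →
      ∃ g ∈ hcG κ s R, (Matrix.GeneralLinearGroup.map π g).1 *ᵥ v = hcp F κ o := by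
    rintro v hQ hs ⟨g, hg, v', rfl, h1⟩
    obtain ⟨g', hg', h'⟩ := clear _ (by rw [hcO_map _ π hg.1, hQ]) (fun i hi => by
      have := (hcG_map π s hg).2 i hi
      constructor
      · rw [hc_fix_inl (hcO_map _ π hg.1) this.2]; exact (hs i hi).1
      · rw [hc_fix_inr (hcO_map _ π hg.1) this.1]; exact (hs i hi).2) h1
    exact ⟨g' * g, mul_mem hg' hg, by rw [map_mul, Units.val_mul, ← mulVec_mulVec, h']⟩
  by_cases hA : ∃ i, i ≠ o ∧ (v (Sum.inl i) ≠ 0 ∨ v (Sum.inr (Sum.inl i)) ≠ 0)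
  · obtain ⟨i, hio, h | h⟩ := hA
    · have his : i ∉ s := fun hi => h (hs i hi).1
      refine comb v hQ hs ?_
      obtain ⟨g, hg, -, hgv⟩ := hcG_moveP (κ := κ) π hπ s o ho
        (((v (Sum.inl o) - 1) / v (Sum.inl i)) • hcm F κ i) (by simp [Pi.single_apply, hio.symm])
        (fun i' hi' => by
          have : i' ≠ i := fun h => his (h ▸ hi')
          simp [Pi.single_apply, this])
      refine ⟨g, hg, _, hgv v, ?_⟩
      rw [hcE_apply, hcB_p, hcB_smul_right, hcB_m, hcQ_smul, hcQ_m]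
      simp [h]
    · have his : i ∉ s := fun hi => h (hs i hi).2
      refine comb v hQ hs ?_
      obtain ⟨g, hg, -, hgv⟩ := hcG_moveP (κ := κ) π hπ s o ho
        (((v (Sum.inl o) - 1) / v (Sum.inr (Sum.inl i))) • hcp F κ i) (by simp)
        (fun i' hi' => by
          have : i' ≠ i := fun h => his (h ▸ hi')
          simp [Pi.single_apply, this])
      refine ⟨g, hg, _, hgv v, ?_⟩
      rw [hcE_apply, hcB_p, hcB_smul_right, hcB_p, hcQ_smul, hcQ_p]
      simp [h, hio.symm]
  · push Not at hA
    have refl1 : ∀ v : ι ⊕ ι ⊕ κ → F, v (Sum.inr (Sum.inl o)) ≠ 0 →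
        ∃ g ∈ hcG κ s R, ∃ v', (Matrix.GeneralLinearGroup.map π g).1 *ᵥ v = v' ∧
        v' (Sum.inl o) = 1 := by
      intro v hb
      obtain ⟨g, hg, hgv⟩ := hcG_moveS (κ := κ) π hu s o ho _ hb
      refine ⟨g, hg, _, hgv v, ?_⟩
      rw [hcS_apply, hcB_sub_right, hcB_smul_right, hcB_p, hcB_m]
      simp
      field_simp
      ring
    by_cases hb : v (Sum.inr (Sum.inl o)) = 0
    · have ha : v (Sum.inl o) ≠ 0 := by
        intro ha
        apply hv0
        have hx : ∀ i, v (Sum.inl i) = 0 := by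
          intro i
          by_cases hi : i = o
          · rw [hi, ha]
          · exact (hA i hi).1
        have hy : ∀ i, v (Sum.inr (Sum.inl i)) = 0 := by
          intro i
          by_cases hi : i = o
          · rw [hi, hb]
          · exact (hA i hi).2
        ext j
        rcases j with i | i | k
        · exact hx i
        · exact hy i
        · rw [hcQ_split] at hQ
          have : ∀ l : κ, l = k := fun l => Subsingleton.elim _ _
          rw [Finset.sum_eq_zero (fun i _ => by rw [hx]; simp), zero_add,
            Finset.sum_eq_single k (fun l _ hl => absurd (this l) hl) (by simp)] at hQ
          simpa using hQ
      obtain ⟨g, hg, hgv⟩ := hcG_moveS (κ := κ) π hu s o ho 1 one_ne_zero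
      refine comb v hQ hs ?_
      obtain ⟨g', hg', v', hv', h1⟩ := refl1 ((Matrix.GeneralLinearGroup.map π g).1 *ᵥ v) (by
        rw [hgv, hcS_apply, hcB_sub_right, hcB_smul_right, hcB_p, hcB_m, hb]
        simpa [hb] using ha)
      exact ⟨g' * g, mul_mem hg' hg, v', by
        rw [map_mul, Units.val_mul, ← mulVec_mulVec, hv'], h1⟩
    · exact comb v hQ hs (refl1 v hb)

/-- If `h` fixes `e_o`, correct it to fix `e_{-o}`. -/
lemma hcG_fixM (π : R →+* F) (hπ : Function.Surjective π)
    (s : Finset ι) (o : ι) (ho : o ∉ s) (h : GL (ι ⊕ ι ⊕ κ) F) (hh : h ∈ hcG κ s F)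
    (hho : h.1 *ᵥ hcp F κ o = hcp F κ o) :
    ∃ g ∈ hcG κ s R, g.1 *ᵥ hcp R κ o = hcp R κ o ∧
      Matrix.GeneralLinearGroup.map π g * h ∈ hcG κ (insert o s) F := by
  classical
  set v := h.1 *ᵥ hcm F κ o with hv
  have hb : v (Sum.inr (Sum.inl o)) = 1 := by
    rw [hv, hc_fix_inr hh.1 hho]; simp
  have hs : ∀ i ∈ s, v (Sum.inl i) = 0 ∧ v (Sum.inr (Sum.inl i)) = 0 := by
    intro i hi
    have hio : i ≠ o := fun h => ho (h ▸ hi)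
    have := hh.2 i hi
    constructor
    · rw [hv, hc_fix_inl hh.1 this.2]; simp
    · rw [hv, hc_fix_inr hh.1 this.1]; simp [hio]
  have hQ : hcQ (hcU ι κ) v = 0 := by rw [hv, hh.1, hcQ_m]
  let w : ι ⊕ ι ⊕ κ → F := fun j =>
    if j = Sum.inl o then 0 else if j = Sum.inr (Sum.inl o) then 0 else - v j
  obtain ⟨g, hg, hgo, hgv⟩ := hcG_moveP (κ := κ) π hπ s o ho w (by simp [w]) (fun i hi => by
    have hio : i ≠ o := fun h => ho (h ▸ hi)
    simp [w, hio, hs i hi])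
  refine ⟨g, hg, hgo, ?_⟩
  have hmem := mul_mem (hcG_map π s hg) hh
  refine ⟨hmem.1, fun i hi => ?_⟩
  rcases Finset.mem_insert.1 hi with rfl | hi
  · constructor
    · rw [Units.val_mul, ← mulVec_mulVec, hho, hcp_map π, hc_glmap_mulVec, hgo]
    · rw [Units.val_mul, ← mulVec_mulVec, ← hv]
      have hQ' : hcQ (hcU ι κ) ((Matrix.GeneralLinearGroup.map π g).1 *ᵥ v) = 0 := by
        rw [hcO_map _ π hg.1, hQ]
      rw [hgv] at hQ' ⊢
      set v' := hcE (hcU ι κ) (hcp F κ i) w v with hv'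
      have e1 : v' (Sum.inr (Sum.inl i)) = 1 := by
        rw [hv', hcE_apply, hcB_p]; simp [w, hb]
      have e2 : ∀ j, j ≠ Sum.inl i → j ≠ Sum.inr (Sum.inl i) → v' j = 0 := by
        intro j h1' h2'
        rw [hv', hcE_apply, hcB_p]
        simp [w, hb, h1', h2']
      have e3 : v' (Sum.inl i) = 0 := by
        rw [hcQ_split, Finset.sum_eq_single i, e1, Finset.sum_eq_zero] at hQ'
        · simpa using hQ'
        · intro k _; rw [e2 _ (by simp) (by simp)]; simp
        · intro i' _ hi; rw [e2 _ (by simpa using hi) (by simp)]; simp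
        · simp
      ext j
      by_cases hj : j = Sum.inr (Sum.inl i)
      · subst hj; simp [e1]
      · by_cases hj' : j = Sum.inl i
        · subst hj'; simp [e3]
        · rw [e2 j hj' hj]; simp [hj]
  · exact hmem.2 i hi

/-- Matrices fixing all hyperbolic vectors lift. -/
lemma hcG_lift_univ [Subsingleton κ] (π : R →+* F) (h : GL (ι ⊕ ι ⊕ κ) F)
    (hh : h ∈ hcG κ Finset.univ F) :
    ∃ g ∈ hcG κ Finset.univ R, Matrix.GeneralLinearGroup.map π g = h := by
  classical
  have hcol : ∀ h' : GL (ι ⊕ ι ⊕ κ) F, h' ∈ hcG κ Finset.univ F →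
      (∀ k, h'.1 *ᵥ (Pi.single (Sum.inr (Sum.inr k)) 1) =
        h.1 *ᵥ (Pi.single (Sum.inr (Sum.inr k)) 1)) → h' = h := by
    intro h' hh' hk
    apply Units.ext
    apply Matrix.ext_of_mulVec_single
    rintro (i | i | k)
    · rw [(hh'.2 i (Finset.mem_univ i)).1, (hh.2 i (Finset.mem_univ i)).1]
    · rw [(hh'.2 i (Finset.mem_univ i)).2, (hh.2 i (Finset.mem_univ i)).2]
    · exact hk k
  rcases isEmpty_or_nonempty κ with hκ | ⟨⟨k⟩⟩
  · exact ⟨1, one_mem _, hcol _ (by rw [map_one]; exact one_mem _) (fun k => hκ.elim k)⟩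
  · have hk : ∀ l : κ, l = k := fun l => Subsingleton.elim _ _
    set v := h.1 *ᵥ (Pi.single (Sum.inr (Sum.inr k)) (1 : F)) with hv
    have hvx : ∀ i, v (Sum.inl i) = 0 := by
      intro i
      rw [hv, hc_fix_inl hh.1 (hh.2 i (Finset.mem_univ i)).2]; simp
    have hvy : ∀ i, v (Sum.inr (Sum.inl i)) = 0 := by
      intro i
      rw [hv, hc_fix_inr hh.1 (hh.2 i (Finset.mem_univ i)).1]; simp
    have hQk : (1 : R) * hcQ (hcU ι κ) (Pi.single (Sum.inr (Sum.inr k)) (1 : R)) = 1 := by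
      rw [one_mul, hcQ_split, Finset.sum_eq_zero (fun i _ => by simp), zero_add,
            Finset.sum_eq_single k (fun l _ hl => absurd (hk l) hl) (by simp)]
      simp
    have hc : v (Sum.inr (Sum.inr k)) ^ 2 = 1 := by
      have h1 : hcQ (hcU ι κ) v = 1 := by
        rw [hv, hh.1, hcQ_split, Finset.sum_eq_zero (fun i _ => by simp), zero_add,
            Finset.sum_eq_single k (fun l _ hl => absurd (hk l) hl) (by simp)]
        simp
      rwa [hcQ_split, Finset.sum_eq_zero (fun i _ => by rw [hvx]; simp), zero_add,
            Finset.sum_eq_single k (fun l _ hl => absurd (hk l) hl) (by simp)] at h1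
    have hveq : ∀ c, v (Sum.inr (Sum.inr k)) = c →
        v = c • Pi.single (Sum.inr (Sum.inr k)) 1 := by
      rintro c rfl
      ext j
      rcases j with i | i | l
      · simp [hvx]
      · simp [hvy]
      · rw [hk l]; simp
    rcases (by simpa using hc : v (Sum.inr (Sum.inr k)) = 1 ∨ v (Sum.inr (Sum.inr k)) = -1) with h1 | h1
    · refine ⟨1, one_mem _, hcol _ (by rw [map_one]; exact one_mem _) (fun l => ?_)⟩
      rw [hk l, ← hv, hveq _ h1, map_one, Units.val_one, one_mulVec, one_smul]
    · have hBk : ∀ (v : ι ⊕ ι ⊕ κ → R),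
          hcB (hcU ι κ) v (Pi.single (Sum.inr (Sum.inr k)) (1 : R)) =
            2 * v (Sum.inr (Sum.inr k)) := by
        intro v
        rw [hcB_split, Finset.sum_eq_zero (fun i _ => by simp), zero_add,
            Finset.sum_eq_single k (fun l _ hl => absurd (hk l) hl) (by simp)]
        simp
      have hg : hcSg (hcU ι κ) _ _ hQk ∈ hcG κ Finset.univ R := by
        refine ⟨hcSg_mem _ _ _ _, fun i _ => ?_⟩
        rw [hcSg_mulVec, hcSg_mulVec, hcS_apply, hcS_apply, hBk, hBk]
        simp
      refine ⟨_, hg, hcol _ (hcG_map π _ hg) (fun l => ?_)⟩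
      rw [hk l, ← hv, hveq _ h1, ← hc_comp_single π, hc_glmap_mulVec, hcSg_mulVec, hcS_apply, hBk]
      ext j
      simp
      rw [map_ofNat]
      ring

/-- Lifting of orthogonal matrices over a field. -/
lemma hcG_lift [Subsingleton κ] (π : R →+* F) (hπ : Function.Surjective π)
    (hu : ∀ x : F, x ≠ 0 → ∃ y : Rˣ, π y = x) :
    ∀ (n : ℕ) (s : Finset ι), sᶜ.card = n → ∀ h : GL (ι ⊕ ι ⊕ κ) F, h ∈ hcG κ s F →
      ∃ g ∈ hcG κ s R, Matrix.GeneralLinearGroup.map π g = h := by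
  classical
  intro n
  induction n with
  | zero =>
    intro s hs h hh
    have : s = Finset.univ := by simpa using hs
    subst this
    exact hcG_lift_univ π h hh
  | succ n ih =>
    intro s hs h hh
    obtain ⟨o, ho⟩ : sᶜ.Nonempty := by rw [← Finset.card_pos]; omega
    have ho' : o ∉ s := by simpa using ho
    have hne : h.1 *ᵥ hcp F κ o ≠ 0 := by
      intro h0
      have := congrArg (fun v => (h⁻¹).1 *ᵥ v) h0
      simp only [mulVec_mulVec, ← Units.val_mul, inv_mul_cancel, Units.val_one, one_mulVec,
        mulVec_zero] at this
      have := congrFun this (Sum.inl o)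
      simp at this
    obtain ⟨g1, hg1, hg1v⟩ := hcG_trans (κ := κ) π hπ hu s o ho' _ hne
      (by rw [hh.1, hcQ_p]) (fun i hi => by
        have hio : i ≠ o := fun h => ho' (h ▸ hi)
        constructor
        · rw [hc_fix_inl hh.1 (hh.2 i hi).2]; simp [hio]
        · rw [hc_fix_inr hh.1 (hh.2 i hi).1]; simp)
    have hm1 := mul_mem (hcG_map π s hg1) hh
    obtain ⟨g2, hg2, -, hm2⟩ := hcG_fixM π hπ s o ho' _ hm1
      (by rw [Units.val_mul, ← mulVec_mulVec, hg1v])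
    obtain ⟨g3, hg3, hg3e⟩ := ih (insert o s) (by
      rw [Finset.compl_insert, Finset.card_erase_of_mem ho, hs]; rfl) _ hm2
    have hg3' : g3 ∈ hcG κ s R := ⟨hg3.1, fun i hi => hg3.2 i (Finset.mem_insert_of_mem hi)⟩
    refine ⟨g1⁻¹ * (g2⁻¹ * g3), mul_mem (inv_mem hg1) (mul_mem (inv_mem hg2) hg3'), ?_⟩
    rw [map_mul, map_mul, hg3e, map_inv, map_inv]
    group

/-- Lifting of stabilizers of an isotropic vector. -/
theorem hc_lift [Subsingleton κ] (π : R →+* F) (hπ : Function.Surjective π)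
    (hu : ∀ x : F, x ≠ 0 → ∃ y : Rˣ, π y = x) (o : ι) (h : GL (ι ⊕ ι ⊕ κ) F)
    (hh : h ∈ hcO (hcU ι κ) F) (hho : h.1 *ᵥ hcp F κ o = hcp F κ o) :
    ∃ g ∈ hcO (hcU ι κ) R, g.1 *ᵥ hcp R κ o = hcp R κ o ∧
      Matrix.GeneralLinearGroup.map π g = h := by
  obtain ⟨g1, hg1, hg1o, hm1⟩ := hcG_fixM π hπ ∅ o (by simp) h ⟨hh, by simp⟩ hho
  obtain ⟨g2, hg2, hg2e⟩ := hcG_lift π hπ hu _ _ rfl _ hm1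
  refine ⟨g1⁻¹ * g2, mul_mem (inv_mem hg1.1) hg2.1, ?_, ?_⟩
  · rw [Units.val_mul, ← mulVec_mulVec, (hg2.2 o (by simp)).1]
    nth_rewrite 1 [← hg1o]
    rw [mulVec_mulVec, ← Units.val_mul, inv_mul_cancel, Units.val_one, one_mulVec]
  · rw [map_mul, hg2e, map_inv]
    group

end HCLift


/-! ### Horrocks-type theorem -/

section HCHorrocks

open Polynomial

variable {B : Type*} [CommRing B]

/-- Elements of `B(X)` of nonpositive degree. -/
def hcT (B : Type*) [CommRing B] : Subalgebra B (hcML B) where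
  carrier := {z | ∃ h g : B[X], g.Monic ∧ h.natDegree ≤ g.natDegree ∧
    z * algebraMap B[X] (hcML B) g = algebraMap B[X] (hcML B) h}
  mul_mem' := by
    rintro a b ⟨h, g, hg, hd, e⟩ ⟨h', g', hg', hd', e'⟩
    refine ⟨h * h', g * g', hg.mul hg', ?_, ?_⟩
    · rw [hg.natDegree_mul hg']
      exact natDegree_mul_le.trans (add_le_add hd hd')
    · rw [map_mul, map_mul, ← e, ← e']; ring
  add_mem' := by
    rintro a b ⟨h, g, hg, hd, e⟩ ⟨h', g', hg', hd', e'⟩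
    refine ⟨h * g' + h' * g, g * g', hg.mul hg', ?_, ?_⟩
    · rw [hg.natDegree_mul hg']
      refine natDegree_add_le_of_degree_le ?_ ?_
      · exact natDegree_mul_le.trans (add_le_add hd le_rfl)
      · rw [add_comm]; exact natDegree_mul_le.trans (add_le_add hd' le_rfl)
    · rw [map_add, map_mul, map_mul, map_mul, ← e, ← e']; ring
  algebraMap_mem' := by
    intro r
    refine ⟨C r, 1, monic_one, by simp, ?_⟩
    rw [map_one, mul_one, IsScalarTower.algebraMap_apply B B[X] (hcML B)]
    rfl

lemma hcML_inj : Function.Injective (algebraMap B[X] (hcML B)) := by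
  apply IsLocalization.injective (hcML B) (M := hcMonic B)
  intro g hg
  exact (show g.Monic from hg).mem_nonZeroDivisors

lemma hcT_add (z : hcML B) : ∃ p : B[X], ∃ t ∈ hcT B, z = algebraMap B[X] (hcML B) p + t := by
  obtain ⟨p, ⟨g, hg⟩, rfl⟩ := IsLocalization.exists_mk'_eq (hcMonic B) z
  have hg' : g.Monic := hg
  refine ⟨p /ₘ g, IsLocalization.mk' _ (p %ₘ g) ⟨g, hg⟩, ⟨p %ₘ g, g, hg',
    natDegree_modByMonic_le _ hg', IsLocalization.mk'_spec _ _ _⟩, ?_⟩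
  rw [IsLocalization.mk'_eq_iff_eq_mul, add_mul, IsLocalization.mk'_spec, ← map_mul, ← map_add]
  congr 1
  rw [mul_comm, add_comm]
  exact (modByMonic_add_div p g).symm

lemma hcT_const (p : B[X]) (hp : algebraMap B[X] (hcML B) p ∈ hcT B) : p = C (p.eval 0) := by
  obtain ⟨h, g, hg, hd, e⟩ := hp
  rw [← map_mul] at e
  have e' := hcML_inj e
  nontriviality B
  have : p.natDegree = 0 := by
    by_cases hp0 : p = 0
    · simp [hp0]
    · have h1 := hg.natDegree_mul' hp0
      rw [mul_comm, e'] at h1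
      omega
  rw [eq_C_of_natDegree_eq_zero this]
  simp

variable {J : Type*} [Fintype J] [DecidableEq J]

lemma hc_mem_smul_top {I : Ideal B} (y : J → hcML B)
    (hy : ∀ k, y k ∈ I.map (algebraMap B (hcML B))) :
    y ∈ I • (⊤ : Submodule B (J → hcML B)) := by
  have : y = ∑ k, LinearMap.single B (fun _ : J => hcML B) k (y k) := by
    ext i; simp [Finset.sum_apply, Pi.single_apply]
  rw [this]
  refine Submodule.sum_mem _ fun k _ => ?_
  have h1 : y k ∈ I • (⊤ : Submodule B (hcML B)) := by
    rw [Ideal.smul_top_eq_map]; exact hy k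
  have h2 := Submodule.mem_map_of_mem (f := LinearMap.single B (fun _ : J => hcML B) k) h1
  rw [Submodule.map_smul''] at h2
  exact Submodule.smul_mono le_rfl le_top h2

/-- The map `p ↦ g p`. -/
noncomputable def hcTheta (g : Matrix J J (hcML B)) : (J → B[X]) →ₗ[B] (J → hcML B) :=
  (g.mulVecLin.restrictScalars B) ∘ₗ
    ((IsScalarTower.toAlgHom B B[X] (hcML B)).toLinearMap.compLeft J)

lemma hcTheta_apply (g : Matrix J J (hcML B)) (p : J → B[X]) :
    hcTheta g p = g *ᵥ (algebraMap B[X] (hcML B) ∘ p) := by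
  rfl

lemma hc_horrocks_col [IsLocalRing B] (g : GL J (hcML B))
    (hg : ∀ i k, (g.1 - 1) i k ∈ (IsLocalRing.maximalIdeal B).map (algebraMap B (hcML B))) (i : J) :
    ∃ p : J → B[X], (∀ k, p k ∈ (IsLocalRing.maximalIdeal B).map (C : B →+* B[X])) ∧
      ∀ k, (g.1 *ᵥ (algebraMap B[X] (hcML B) ∘ (Pi.single i 1 + p))) k ∈ hcT B := by
  set m := IsLocalRing.maximalIdeal B
  set TJ : Submodule B (J → hcML B) := Submodule.pi Set.univ (fun _ => (hcT B).toSubmodule)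
  set N : Submodule B (J → hcML B) := TJ ⊔ LinearMap.range (hcTheta g.1)
  have hsm : ∀ y : J → hcML B, (g.1 - 1) *ᵥ y ∈ m • (⊤ : Submodule B (J → hcML B)) := by
    intro y
    apply hc_mem_smul_top
    intro k
    exact Ideal.sum_mem _ fun l _ => Ideal.mul_mem_right _ _ (hg k l)
  -- common denominator of the inverse
  obtain ⟨⟨f, hf⟩, hfi⟩ := IsLocalization.exist_integer_multiples_of_finite (hcMonic B)
    (fun ij : J × J => (g⁻¹).1 ij.1 ij.2)
  have hfm : f.Monic := hf
  choose G hG using hfi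
  have hfN : ∀ p : J → B[X], (algebraMap B[X] (hcML B) ∘ (f • p)) ∈ N := by
    intro p
    refine Submodule.mem_sup_right ⟨(Matrix.of fun i j => G (i, j)) *ᵥ p, ?_⟩
    rw [hcTheta_apply, ← hc_map_mulVec]
    have : ((Matrix.of fun i j => G (i, j)).map (algebraMap B[X] (hcML B))) =
        algebraMap B[X] (hcML B) f • (g⁻¹).1 := by
      ext i j
      have := hG (i, j)
      simp only [Matrix.map_apply, Matrix.of_apply, Matrix.smul_apply]
      rw [this, Algebra.smul_def]; rfl
    rw [this, mulVec_mulVec, Matrix.mul_smul, ← Units.val_mul, mul_inv_cancel, Units.val_one,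
      smul_mulVec, one_mulVec]
    ext k; simp
  set F : Submodule B (J → hcML B) := Submodule.span B (Set.range fun x : Fin f.natDegree × J =>
    algebraMap B[X] (hcML B) ∘ (Pi.single x.2 (X ^ (x.1 : ℕ)))) with hF
  have hFG : F.FG := Submodule.fg_span (Set.finite_range _)
  have htop : (⊤ : Submodule B (J → hcML B)) ≤ N ⊔ F := by
    rintro y -
    choose p t ht e using fun k => hcT_add (y k)
    have h1 : y = (algebraMap B[X] (hcML B) ∘ (f • fun k => p k /ₘ f)) +
        (algebraMap B[X] (hcML B) ∘ (fun k => p k %ₘ f)) + t := by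
      ext k
      rw [e k]
      simp only [Pi.add_apply, Function.comp_apply, Pi.smul_apply, smul_eq_mul]
      rw [← map_add, add_comm (f * _), modByMonic_add_div]
    rw [h1]
    refine add_mem (add_mem (Submodule.mem_sup_left (hfN _)) (Submodule.mem_sup_right ?_))
      (Submodule.mem_sup_left (Submodule.mem_sup_left ?_))
    · have h2 : (algebraMap B[X] (hcML B) ∘ (fun k => p k %ₘ f)) =
          ∑ x : Fin f.natDegree × J, (p x.2 %ₘ f).coeff x.1 •
            (algebraMap B[X] (hcML B) ∘ (Pi.single x.2 (X ^ (x.1 : ℕ)))) := by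
        ext k
        rw [Finset.sum_apply, Fintype.sum_prod_type]
        simp only [Function.comp_apply, Pi.smul_apply]
        have h3 : ∀ x : Fin f.natDegree, ∑ y : J, (p y %ₘ f).coeff x •
            algebraMap B[X] (hcML B) ((Pi.single y (X ^ (x : ℕ)) : J → B[X]) k) =
            algebraMap B[X] (hcML B) (C ((p k %ₘ f).coeff x) * X ^ (x : ℕ)) := by
          intro x
          rw [Finset.sum_eq_single k]
          · simp [Algebra.smul_def, IsScalarTower.algebraMap_apply B B[X] (hcML B)]
          · intro b _ hb; rw [Pi.single_eq_of_ne hb.symm]; simp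
          · simp
        rw [Finset.sum_congr rfl fun x _ => h3 x, ← map_sum]
        congr 1
        nontriviality B
        have h4 : (p k %ₘ f).natDegree < f.natDegree ∨ f.natDegree = 0 := by
          rcases Nat.eq_zero_or_pos f.natDegree with h | h
          · right; exact h
          · left; exact natDegree_modByMonic_lt _ hfm (fun h' => by simp [h'] at h)
        rcases h4 with h4 | h4
        · conv_lhs => rw [as_sum_range' _ _ h4]
          rw [Finset.sum_range]
          simp [C_mul_X_pow_eq_monomial]
        · have hf1 : f = 1 := hfm.natDegree_eq_zero.1 h4
          subst hf1
          simp
      rw [h2]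
      exact Submodule.sum_mem _ fun x _ => Submodule.smul_mem _ _
        (Submodule.subset_span ⟨x, rfl⟩)
    · intro k _; exact ht k
  have hFN : F ≤ N := by
    refine Submodule.le_of_le_smul_of_le_jacobson_bot (I := m) hFG
      (IsLocalRing.jacobson_eq_maximalIdeal ⊥ bot_ne_top).ge ?_
    rw [hF, Submodule.span_le, ← hF]
    rintro _ ⟨x, rfl⟩
    set y := algebraMap B[X] (hcML B) ∘ (Pi.single x.2 (X ^ (x.1 : ℕ)))
    have e : y = g.1 *ᵥ y - (g.1 - 1) *ᵥ y := by
      rw [Matrix.sub_mulVec, one_mulVec]; abel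
    change y ∈ N ⊔ m • F
    rw [e]
    refine sub_mem (Submodule.mem_sup_left (Submodule.mem_sup_right ⟨_, hcTheta_apply _ _⟩)) ?_
    have h1 := Submodule.smul_mono (le_refl m) htop (hsm y)
    rw [Submodule.smul_sup] at h1
    have h2 : m • N ⊔ m • F ≤ N ⊔ m • F := sup_le_sup_right Submodule.smul_le_right _
    exact h2 h1
  have hN : (⊤ : Submodule B (J → hcML B)) ≤ N := htop.trans (sup_le le_rfl hFN)
  have h1 := Submodule.smul_mono (le_refl m) hN (hsm (Pi.single i 1))
  rw [Submodule.smul_sup] at h1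
  obtain ⟨t, ht, u, hu, e⟩ := Submodule.mem_sup.1 h1
  rw [LinearMap.range_eq_map, ← Submodule.map_smul''] at hu
  obtain ⟨p, hp, rfl⟩ := hu
  have ht' : t ∈ TJ := Submodule.smul_le_right ht
  refine ⟨-p, fun k => ?_, fun k => ?_⟩
  · have h2 := Submodule.mem_map_of_mem (f := LinearMap.proj (R := B) (φ := fun _ : J => B[X]) k) hp
    rw [Submodule.map_smul''] at h2
    have h3 := Submodule.smul_mono (le_refl m) le_top h2
    rw [Ideal.smul_top_eq_map] at h3
    exact neg_mem h3
  · have e2 : g.1 *ᵥ (algebraMap B[X] (hcML B) ∘ (Pi.single i 1 + -p)) = Pi.single i 1 + t := by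
      have e3 : (algebraMap B[X] (hcML B) ∘ (Pi.single i 1 + -p)) =
          Pi.single i 1 - algebraMap B[X] (hcML B) ∘ p := by
        rw [← hc_comp_single (algebraMap B[X] (hcML B))]
        ext k; simp [sub_eq_add_neg]
      rw [e3, Matrix.mulVec_sub, ← hcTheta_apply]
      rw [Matrix.sub_mulVec, one_mulVec] at e
      have e4 : g.1 *ᵥ (Pi.single i 1) = Pi.single i 1 + (t + hcTheta g.1 p) := by
        rw [e]; abel
      rw [e4]; abel
    rw [e2]
    refine add_mem ?_ (ht' k trivial)
    by_cases h : k = i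
    · subst h; simp
    · simp [h]

lemma hc_eval_mem (I : Ideal B) (p : B[X]) (hp : p ∈ I.map (C : B →+* B[X])) : p.eval 0 ∈ I := by
  have h1 : I.map (C : B →+* B[X]) ≤ I.comap (evalRingHom 0) := by
    rw [Ideal.map_le_iff_le_comap]
    intro x hx
    simpa using hx
  exact h1 hp

/-- Horrocks-type theorem for isotropic vectors. -/
theorem hc_horrocks [IsLocalRing B] (U : Matrix J J ℤ) (g : GL J (hcML B))
    (hgO : g ∈ hcO U (hcML B))
    (hg : ∀ i k, (g.1 - 1) i k ∈ (IsLocalRing.maximalIdeal B).map (algebraMap B (hcML B)))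
    (v : J → B[X]) (o : J) (hv : g.1 *ᵥ (algebraMap B[X] (hcML B) ∘ v) = Pi.single o 1) :
    ∃ N ∈ hcO U B[X], N.1 *ᵥ (fun i => C ((v i).eval 0)) = v := by
  set m := IsLocalRing.maximalIdeal B with hm
  set j := algebraMap B[X] (hcML B) with hj
  have hinv : g.1⁻¹ = (g⁻¹).1 := (Matrix.coe_units_inv g).symm
  -- the contragredient
  have hgg : (g⁻¹).1 * g.1 = 1 := by rw [← Units.val_mul, inv_mul_cancel, Units.val_one]
  have hgg' : g.1 * (g⁻¹).1 = 1 := by rw [← Units.val_mul, mul_inv_cancel, Units.val_one]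
  let g' : GL J (hcML B) := ⟨(g⁻¹).1ᵀ, g.1ᵀ, by rw [← transpose_mul, hgg', transpose_one],
    by rw [← transpose_mul, hgg, transpose_one]⟩
  have hg'1 : ∀ i k, (g'.1 - 1) i k ∈ m.map (algebraMap B (hcML B)) := by
    intro i k
    have e : (g'.1 - 1) i k = (-((g⁻¹).1 * (g.1 - 1))) k i := by
      rw [Matrix.mul_sub, hgg, mul_one, neg_sub]
      simp only [g', Matrix.sub_apply, Matrix.transpose_apply]
      congr 1
      by_cases h : i = k
      · subst h; rfl
      · rw [Matrix.one_apply_ne h, Matrix.one_apply_ne (Ne.symm h)]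
    rw [e, Matrix.neg_apply, Matrix.mul_apply]
    exact neg_mem (Ideal.sum_mem _ fun l _ => Ideal.mul_mem_left _ _ (hg l i))
  choose p hp hpT using hc_horrocks_col g hg
  choose p' hp' hpT' using hc_horrocks_col g' hg'1
  let P : Matrix J J B[X] := Matrix.of fun k i => (Pi.single i (1 : B[X]) + p i : J → B[X]) k
  let P' : Matrix J J B[X] := Matrix.of fun k i => (Pi.single i (1 : B[X]) + p' i : J → B[X]) k
  let W := g.1 * P.map j
  let W' := g'.1 * P'.map j
  have hW : ∀ k i, W k i ∈ hcT B := fun k i => hpT i k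
  have hW' : ∀ k i, W' k i ∈ hcT B := fun k i => hpT' i k
  have hW'g : (P'.map j)ᵀ = W'ᵀ * g.1 := by
    simp only [W', g', transpose_mul, transpose_transpose]
    rw [Matrix.mul_assoc, hgg, mul_one]
  have hTmul : ∀ (M : Matrix J J (hcML B)) (y : J → hcML B), (∀ k i, M k i ∈ hcT B) →
      (∀ i, y i ∈ hcT B) → ∀ k, (M *ᵥ y) k ∈ hcT B := by
    intro M y hM hy k
    exact sum_mem fun i _ => mul_mem (hM k i) (hy i)
  -- the constant matrix
  let n0 : Matrix J J B := (P'ᵀ * P).map (evalRingHom 0)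
  have hn0 : P'ᵀ * P = n0.map C := by
    ext1 k i
    refine hcT_const _ ?_
    have e : (P'ᵀ * P).map j = W'ᵀ * W := by
      rw [Matrix.map_mul, transpose_map, hW'g]
      simp only [W, Matrix.mul_assoc]
    have e2 : j ((P'ᵀ * P) k i) = (W'ᵀ * W) k i := by rw [← e]; rfl
    rw [← hj, e2, Matrix.mul_apply]
    exact sum_mem fun l _ => mul_mem (hW' l k) (hW l i)
  have hP1 : ∀ k i, (P - 1) k i ∈ m.map (C : B →+* B[X]) := by
    intro k i
    have : (P - 1) k i = p i k := by
      simp only [P, Matrix.sub_apply, Matrix.of_apply, Pi.add_apply, Matrix.one_apply,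
        Pi.single_apply]
      ring
    rw [this]; exact hp i k
  have hP1' : ∀ k i, (P' - 1) k i ∈ m.map (C : B →+* B[X]) := by
    intro k i
    have : (P' - 1) k i = p' i k := by
      simp only [P', Matrix.sub_apply, Matrix.of_apply, Pi.add_apply, Matrix.one_apply,
        Pi.single_apply]
      ring
    rw [this]; exact hp' i k
  have hres : ∀ M : Matrix J J B[X], (∀ k i, (M - 1) k i ∈ m.map (C : B →+* B[X])) →
      (M.map (evalRingHom 0)).map (IsLocalRing.residue B) = 1 := by
    intro M hM
    ext k i
    have h1 := hc_eval_mem m _ (hM k i)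
    have h2 := (IsLocalRing.residue_eq_zero_iff _).2 h1
    rw [Matrix.sub_apply, eval_sub, map_sub, sub_eq_zero] at h2
    change IsLocalRing.residue B (eval 0 (M k i)) = _
    rw [h2]
    by_cases h : k = i
    · subst h; simp
    · simp [Matrix.one_apply_ne h]
  have hunit : ∀ M : Matrix J J B, M.map (IsLocalRing.residue B) = 1 → IsUnit M := by
    intro M hM
    rw [Matrix.isUnit_iff_isUnit_det]
    have : IsLocalRing.residue B M.det = 1 := by
      rw [RingHom.map_det, RingHom.mapMatrix_apply, hM, det_one]
    by_contra hne
    rw [← mem_nonunits_iff, ← IsLocalRing.mem_maximalIdeal, ← IsLocalRing.residue_eq_zero_iff,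
      this] at hne
    exact one_ne_zero hne
  have hn0u : IsUnit n0 := by
    apply hunit
    have e : n0 = (P'.map (evalRingHom 0))ᵀ * P.map (evalRingHom 0) := by
      simp only [n0]
      rw [Matrix.map_mul, transpose_map]
    rw [e, Matrix.map_mul, transpose_map, hres P hP1, hres P' hP1']
    simp
  obtain ⟨⟨n1, n2, h12, h21⟩, rfl : n1 = n0⟩ := hn0u
  obtain ⟨⟨q1, q2, hq12, hq21⟩, hq1 : q1 = _⟩ := hunit _ (hres P hP1)
  have hCm : ∀ a b : Matrix J J B, (a * b).map (C : B →+* B[X]) = a.map C * b.map C :=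
    fun a b => Matrix.map_mul
  have hC1 : (1 : Matrix J J B).map (C : B →+* B[X]) = 1 := Matrix.map_one _ C.map_zero C.map_one
  have hPl : (n2.map C * P'ᵀ) * P = 1 := by
    rw [Matrix.mul_assoc, hn0, ← hCm, h21, hC1]
  have hPr : P * (n2.map C * P'ᵀ) = 1 := mul_eq_one_comm.1 hPl
  -- the isometry
  have hQP : ∀ y : J → B, hcQ U (P *ᵥ (C ∘ y)) = C (hcQ U (q1 *ᵥ y)) := by
    intro y
    have h1 : hcQ U (P *ᵥ (C ∘ y)) = C ((hcQ U (P *ᵥ (C ∘ y))).eval 0) := by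
      refine hcT_const _ ?_
      rw [← hj, ← hcQ_map, ← hc_map_mulVec, ← hgO, mulVec_mulVec]
      have hy : ∀ k, (W *ᵥ (j ∘ (C ∘ y))) k ∈ hcT B := hTmul _ _ hW fun i => by
        have := (hcT B).algebraMap_mem (y i)
        rwa [IsScalarTower.algebraMap_apply B B[X] (hcML B)] at this
      exact sum_mem fun k _ => sum_mem fun l _ => mul_mem (intCast_mem _ _)
        (mul_mem (hy k) (hy l))
    rw [h1]
    congr 1
    change evalRingHom 0 _ = _
    rw [← hcQ_map, ← hc_map_mulVec, hq1]
    congr 2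
    ext k; simp
  let N : GL J B[X] := ⟨P * q2.map C, q1.map C * (n2.map C * P'ᵀ), by
      rw [Matrix.mul_assoc, ← Matrix.mul_assoc (q2.map C), ← hCm, hq21, hC1, one_mul, hPr], by
      rw [Matrix.mul_assoc, ← Matrix.mul_assoc _ P, hPl, one_mul, ← hCm, hq12, hC1]⟩
  have hNC : ∀ y : J → B, N.1 *ᵥ (C ∘ y) = P *ᵥ (C ∘ (q2 *ᵥ y)) := by
    intro y
    change (P * q2.map C) *ᵥ _ = _
    rw [← mulVec_mulVec, hc_map_mulVec]
  have hNQ : ∀ y : J → B, hcQ U (N.1 *ᵥ (C ∘ y)) = hcQ U ((C : B →+* B[X]) ∘ y) := by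
    intro y
    rw [hNC, hQP, mulVec_mulVec, hq12, one_mulVec, hcQ_map]
  refine ⟨N, ?_, ?_⟩
  · refine hc_isom_of_basis U _ (fun i => ?_) (fun i k => ?_)
    · rw [← hc_comp_single (C : B →+* B[X]), hNQ]
    · have : (Pi.single i (1 : B[X]) + Pi.single k 1) =
          (C : B →+* B[X]) ∘ (Pi.single i (1 : B) + Pi.single k 1) := by
        rw [← hc_comp_single (C : B →+* B[X]), ← hc_comp_single (C : B →+* B[X])]
        ext l; simp
      rw [this, hNQ]
  · let c : J → B := fun k => ((P'ᵀ *ᵥ v) k).eval 0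
    have hc : P'ᵀ *ᵥ v = C ∘ c := by
      ext1 k
      refine hcT_const _ ?_
      have e : j ((P'ᵀ *ᵥ v) k) = (W'ᵀ *ᵥ Pi.single o 1) k := by
        have := congrFun (hc_map_mulVec j P'ᵀ v) k
        rw [Function.comp_apply] at this
        rw [← this, transpose_map, hW'g, ← mulVec_mulVec, hv]
      rw [← hj, e]
      refine hTmul _ _ (fun k i => hW' i k) (fun i => ?_) k
      by_cases h : i = o
      · subst h; simp
      · simp [h]
    have hvP : v = P *ᵥ (C ∘ (n2 *ᵥ c)) := by
      rw [← hc_map_mulVec, ← hc, mulVec_mulVec, mulVec_mulVec, Matrix.mul_assoc, hPr, one_mulVec]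
    have hv0 : (fun i => (v i).eval 0) = q1 *ᵥ (n2 *ᵥ c) := by
      have : (evalRingHom 0) ∘ v = q1 *ᵥ (n2 *ᵥ c) := by
        rw [hvP, ← hc_map_mulVec, hq1]
        congr 1
        ext k; simp
      exact this
    have : (fun i => C ((v i).eval 0)) = C ∘ (fun i => (v i).eval 0) := rfl
    rw [this, hNC, hv0, mulVec_mulVec, hq21, one_mulVec, ← hvP]

end HCHorrocks


/-! ### The local theorem -/

section HCLocal

open Polynomial

lemma hcRel_id {J R : Type*} [Fintype J] [DecidableEq J] [CommRing R] {U : Matrix J J ℤ}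
    {v w : J → R} : hcRel U (RingHom.id R) v w ↔ ∃ g ∈ hcO U R, g.1 *ᵥ v = w := by
  have e2 : ∀ g : GL J R, (Matrix.GeneralLinearGroup.map (RingHom.id R)) g = g := by
    intro g; ext; rfl
  simp only [hcRel, e2]

variable {B : Type*} [CommRing B] [IsLocalRing B]

lemma hcPi_unit (y : hcMonic B) : IsUnit (((algebraMap (IsLocalRing.ResidueField B)[X]
    (FractionRing (IsLocalRing.ResidueField B)[X])).comp
      (mapRingHom (IsLocalRing.residue B))) y) := by
  have h : (y : B[X]).Monic := y.2
  have h2 : (mapRingHom (IsLocalRing.residue B) (y : B[X])).Monic := h.map _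
  rw [RingHom.comp_apply, isUnit_iff_ne_zero]
  intro h3
  rw [map_eq_zero_iff _ (IsFractionRing.injective _ _)] at h3
  exact h2.ne_zero h3

variable (B) in
/-- The map from `B(X)` to the rational functions over the residue field. -/
noncomputable def hcPi : hcML B →+* FractionRing (IsLocalRing.ResidueField B)[X] :=
  IsLocalization.lift (M := hcMonic B) (S := hcML B) hcPi_unit

lemma hcPi_alg (p : B[X]) : hcPi B (algebraMap B[X] (hcML B) p) =
    algebraMap _ _ (p.map (IsLocalRing.residue B)) :=
  IsLocalization.lift_eq _ _

lemma hcPi_unit_lift_aux (h : (IsLocalRing.ResidueField B)[X]) (hh : h ≠ 0) :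
    ∃ y : (hcML B)ˣ, hcPi B y = algebraMap _ _ h := by
  set k := IsLocalRing.ResidueField B
  set c := h.leadingCoeff with hc
  have hc0 : c ≠ 0 := leadingCoeff_ne_zero.2 hh
  obtain ⟨c', hc'⟩ := IsLocalRing.residue_surjective c
  have hcu : IsUnit c' := by
    by_contra hn
    rw [← mem_nonunits_iff, ← IsLocalRing.mem_maximalIdeal, ← IsLocalRing.residue_eq_zero_iff] at hn
    exact hc0 (hc' ▸ hn)
  have hm : (h * C c⁻¹).Monic := monic_mul_leadingCoeff_inv hh
  have hsurj := Polynomial.map_surjective (IsLocalRing.residue B) IsLocalRing.residue_surjective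
  obtain ⟨p, hp1, -, hp2⟩ := Polynomial.lifts_and_natDegree_eq_and_monic
    (f := IsLocalRing.residue B) (p := h * C c⁻¹)
    ((Polynomial.mem_lifts _).2 (hsurj _)) hm
  have hpu : IsUnit (algebraMap B[X] (hcML B) (C c' * p)) := by
    rw [map_mul]
    refine IsUnit.mul ((hcu.map C).map _) ?_
    exact IsLocalization.map_units (hcML B) (⟨p, hp2⟩ : hcMonic B)
  refine ⟨hpu.unit, ?_⟩
  rw [IsUnit.unit_spec, hcPi_alg, Polynomial.map_mul, map_C, hp1, hc']
  congr 1
  rw [mul_comm, mul_assoc, ← C_mul, inv_mul_cancel₀ hc0, C_1, mul_one]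

lemma hcPi_unit_lift (x : FractionRing (IsLocalRing.ResidueField B)[X]) (hx : x ≠ 0) :
    ∃ y : (hcML B)ˣ, hcPi B y = x := by
  obtain ⟨a, b, hb, rfl⟩ := IsFractionRing.div_surjective (A := (IsLocalRing.ResidueField B)[X]) x
  have ha : a ≠ 0 := by rintro rfl; simp at hx
  obtain ⟨y, hy⟩ := hcPi_unit_lift_aux a ha
  obtain ⟨z, hz⟩ := hcPi_unit_lift_aux b (nonZeroDivisors.ne_zero hb)
  refine ⟨y * z⁻¹, ?_⟩
  rw [Units.val_mul, map_mul, hy, div_eq_mul_inv]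
  congr 1
  apply eq_inv_of_mul_eq_one_left
  rw [← hz, ← map_mul, Units.inv_mul, map_one]

lemma hcPi_surj : Function.Surjective (hcPi B) := by
  intro x
  by_cases hx : x = 0
  · exact ⟨0, by rw [hx, map_zero]⟩
  · obtain ⟨y, hy⟩ := hcPi_unit_lift x hx
    exact ⟨y, hy⟩

lemma hcPi_ker (z : hcML B) (hz : hcPi B z = 0) :
    z ∈ (IsLocalRing.maximalIdeal B).map (algebraMap B (hcML B)) := by
  obtain ⟨⟨p, s⟩, hp⟩ := IsLocalization.surj (hcMonic B) z
  have h1 := congrArg (hcPi B) hp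
  rw [map_mul, hz, zero_mul, hcPi_alg, eq_comm, map_eq_zero_iff _ (IsFractionRing.injective _ _)] at h1
  have h2 : p ∈ (IsLocalRing.maximalIdeal B).map (C : B →+* B[X]) := by
    have := Polynomial.ker_mapRingHom (IsLocalRing.residue B)
    rw [IsLocalRing.ker_residue] at this
    rw [← this]
    exact h1
  have h3 := Ideal.mem_map_of_mem (algebraMap B[X] (hcML B)) h2
  rw [Ideal.map_map] at h3
  have h4 : (algebraMap B[X] (hcML B)).comp C = algebraMap B (hcML B) :=
    (IsScalarTower.algebraMap_eq B B[X] (hcML B)).symm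
  rw [h4, ← hp] at h3
  have hu := IsLocalization.map_units (hcML B) s
  exact ((Ideal.unit_mul_mem_iff_mem _ hu).1 (mul_comm z _ ▸ h3))

variable {ι κ : Type*} [Fintype ι] [DecidableEq ι] [Fintype κ] [DecidableEq κ]

theorem hc_local [Subsingleton κ] (o : ι) (h3 : 3 ≤ Fintype.card ι) (v : ι ⊕ ι ⊕ κ → B[X])
    (hv : hcIUm v) (hrel : hcRel (hcU ι κ) (RingHom.id (hcML B))
      (algebraMap B[X] (hcML B) ∘ v) (hcp _ κ o)) :
    hcRel (hcU ι κ) (RingHom.id B[X]) v (fun i => C ((v i).eval 0)) := by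
  set j := algebraMap B[X] (hcML B) with hj
  set ρ := mapRingHom (IsLocalRing.residue B) with hρ
  have hsurj : Function.Surjective ρ :=
    Polynomial.map_surjective (IsLocalRing.residue B) IsLocalRing.residue_surjective
  have hdim : ringKrullDim (IsLocalRing.ResidueField B)[X] < ((2 : ℕ) : WithBot ℕ∞) := by
    rw [Polynomial.ringKrullDim_of_isNoetherianRing, ringKrullDim_eq_zero_of_field, zero_add]
    exact_mod_cast one_lt_two
  obtain ⟨γ, hγ, hγv⟩ := hc_base ρ hsurj o 2 h3 hdim (ρ ∘ v) (hv.map ρ)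
  rw [hc_glmap_mulVec] at hγv
  obtain ⟨g, hg, hgv⟩ := hcRel_id.1 hrel
  set v' := γ.1 *ᵥ v with hv'
  have r1 : hcRel (hcU ι κ) (RingHom.id B[X]) v v' := hcRel_id.2 ⟨γ, hγ, rfl⟩
  set g1 := g * (Matrix.GeneralLinearGroup.map j γ)⁻¹ with hg1
  have hg1m : g1 ∈ hcO (hcU ι κ) (hcML B) := mul_mem hg (inv_mem (hcO_map _ j hγ))
  have hg1v : g1.1 *ᵥ (j ∘ v') = hcp _ κ o := by
    rw [hv', ← hc_glmap_mulVec, hg1, mulVec_mulVec, ← Units.val_mul,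
      inv_mul_cancel_right, hgv]
  have hpj : hcPi B ∘ (j ∘ v') = hcp _ κ o := by
    rw [hcp_map (algebraMap (IsLocalRing.ResidueField B)[X]
      (FractionRing (IsLocalRing.ResidueField B)[X])), ← hγv]
    ext i
    exact hcPi_alg _
  obtain ⟨g0, hg0, hg0o, hg0π⟩ := hc_lift (hcPi B) hcPi_surj hcPi_unit_lift o
    (Matrix.GeneralLinearGroup.map (hcPi B) g1) (hcO_map _ _ hg1m) (by
      conv_lhs => rw [← hpj]
      rw [hc_glmap_mulVec, hg1v, ← hcp_map])
  have hg2v : (g0⁻¹ * g1).1 *ᵥ (j ∘ v') = hcp _ κ o := by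
    rw [Units.val_mul, ← mulVec_mulVec, hg1v]
    conv_lhs => rw [← hg0o]
    rw [mulVec_mulVec, ← Units.val_mul, inv_mul_cancel, Units.val_one, one_mulVec]
  have hg2π : Matrix.GeneralLinearGroup.map (hcPi B) (g0⁻¹ * g1) = 1 := by
    rw [map_mul, map_inv, hg0π, inv_mul_cancel]
  obtain ⟨N, hN, hNv⟩ := hc_horrocks (hcU ι κ) (g0⁻¹ * g1) (mul_mem (inv_mem hg0) hg1m) (by
    intro i k
    apply hcPi_ker
    have h5 : (Matrix.GeneralLinearGroup.map (hcPi B) (g0⁻¹ * g1)).1 = (1 : Matrix _ _ _) := by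
      rw [hg2π, Units.val_one]
    have := congrFun (congrFun h5 i) k
    rw [Matrix.sub_apply, map_sub, sub_eq_zero]
    refine Eq.trans this ?_
    by_cases h : i = k
    · subst h; simp
    · simp [Matrix.one_apply_ne h]) v' (Sum.inl o) hg2v
  have r2 : hcRel (hcU ι κ) (RingHom.id B[X]) (fun i => C ((v' i).eval 0)) v' :=
    hcRel_id.2 ⟨N, hN, hNv⟩
  exact r1.trans (r2.symm.trans (r1.map rfl ((C : B →+* B[X]).comp (evalRingHom 0))).symm)

end HCLocal


/-! ### Quillen patching -/

section HCQuillen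

open Polynomial

lemma hc_dilA {R T : Type*} [CommRing R] [CommRing T] [Algebra R T] (M : Submonoid R)
    [IsLocalization M T] {α : Type*} [Finite α] (p : α → T[X]) (hp : ∀ a, (p a).eval 0 = 0) :
    ∃ s ∈ M, ∃ P : α → R[X], (∀ a, (P a).eval 0 = 0) ∧
      ∀ a, (P a).map (algebraMap R T) = (p a).comp (C (algebraMap R T s) * X) := by
  letI := Polynomial.algebra R T
  haveI := Polynomial.isLocalization M T
  obtain ⟨⟨b, s, hs, rfl⟩, hb⟩ := IsLocalization.exist_integer_multiples_of_finite
    (M.map (C : R →+* R[X])) (fun a => (p a).divX)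
  choose Q hQ using hb
  refine ⟨s, hs, fun a => X * (Q a).comp (C s * X), fun a => by simp, fun a => ?_⟩
  have h1 : (Q a).map (algebraMap R T) = C (algebraMap R T s) * (p a).divX := by
    have := hQ a
    rw [Algebra.smul_def, Polynomial.algebraMap_def] at this
    simpa using this
  rw [Polynomial.map_mul, Polynomial.map_comp, h1]
  conv_rhs => rw [← X_mul_divX_add (p a), coeff_zero_eq_eval_zero, hp]
  simp
  ring

lemma hc_dilB {R T : Type*} [CommRing R] [CommRing T] [Algebra R T] (M : Submonoid R)
    [IsLocalization M T] {α : Type*} [Fintype α] (P : α → R[X]) (hP : ∀ a, (P a).eval 0 = 0)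
    (hP' : ∀ a, (P a).map (algebraMap R T) = 0) :
    ∃ s ∈ M, ∀ a, (P a).comp (C s * X) = 0 := by
  letI := Polynomial.algebra R T
  haveI := Polynomial.isLocalization M T
  have h1 : ∀ a, ∃ s ∈ M, ∀ n, (P a).coeff n * s = 0 := by
    intro a
    obtain ⟨⟨b, s, hs, rfl⟩, hb⟩ := (IsLocalization.map_eq_zero_iff (M.map (C : R →+* R[X]))
      T[X] (P a)).1 (by rw [Polynomial.algebraMap_def]; exact hP' a)
    refine ⟨s, hs, fun n => ?_⟩
    have := congrArg (fun q => coeff q n) hb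
    simpa [mul_comm] using this
  choose s hs hsP using h1
  refine ⟨∏ a, s a, prod_mem fun a _ => hs a, fun a => ?_⟩
  ext n
  rw [comp_C_mul_X_coeff, coeff_zero]
  rcases n with _ | n
  · rw [coeff_zero_eq_eval_zero, hP, zero_mul]
  · obtain ⟨t, ht⟩ := Finset.dvd_prod_of_mem s (Finset.mem_univ a)
    rw [ht, pow_succ', mul_assoc, ← mul_assoc, hsP, zero_mul]

variable {J : Type*} [Fintype J] [DecidableEq J]

/-- The family of equations saying that `H` is an isometry with inverse `H'` moving `w` to `w'`. -/
def hcFam {A : Type*} [CommRing A] (U : Matrix J J ℤ) (H H' : Matrix J J A) (w w' : J → A) :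
    (J × J) ⊕ J ⊕ (J × J) ⊕ J → A
  | Sum.inl b => (H * H') b.1 b.2 - (1 : Matrix J J A) b.1 b.2
  | Sum.inr (Sum.inl i) => hcQ U (H *ᵥ Pi.single i 1) - hcQ U (Pi.single i 1)
  | Sum.inr (Sum.inr (Sum.inl b)) => hcQ U (H *ᵥ (Pi.single b.1 1 + Pi.single b.2 1)) -
      hcQ U (Pi.single b.1 1 + Pi.single b.2 1)
  | Sum.inr (Sum.inr (Sum.inr i)) => (H *ᵥ w) i - w' i

lemma hcFam_map {A S : Type*} [CommRing A] [CommRing S] (ψ : A →+* S) (U : Matrix J J ℤ)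
    (H H' : Matrix J J A) (w w' : J → A) (b) :
    ψ (hcFam U H H' w w' b) = hcFam U (H.map ψ) (H'.map ψ) (ψ ∘ w) (ψ ∘ w') b := by
  have e2 : ∀ i k : J, (Pi.single i (1 : S) + Pi.single k 1) = ψ ∘ (Pi.single i 1 + Pi.single k 1) := by
    intro i k
    rw [← hc_comp_single ψ, ← hc_comp_single ψ]
    ext l; simp
  rcases b with b | i | b | i
  · have e1 : (1 : Matrix J J S) = (1 : Matrix J J A).map ψ := (Matrix.map_one _ ψ.map_zero ψ.map_one).symm
    simp only [hcFam, map_sub]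
    rw [← Matrix.map_mul, e1]; rfl
  · simp only [hcFam, map_sub]
    rw [← hc_comp_single ψ, hc_map_mulVec, hcQ_map, hcQ_map]
  · simp only [hcFam, map_sub]
    rw [e2, hc_map_mulVec, hcQ_map, hcQ_map]
  · simp only [hcFam, map_sub]
    rw [hc_map_mulVec]; rfl

lemma hcFam_zero {A : Type*} [CommRing A] (U : Matrix J J ℤ)
    (H H' : Matrix J J A) (w w' : J → A) (h : ∀ b, hcFam U H H' w w' b = 0) :
    hcRel U (RingHom.id A) w w' := by
  have h1 : H * H' = 1 := by
    ext i k
    exact sub_eq_zero.1 (h (Sum.inl (i, k)))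
  refine hcRel_id.2 ⟨⟨H, H', h1, mul_eq_one_comm.1 h1⟩, ?_, ?_⟩
  · exact hc_isom_of_basis U H (fun i => sub_eq_zero.1 (h (Sum.inr (Sum.inl i))))
      (fun i k => sub_eq_zero.1 (h (Sum.inr (Sum.inr (Sum.inl (i, k))))))
  · ext i
    exact sub_eq_zero.1 (h (Sum.inr (Sum.inr (Sum.inr i))))

lemma hcFam_of {A : Type*} [CommRing A] (U : Matrix J J ℤ) (g : GL J A) (hg : g ∈ hcO U A)
    (w w' : J → A) (h : g.1 *ᵥ w = w') (b) : hcFam U g.1 (g⁻¹).1 w w' b = 0 := by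
  rcases b with b | i | b | i
  · simp only [hcFam]
    rw [← Units.val_mul, mul_inv_cancel, Units.val_one, sub_self]
  · simp only [hcFam]
    rw [hg, sub_self]
  · simp only [hcFam]
    rw [hg, sub_self]
  · simp only [hcFam]
    rw [h, sub_self]

lemma hc_dilate {R T : Type*} [CommRing R] [CommRing T] [Algebra R T] (M : Submonoid R)
    [IsLocalization M T] (U : Matrix J J ℤ) (h : GL J T[X]) (hh : h ∈ hcO U T[X])
    (h0 : Matrix.GeneralLinearGroup.map (evalRingHom (0 : T)) h = 1)
    (w w' : J → R[X]) (hw0 : ∀ i, (w i).eval 0 = (w' i).eval 0)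
    (hhw : h.1 *ᵥ (mapRingHom (algebraMap R T) ∘ w) = mapRingHom (algebraMap R T) ∘ w') :
    ∃ s ∈ M, hcRel U (RingHom.id R[X]) (compRingHom (C s * X) ∘ w) (compRingHom (C s * X) ∘ w') := by
  set j := mapRingHom (algebraMap R T) with hj
  have h0' : Matrix.GeneralLinearGroup.map (evalRingHom (0 : T)) h⁻¹ = 1 := by
    rw [map_inv, h0, inv_one]
  have hone : ∀ k : GL J T[X], Matrix.GeneralLinearGroup.map (evalRingHom (0 : T)) k = 1 →
      ∀ a : J × J, ((k.1 - 1) a.1 a.2).eval 0 = 0 := by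
    intro k hk a
    have h5 : (Matrix.GeneralLinearGroup.map (evalRingHom (0 : T)) k).1 = (1 : Matrix J J T) := by
      rw [hk, Units.val_one]
    have h6 : (k.1 a.1 a.2).eval 0 = (1 : Matrix J J T) a.1 a.2 := congrFun (congrFun h5 a.1) a.2
    rw [Matrix.sub_apply, eval_sub, h6, sub_eq_zero]
    by_cases h : a.1 = a.2
    · rw [h]; simp
    · simp [Matrix.one_apply_ne h]
  obtain ⟨s, hs, P, hP0, hP⟩ := hc_dilA M (α := (J × J) ⊕ (J × J))
    (Sum.elim (fun a => (h.1 - 1) a.1 a.2) (fun a => ((h⁻¹).1 - 1) a.1 a.2))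
    (by rintro (a | a)
        · exact hone h h0 a
        · exact hone h⁻¹ h0' a)
  let H : Matrix J J R[X] := 1 + Matrix.of fun i k => P (Sum.inl (i, k))
  let H' : Matrix J J R[X] := 1 + Matrix.of fun i k => P (Sum.inr (i, k))
  let σ := compRingHom (C s * X : R[X])
  let σT := compRingHom (C (algebraMap R T s) * X : T[X])
  have hjσ : ∀ p, j (σ p) = σT (j p) := by
    intro p
    change (p.comp (C s * X)).map _ = (p.map _).comp _
    rw [Polynomial.map_comp]; simp
  have hmapH : ∀ (k : GL J T[X]) (P' : J × J → R[X]), (∀ a, (P' a).map (algebraMap R T) =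
      ((k.1 - 1) a.1 a.2).comp (C (algebraMap R T s) * X)) →
      (1 + Matrix.of fun i k => P' (i, k) : Matrix J J R[X]).map j =
        (Matrix.GeneralLinearGroup.map σT k).1 := by
    intro k P' hP'
    ext1 a b
    change j ((1 : Matrix J J R[X]) a b + P' (a, b)) = (k.1 a b).comp _
    rw [map_add]
    change _ + (P' (a, b)).map _ = _
    rw [hP', Matrix.sub_apply, sub_comp]
    by_cases h : a = b
    · rw [h]; simp
    · simp [Matrix.one_apply_ne h]
  have hevH : ∀ (P' : J × J → R[X]), (∀ a, (P' a).eval 0 = 0) →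
      (1 + Matrix.of fun i k => P' (i, k) : Matrix J J R[X]).map (evalRingHom 0) = 1 := by
    intro P' hP'
    ext1 a b
    change evalRingHom 0 ((1 : Matrix J J R[X]) a b + P' (a, b)) = _
    rw [map_add]
    change _ + (P' (a, b)).eval 0 = _
    rw [hP']
    by_cases h : a = b
    · rw [h]; simp
    · simp [Matrix.one_apply_ne h]
  have eH := hmapH h (fun a => P (Sum.inl a)) (fun a => hP (Sum.inl a))
  have eH' := hmapH h⁻¹ (fun a => P (Sum.inr a)) (fun a => hP (Sum.inr a))
  have zH := hevH (fun a => P (Sum.inl a)) (fun a => hP0 (Sum.inl a))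
  have zH' := hevH (fun a => P (Sum.inr a)) (fun a => hP0 (Sum.inr a))
  obtain ⟨t, ht, hz⟩ := hc_dilB (T := T) M (hcFam U H H' (σ ∘ w) (σ ∘ w'))
    (by
      intro b
      change evalRingHom 0 _ = 0
      rw [hcFam_map, zH, zH']
      have := hcFam_of U (1 : GL J R) (one_mem _) (evalRingHom 0 ∘ (σ ∘ w))
        (evalRingHom 0 ∘ (σ ∘ w')) (by
          rw [Units.val_one, one_mulVec]
          ext i
          simpa [σ, eval_comp] using hw0 i) b
      rw [inv_one] at this
      exact this)
    (by
      intro b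
      change j _ = 0
      rw [hcFam_map, eH, eH', map_inv]
      refine hcFam_of U (Matrix.GeneralLinearGroup.map σT h) (hcO_map _ _ hh) _ _ ?_ b
      have e1 : ∀ w : J → R[X], j ∘ (σ ∘ w) = σT ∘ (j ∘ w) := fun w => by
        ext1 i; exact hjσ _
      rw [e1, e1, hc_glmap_mulVec, hhw])
  refine ⟨s * t, mul_mem hs ht, ?_⟩
  have hσσ : ∀ w : J → R[X], compRingHom (C (s * t) * X : R[X]) ∘ w =
      compRingHom (C t * X : R[X]) ∘ (σ ∘ w) := by
    intro w
    ext1 i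
    change (w i).comp _ = ((w i).comp _).comp _
    rw [comp_assoc]
    congr 1
    simp; ring
  rw [hσσ, hσσ]
  refine hcFam_zero U (H.map (compRingHom (C t * X))) (H'.map (compRingHom (C t * X))) _ _ fun b => ?_
  rw [← hcFam_map]
  exact hz b

end HCQuillen


section HCQuillen2

open Polynomial

variable {J : Type*} [Fintype J] [DecidableEq J]

lemma hcRel.refl' {R : Type*} [CommRing R] (U : Matrix J J ℤ) (v : J → R) :
    hcRel U (RingHom.id R) v v :=
  hcRel_id.2 ⟨1, one_mem _, by rw [Units.val_one, one_mulVec]⟩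

/-- The Quillen ideal. -/
def hcQI {B : Type u} [CommRing B] (U : Matrix J J ℤ) (v : J → B[X]) : Ideal B where
  carrier := {s | ∀ (A : Type u) [CommRing A] (f : B →+* A) (x y : A),
    hcRel U (RingHom.id A) (eval₂RingHom f x ∘ v) (eval₂RingHom f (x + f s * y) ∘ v)}
  zero_mem' := by
    intro A _ f x y
    rw [map_zero, zero_mul, add_zero]
    exact hcRel.refl' U _
  add_mem' := by
    intro s t hs ht A _ f x y
    have h1 := (hs A f x y).trans (ht A f (x + f s * y) y)
    have e : x + f s * y + f t * y = x + f (s + t) * y := by rw [map_add]; ring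
    rwa [e] at h1
  smul_mem' := by
    intro c s hs A _ f x y
    have h1 := hs A f x (f c * y)
    have e : x + f s * (f c * y) = x + f (c • s) * y := by rw [smul_eq_mul, map_mul]; ring
    rwa [e] at h1

/-- The substitution `X ↦ X + Y`. -/
noncomputable def hcShift (R : Type*) [CommRing R] : R[X] →+* R[X][X] :=
  eval₂RingHom ((C : R[X] →+* R[X][X]).comp (C : R →+* R[X])) (C X + X)

lemma hc_quillen_step {B : Type u} {T : Type*} [CommRing B] [CommRing T] [Algebra B T]
    (M : Submonoid B) [IsLocalization M T] (U : Matrix J J ℤ) (v : J → B[X])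
    (hloc : hcRel U (RingHom.id T[X]) (mapRingHom (algebraMap B T) ∘ v)
      (fun i => C (((v i).map (algebraMap B T)).eval 0))) : ∃ s ∈ M, s ∈ hcQI U v := by
    obtain ⟨g, hg, hgv⟩ := hcRel_id.1 hloc
    let a : B →+* T := algebraMap B T
    letI := Polynomial.algebra B T
    haveI := Polynomial.isLocalization M T
    have halg : algebraMap B[X] T[X] = mapRingHom a := Polynomial.algebraMap_def B T
    let α0 : T[X] →+* T[X][X] := C
    let α1 : T[X] →+* T[X][X] := hcShift T
    let β1 : B[X] →+* B[X][X] := hcShift B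
    have hev1 : (evalRingHom (0 : T[X])).comp α1 = RingHom.id _ := by
      apply Polynomial.ringHom_ext
      · intro x; simp [α1, hcShift]
      · simp [α1, hcShift]
    have hev0 : (evalRingHom (0 : T[X])).comp α0 = RingHom.id _ := by
      apply Polynomial.ringHom_ext
      · intro x; simp [α0]
      · simp [α0]
    have hβ : (mapRingHom (mapRingHom a)).comp β1 = α1.comp (mapRingHom a) := by
      apply Polynomial.ringHom_ext
      · intro x; simp [α1, β1, hcShift]
      · simp [α1, β1, hcShift]
    have hevb : (evalRingHom (0 : B[X])).comp β1 = RingHom.id _ := by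
      apply Polynomial.ringHom_ext
      · intro x; simp [β1, hcShift]
      · simp [β1, hcShift]
    have hmm : ∀ α : T[X] →+* T[X][X], (evalRingHom (0 : T[X])).comp α = RingHom.id _ →
        Matrix.GeneralLinearGroup.map (evalRingHom (0 : T[X]))
          (Matrix.GeneralLinearGroup.map α g) = g := by
      intro α hα
      refine Units.ext (Matrix.ext fun i k => ?_)
      change ((evalRingHom (0 : T[X])).comp α) (g.1 i k) = g.1 i k
      rw [hα]; rfl
    obtain ⟨s, ⟨s0, hs0, rfl⟩, hrel⟩ := hc_dilate (R := B[X]) (T := T[X]) (M.map C) U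
      ((Matrix.GeneralLinearGroup.map α1 g)⁻¹ * Matrix.GeneralLinearGroup.map α0 g)
      (mul_mem (inv_mem (hcO_map U α1 hg)) (hcO_map U α0 hg))
      (by rw [map_mul, map_inv, hmm _ hev0, hmm _ hev1, inv_mul_cancel])
      (C ∘ v) (β1 ∘ v)
      (by
        intro i
        have := congrArg (fun f => f (v i)) hevb
        simp only [RingHom.comp_apply, coe_evalRingHom, RingHom.id_apply] at this
        simp [this])
      (by
        have e1 : mapRingHom (algebraMap B[X] T[X]) ∘ (C ∘ v) = α0 ∘ (mapRingHom a ∘ v) := by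
          rw [halg]; ext1 i; simp [α0]
        have e2 : mapRingHom (algebraMap B[X] T[X]) ∘ (β1 ∘ v) = α1 ∘ (mapRingHom a ∘ v) := by
          rw [halg]; ext1 i; exact congrArg (fun f => f (v i)) hβ
        have e3 : α0 ∘ (fun i => C (((v i).map a).eval 0)) =
            α1 ∘ (fun i => C (((v i).map a).eval 0)) := by
          ext1 i; simp [α0, α1, hcShift]
        rw [e1, e2, Units.val_mul, ← mulVec_mulVec, hc_glmap_mulVec, hgv, e3]
        change _ *ᵥ (α1 ∘ _) = _
        rw [← hgv, ← hc_glmap_mulVec, mulVec_mulVec, ← Units.val_mul, inv_mul_cancel, Units.val_one,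
          one_mulVec])
    refine ⟨s0, hs0, ?_⟩
    intro A _ f x y
    have h1 := hrel.map rfl (eval₂RingHom (eval₂RingHom f x) y)
    have e1 : ((eval₂RingHom (eval₂RingHom f x) y).comp (compRingHom (C (C s0) * X))).comp C =
        eval₂RingHom f x := by
      apply Polynomial.ringHom_ext
      · intro x; simp
      · simp
    have e2 : ((eval₂RingHom (eval₂RingHom f x) y).comp (compRingHom (C (C s0) * X))).comp β1 =
        eval₂RingHom f (x + f s0 * y) := by
      apply Polynomial.ringHom_ext
      · intro x; simp [β1, hcShift]
      · simp [β1, hcShift]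
    rw [← e1, ← e2]
    exact h1

theorem hc_quillen {B : Type u} [CommRing B] (U : Matrix J J ℤ) (v : J → B[X])
    (hloc : ∀ (m : Ideal B) [m.IsMaximal], hcRel U (RingHom.id (Localization.AtPrime m)[X])
      (mapRingHom (algebraMap B (Localization.AtPrime m)) ∘ v)
      (fun i => C (((v i).map (algebraMap B (Localization.AtPrime m))).eval 0))) :
    hcRel U (RingHom.id B[X]) v (fun i => C ((v i).eval 0)) := by
  have htop : hcQI U v = ⊤ := by
    by_contra hne
    obtain ⟨m, hm, hle⟩ := Ideal.exists_le_maximal _ hne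
    obtain ⟨s, hs, hs'⟩ := hc_quillen_step m.primeCompl U v (hloc m)
    exact hs (hle hs')
  have h1 : (1 : B) ∈ hcQI U v := htop ▸ Submodule.mem_top
  have h2 := h1 B[X] C 0 X
  have e1 : eval₂RingHom C 0 ∘ v = (fun i => C ((v i).eval 0)) := by
    ext1 i
    simp only [Function.comp_apply, coe_eval₂RingHom]
    rw [eval₂_at_zero, coeff_zero_eq_eval_zero]
  have e2 : eval₂RingHom (C : B →+* B[X]) (0 + C 1 * X) ∘ v = v := by
    ext1 i
    simp
  rw [e1, e2] at h2
  exact h2.symm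

end HCQuillen2


section HCMain

open Polynomial

variable {ι κ : Type*} [Fintype ι] [DecidableEq ι] [Fintype κ] [DecidableEq κ]

lemma hc_delta0_unit {C T : Type*} [CommRing C] [CommRing T] (f : C →+* T) (y : hcMonic C) :
    IsUnit (((algebraMap T[X] (hcML T)).comp (mapRingHom f)) y) := by
  have h : (y : C[X]).Monic := y.2
  exact IsLocalization.map_units (hcML T) (⟨(y : C[X]).map f, h.map f⟩ : hcMonic T)

/-- Functoriality of `C(X)`. -/
noncomputable def hcDelta0 {C T : Type*} [CommRing C] [CommRing T] (L : Type*) [CommRing L]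
    [Algebra C[X] L] [IsLocalization (hcMonic C) L] (f : C →+* T) : L →+* hcML T :=
  IsLocalization.lift (M := hcMonic C) (S := L) (hc_delta0_unit f)

lemma hcDelta0_alg {C T : Type*} [CommRing C] [CommRing T] (L : Type*) [CommRing L]
    [Algebra C[X] L] [IsLocalization (hcMonic C) L] (f : C →+* T) (p : C[X]) :
    hcDelta0 L f (algebraMap C[X] L p) = algebraMap T[X] (hcML T) (p.map f) :=
  IsLocalization.lift_eq _ _

/-- Moving the polynomial variable into the coefficients. -/
noncomputable def hcChi (R : Type*) [CommRing R] (L : Type*) [CommRing L] [Algebra R[X] L] (n : ℕ) :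
    (MvPolynomial (Fin n) R)[X] →+* MvPolynomial (Fin n) L :=
  eval₂RingHom (MvPolynomial.map ((algebraMap R[X] L).comp C))
    (MvPolynomial.C (algebraMap R[X] L X))

/-- The comparison map to `T(X)`. -/
noncomputable def hcDelta {R T : Type*} [CommRing R] [CommRing T] (L : Type*) [CommRing L]
    [Algebra R[X] L] [IsLocalization (hcMonic R) L] {n : ℕ}
    (a : MvPolynomial (Fin n) R →+* T) : MvPolynomial (Fin n) L →+* hcML T :=
  MvPolynomial.eval₂Hom (hcDelta0 L (a.comp MvPolynomial.C))
    (fun i => algebraMap T[X] (hcML T) (C (a (MvPolynomial.X i))))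

lemma hcDelta_chi {R T : Type*} [CommRing R] [CommRing T] (L : Type*) [CommRing L]
    [Algebra R[X] L] [IsLocalization (hcMonic R) L] {n : ℕ}
    (a : MvPolynomial (Fin n) R →+* T) (p : (MvPolynomial (Fin n) R)[X]) :
    hcDelta L a (hcChi R L n p) = algebraMap T[X] (hcML T) (mapRingHom a p) := by
  have h : (hcDelta L a).comp (hcChi R L n) = (algebraMap T[X] (hcML T)).comp (mapRingHom a) := by
    apply Polynomial.ringHom_ext'
    · apply MvPolynomial.ringHom_ext
      · intro r
        simp [hcDelta, hcChi, hcDelta0_alg]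
      · intro i
        simp [hcDelta, hcChi]
    · simp [hcDelta, hcChi, hcDelta0_alg]
  exact congrArg (fun f => f p) h

lemma hc_main_step {R T : Type*} [CommRing R] [CommRing T] (L : Type*) [CommRing L]
    [Algebra R[X] L] [IsLocalization (hcMonic R) L] {n : ℕ} (o : ι)
    (a : MvPolynomial (Fin n) R →+* T) (v : ι ⊕ ι ⊕ κ → (MvPolynomial (Fin n) R)[X])
    (h : hcRel (hcU ι κ) (RingHom.id (MvPolynomial (Fin n) L)) (hcChi R L n ∘ v) (hcp _ κ o)) :
    hcRel (hcU ι κ) (RingHom.id (hcML T)) (algebraMap T[X] (hcML T) ∘ (mapRingHom a ∘ v))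
      (hcp _ κ o) := by
  have h2 := h.map rfl (hcDelta L a)
  have h3 : hcDelta L a ∘ (hcChi R L n ∘ v) = algebraMap T[X] (hcML T) ∘ (mapRingHom a ∘ v) := by
    ext1 i
    exact hcDelta_chi L a (v i)
  rwa [← hcp_map, h3] at h2

lemma hc_main_succ {R : Type u} [CommRing R] (L : Type*) [CommRing L]
    [Algebra R[X] L] [IsLocalization (hcMonic R) L] {n : ℕ} [Subsingleton κ] (o : ι)
    (h3 : 3 ≤ Fintype.card ι) (v : ι ⊕ ι ⊕ κ → (MvPolynomial (Fin n) R)[X]) (hv : hcIUm v)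
    (ih1 : hcRel (hcU ι κ) (RingHom.id (MvPolynomial (Fin n) L)) (hcChi R L n ∘ v) (hcp _ κ o))
    (ih2 : hcRel (hcU ι κ) (RingHom.id (MvPolynomial (Fin n) R)) (evalRingHom 0 ∘ v) (hcp _ κ o)) :
    hcRel (hcU ι κ) (RingHom.id (MvPolynomial (Fin n) R)[X]) v (hcp _ κ o) := by
  have hq : hcRel (hcU ι κ) (RingHom.id (MvPolynomial (Fin n) R)[X]) v
      (fun i => C ((v i).eval 0)) := by
    apply hc_quillen
    intro m hm
    exact hc_local o h3 _ (hv.map _) (hc_main_step L o _ v ih1)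
  have h0' := ih2.map rfl (C : MvPolynomial (Fin n) R →+* _)
  rw [← hcp_map] at h0'
  exact hq.trans h0'

lemma hc_exists_L (R : Type u) [CommRing R] [IsNoetherianRing R] (D : ℕ)
    (hD : ringKrullDim R ≤ (D : WithBot ℕ∞)) :
    ∃ (L : Type u) (_ : CommRing L) (_ : Algebra R[X] L) (_ : IsLocalization (hcMonic R) L)
      (_ : IsNoetherianRing L), ringKrullDim L ≤ (D : WithBot ℕ∞) :=
  ⟨hcML R, inferInstance, inferInstance, inferInstance,
    IsLocalization.isNoetherianRing (hcMonic R) _ inferInstance, hc_dim_ML D hD⟩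

theorem hc_main [Subsingleton κ] (o : ι) (D : ℕ) (h3 : 3 ≤ Fintype.card ι)
    (hcard : D + 2 ≤ Fintype.card ι) (n : ℕ) : ∀ (R : Type u) [CommRing R] [IsNoetherianRing R]
    (_ : ringKrullDim R ≤ (D : WithBot ℕ∞)) (v : ι ⊕ ι ⊕ κ → MvPolynomial (Fin n) R)
    (_ : hcIUm v), hcRel (hcU ι κ) (RingHom.id _) v (hcp _ κ o) := by
  induction n with
  | zero =>
    intro R _ _ hD v hv
    refine hc_base _ Function.surjective_id o (D + 1) hcard ?_ v hv
    rw [ringKrullDim_eq_of_ringEquiv (MvPolynomial.isEmptyRingEquiv R (Fin 0))]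
    refine lt_of_le_of_lt hD ?_
    exact_mod_cast Nat.lt_succ_self D
  | succ n ih =>
    intro R _ _ hD v hv
    let e := (MvPolynomial.finSuccEquiv R n).toRingEquiv
    let v1 := e.toRingHom ∘ v
    have hv1 : hcIUm v1 := hv.map _
    obtain ⟨L, _, _, _, _, hL⟩ := hc_exists_L R D hD
    have ih1 := ih L hL (hcChi R L n ∘ v1) (hv1.map (hcChi R L n))
    have ih2 := ih R hD (evalRingHom 0 ∘ v1) (hv1.map (evalRingHom 0))
    have key := hc_main_succ L o h3 v1 hv1 ih1 ih2
    have h4 := key.map rfl e.symm.toRingHom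
    rw [← hcp_map] at h4
    have h5 : e.symm.toRingHom ∘ v1 = v := by
      ext1 i
      exact e.symm_apply_apply (v i)
    rwa [h5] at h4

end HCMain


/-! ### Cancellation -/

section HCCancel

variable {ι κ : Type*} [Fintype ι] [DecidableEq ι] [Fintype κ] [DecidableEq κ]
variable {A : Type*} [CommRing A]

/-- Inclusion of the orthogonal complement of the hyperbolic plane. -/
def hcInc (ι κ : Type*) : ι ⊕ ι ⊕ κ → Option ι ⊕ Option ι ⊕ κ
  | Sum.inl i => Sum.inl (some i)
  | Sum.inr (Sum.inl i) => Sum.inr (Sum.inl (some i))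
  | Sum.inr (Sum.inr k) => Sum.inr (Sum.inr k)

/-- Extension by zero. -/
def hcExt (y : ι ⊕ ι ⊕ κ → A) : Option ι ⊕ Option ι ⊕ κ → A
  | Sum.inl (some i) => y (Sum.inl i)
  | Sum.inr (Sum.inl (some i)) => y (Sum.inr (Sum.inl i))
  | Sum.inr (Sum.inr k) => y (Sum.inr (Sum.inr k))
  | Sum.inl none => 0
  | Sum.inr (Sum.inl none) => 0

lemma hcQ_inc (x : Option ι ⊕ Option ι ⊕ κ → A) (h : x (Sum.inl none) = 0) :
    hcQ (hcU (Option ι) κ) x = hcQ (hcU ι κ) (x ∘ hcInc ι κ) := by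
  rw [hcQ_split, hcQ_split, Fintype.sum_option, h, zero_mul, zero_add]
  rfl

lemma hcIUm_of_pair [Subsingleton κ] (u w : ι ⊕ ι ⊕ κ → A) (hu : hcQ (hcU ι κ) u = 0)
    (huw : hcB (hcU ι κ) u w = 1) : hcIUm u := by
  obtain ⟨t, ht⟩ := hc_unimod (Sum.elim (fun i => u (Sum.inl i)) (fun i => u (Sum.inr (Sum.inl i))))
    (by
      intro P hP h
      have h1 : ∀ i, u (Sum.inl i) ∈ P := fun i => h (Sum.inl i)
      have h2 : ∀ i, u (Sum.inr (Sum.inl i)) ∈ P := fun i => h (Sum.inr i)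
      have h3 : ∀ k, u (Sum.inr (Sum.inr k)) ∈ P := by
        intro k
        have hs : ∑ k, u (Sum.inr (Sum.inr k)) ^ 2 = u (Sum.inr (Sum.inr k)) ^ 2 :=
          Fintype.sum_eq_single k fun l hl => (hl (Subsingleton.elim _ _)).elim
        rw [hcQ_split, hs] at hu
        apply hP.mem_of_pow_mem 2
        rw [eq_neg_of_add_eq_zero_right hu]
        exact neg_mem (sum_mem fun i _ => P.mul_mem_right _ (h1 i))
      apply hP.ne_top
      rw [Ideal.eq_top_iff_one, ← huw, hcB_split]
      refine add_mem (sum_mem fun i _ => add_mem ?_ ?_) ?_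
      · exact P.mul_mem_right _ (h1 i)
      · exact P.mul_mem_left _ (h2 i)
      · exact P.mul_mem_left _ (sum_mem fun k _ => P.mul_mem_right _ (h3 k)))
  refine ⟨hu, fun i => t (Sum.inl i), fun i => t (Sum.inr i), ?_⟩
  rw [← ht, Fintype.sum_sum_type, Finset.sum_add_distrib]
  rfl

lemma hc_moveW (o : ι) (w : ι ⊕ ι ⊕ κ → A) (hw : hcQ (hcU ι κ) w = 0)
    (h1 : w (Sum.inr (Sum.inl o)) = 1) :
    ∃ g ∈ hcO (hcU ι κ) A, g.1 *ᵥ hcp A κ o = hcp A κ o ∧ g.1 *ᵥ w = hcm A κ o := by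
  let t : ι ⊕ ι ⊕ κ → A := fun j =>
    if j = Sum.inl o then 0 else if j = Sum.inr (Sum.inl o) then 0 else - w j
  have ht : hcB (hcU ι κ) t (hcp A κ o) = 0 := by rw [hcB_p]; simp [t]
  have hmem := hcEg_mem (hcU ι κ) (hcp A κ o) t (hcQ_p o) ht
  refine ⟨_, hmem, ?_, ?_⟩
  · rw [hcEg_mulVec, hcE_apply, hcB_comm _ _ t, ht, hcB_p]
    simp
  · set g := hcEg (hcU ι κ) (hcp A κ o) t (hcQ_p o) ht with hg
    set x := g.1 *ᵥ w with hx
    have hxQ : hcQ (hcU ι κ) x = 0 := by rw [hx, hmem, hw]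
    have hx0 : ∀ j, j ≠ Sum.inl o → x j = hcm A κ o j := by
      intro j hj
      rw [hx, hg, hcEg_mulVec, hcE_apply, hcB_p, h1]
      by_cases hj2 : j = Sum.inr (Sum.inl o)
      · subst hj2; simp [t, h1]
      · simp [t, hj, hj2]
    have hxo : x (Sum.inl o) = 0 := by
      rw [hcQ_split, Fintype.sum_eq_single o, hx0 (Sum.inr (Sum.inl o)) (by simp)] at hxQ
      · simpa [hx0] using hxQ
      · intro i hi
        rw [hx0 (Sum.inl i) (by simpa using hi)]
        simp
    ext j
    by_cases hj : j = Sum.inl o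
    · subst hj; simp [hxo]
    · exact hx0 j hj

theorem hc_cancel [Subsingleton κ]
    (htrans : ∀ v : Option ι ⊕ Option ι ⊕ κ → A, hcIUm v →
      hcRel (hcU (Option ι) κ) (RingHom.id A) v (hcp A κ none))
    (V : Type*) [AddCommGroup V] [Module A V] (q : V → A) (hq0 : q 0 = 0)
    (e : (V × (A × A)) ≃ₗ[A] (Option ι ⊕ Option ι ⊕ κ → A))
    (he : ∀ v, hcQ (hcU (Option ι) κ) (e v) = q v.1 + v.2.1 * v.2.2) :
    ∃ f : V ≃ₗ[A] (ι ⊕ ι ⊕ κ → A), ∀ v, q v = hcQ (hcU ι κ) (f v) := by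
  have polar : ∀ x y, hcB (hcU (Option ι) κ) (e x) (e y) =
      q (x.1 + y.1) + (x.2.1 + y.2.1) * (x.2.2 + y.2.2) - (q x.1 + x.2.1 * x.2.2) -
        (q y.1 + y.2.1 * y.2.2) := by
    intro x y
    have h := hcQ_add (hcU (Option ι) κ) (e x) (e y)
    rw [← map_add, he, he, he] at h
    simp only [Prod.fst_add, Prod.snd_add] at h
    rw [h]; ring
  have hu : hcQ (hcU (Option ι) κ) (e (0, (1, 0))) = 0 := by rw [he]; simp [hq0]
  have hw : hcQ (hcU (Option ι) κ) (e (0, (0, 1))) = 0 := by rw [he]; simp [hq0]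
  have huw : hcB (hcU (Option ι) κ) (e (0, (1, 0))) (e (0, (0, 1))) = 1 := by
    rw [polar]; simp [hq0]
  obtain ⟨g, hg, hgu⟩ := hcRel_id.1 (htrans _ (hcIUm_of_pair _ _ hu huw))
  obtain ⟨k, hk, hku, hkw⟩ := hc_moveW (none : Option ι) (g.1 *ᵥ e (0, (0, 1)))
    (by rw [hg, hw]) (by
      rw [← hcB_p (κ := κ) (none : Option ι) (g.1 *ᵥ e (0, (0, 1))), hcB_comm, ← hgu, hcG_B hg, huw])
  let E : V × (A × A) → (Option ι ⊕ Option ι ⊕ κ → A) := fun x => (k * g).1 *ᵥ e x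
  have hEadd : ∀ x y, E (x + y) = E x + E y := fun x y => by
    simp only [E, map_add, mulVec_add]
  have hEsmul : ∀ (c : A) x, E (c • x) = c • E x := fun c x => by
    simp only [E, map_smul, mulVec_smul]
  have hEQ : ∀ x, hcQ (hcU (Option ι) κ) (E x) = q x.1 + x.2.1 * x.2.2 := fun x => by
    rw [← he]; exact mul_mem hk hg _
  have hEB : ∀ x y, hcB (hcU (Option ι) κ) (E x) (E y) = hcB (hcU (Option ι) κ) (e x) (e y) :=
    fun x y => hcG_B (mul_mem hk hg) _ _
  have hEu : E (0, (1, 0)) = hcp A κ none := by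
    simp only [E]; rw [Units.val_mul, ← mulVec_mulVec, hgu, hku]
  have hEw : E (0, (0, 1)) = hcm A κ none := by
    simp only [E]; rw [Units.val_mul, ← mulVec_mulVec, hkw]
  have hEl : ∀ v : V, E (v, 0) (Sum.inl none) = 0 := by
    intro v
    rw [← hcB_m (κ := κ) (none : Option ι) (E (v, 0)), ← hEw, hEB, polar]
    simp [hq0]
  have hEr : ∀ v : V, E (v, 0) (Sum.inr (Sum.inl none)) = 0 := by
    intro v
    rw [← hcB_p (κ := κ) (none : Option ι) (E (v, 0)), ← hEu, hEB, polar]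
    simp [hq0]
  have hEinj : ∀ x, E x = 0 → x = 0 := by
    intro x hx
    have h1 : (k * g)⁻¹.1 *ᵥ E x = e x := by
      simp only [E]
      rw [mulVec_mulVec, ← Units.val_mul, inv_mul_cancel, Units.val_one, one_mulVec]
    rw [hx, mulVec_zero] at h1
    exact e.map_eq_zero_iff.1 h1.symm
  have hEsurj : ∀ y, ∃ x, E x = y := by
    intro y
    refine ⟨e.symm ((k * g)⁻¹.1 *ᵥ y), ?_⟩
    simp only [E]
    rw [e.apply_symm_apply, mulVec_mulVec, ← Units.val_mul, mul_inv_cancel, Units.val_one,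
      one_mulVec]
  let F : V →ₗ[A] (ι ⊕ ι ⊕ κ → A) :=
    { toFun := fun v => E (v, 0) ∘ hcInc ι κ
      map_add' := fun v w => by
        have : ((v + w, 0) : V × (A × A)) = (v, 0) + (w, 0) := by simp
        rw [this, hEadd]; rfl
      map_smul' := fun c v => by
        have : ((c • v, 0) : V × (A × A)) = c • (v, 0) := by simp
        rw [this, hEsmul]; rfl }
  have hFb : Function.Bijective F := by
    constructor
    · rw [← LinearMap.ker_eq_bot, LinearMap.ker_eq_bot']
      intro v hv
      have : E (v, 0) = 0 := by
        ext j
        rcases j with (_ | i) | (_ | i) | l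
        · exact hEl v
        · exact congrFun hv (Sum.inl i)
        · exact hEr v
        · exact congrFun hv (Sum.inr (Sum.inl i))
        · exact congrFun hv (Sum.inr (Sum.inr l))
      exact congrArg Prod.fst (hEinj _ this)
    · intro y
      obtain ⟨⟨v, a, b⟩, hx⟩ := hEsurj (hcExt y)
      refine ⟨v, ?_⟩
      have h1 : ((v, a, b) : V × (A × A)) = (v, 0) + (a • (0, (1, 0)) + b • (0, (0, 1))) := by
        simp
      rw [h1, hEadd, hEadd, hEsmul, hEsmul, hEu, hEw] at hx
      ext j
      rcases j with i | i | l
      · have := congrFun hx (Sum.inl (some i))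
        simpa [hcExt, F, hcInc] using this
      · have := congrFun hx (Sum.inr (Sum.inl (some i)))
        simpa [hcExt, F, hcInc] using this
      · have := congrFun hx (Sum.inr (Sum.inr l))
        simpa [hcExt, F, hcInc] using this
  refine ⟨LinearEquiv.ofBijective F hFb, fun v => ?_⟩
  have h1 := hEQ (v, 0)
  rw [hcQ_inc _ (hEl v)] at h1
  have h2 : q v + (0 : A) * 0 = q v := by simp
  exact (h1.trans h2).symm

/-- Reindexing, even case. -/
lemma hc_eqE (r : ℕ) (η : ι ≃ Fin r) : ∃ ε : ι ⊕ ι ⊕ Fin 0 ≃ Fin (2 * r),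
    ∀ x : Fin (2 * r) → A, quadE r x = hcQ (hcU ι (Fin 0)) (x ∘ ε) := by
  let f : ι ⊕ ι ⊕ Fin 0 → Fin (2 * r) := Sum.elim (fun i => ⟨(η i).val, by omega⟩)
    (Sum.elim (fun i => ⟨2 * r - 1 - (η i).val, by omega⟩) Fin.elim0)
  have hf : Function.Bijective f := by
    rw [Fintype.bijective_iff_injective_and_card]
    constructor
    · rintro (i | i | i) (j | j | j) h
      all_goals first | exact i.elim0 | exact j.elim0 | skip
      all_goals simp only [f, Sum.elim_inl, Sum.elim_inr, Fin.mk.injEq] at h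
      · rw [η.injective (Fin.ext h)]
      · have := (η i).2; have := (η j).2; omega
      · have := (η i).2; have := (η j).2; omega
      · have := (η i).2; have := (η j).2
        rw [η.injective (Fin.ext (by omega : (η i).val = (η j).val))]
    · simp [Fintype.card_congr η]; ring
  refine ⟨Equiv.ofBijective f hf, fun x => ?_⟩
  rw [hcQ_split, quadE, ← Equiv.sum_comp η]
  simp [f]

/-- Reindexing, odd case. -/
lemma hc_eqO (r : ℕ) (η : ι ≃ Fin r) : ∃ ε : ι ⊕ ι ⊕ Fin 1 ≃ Fin (2 * r + 1),
    ∀ x : Fin (2 * r + 1) → A, quadO r x = hcQ (hcU ι (Fin 1)) (x ∘ ε) := by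
  let f : ι ⊕ ι ⊕ Fin 1 → Fin (2 * r + 1) := Sum.elim (fun i => ⟨(η i).val, by omega⟩)
    (Sum.elim (fun i => ⟨2 * r - (η i).val, by omega⟩) (fun _ => midO r))
  have hf : Function.Bijective f := by
    rw [Fintype.bijective_iff_injective_and_card]
    constructor
    · rintro (i | i | i) (j | j | j) h
      all_goals simp only [f, Sum.elim_inl, Sum.elim_inr, Fin.mk.injEq, midO] at h
      · rw [η.injective (Fin.ext h)]
      · have := (η i).2; have := (η j).2; omega
      · have := (η i).2; omega
      · have := (η i).2; have := (η j).2; omega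
      · have := (η i).2; have := (η j).2
        rw [η.injective (Fin.ext (by omega : (η i).val = (η j).val))]
      · have := (η i).2; omega
      · have := (η j).2; omega
      · have := (η j).2; omega
      · rw [Subsingleton.elim i j]
    · simp [Fintype.card_congr η]; ring
  refine ⟨Equiv.ofBijective f hf, fun x => ?_⟩
  rw [hcQ_split, quadO, ← Equiv.sum_comp η]
  simp [f, pow_two, add_comm]

end HCCancel


/-- Cancellation of a hyperbolic plane: if the orthogonal sum of a quadratic module `(V,q)`
over `A = C[x_1,…,x_n]` with a hyperbolic plane is isometric to the free module of rank `2r`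
(resp. `2r+1`) with the split quadratic form, where `r ≥ max(3, D+2)` and `D = dim C`,
then `V` is free and `q` is split of the corresponding rank `2r−2` (resp. `2r−1`). -/
theorem hyperbolic_cancellation
    (C : Type*) [CommRing C] [IsNoetherianRing C] (n D : ℕ)
    (hdim : ringKrullDim C = (D : WithBot ℕ∞))
    (r : ℕ) (hr : max 3 (D + 2) ≤ r)
    (V : Type*) [AddCommGroup V] [Module (MvPolynomial (Fin n) C) V]
    (q : V → MvPolynomial (Fin n) C)
    (hq_smul : ∀ (a : MvPolynomial (Fin n) C) (v : V), q (a • v) = a ^ 2 * q v)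
    (hq_polar_add : ∀ x x' y : V,
      (q (x + x' + y) - q (x + x') - q y) =
        (q (x + y) - q x - q y) + (q (x' + y) - q x' - q y))
    (hq_polar_smul : ∀ (a : MvPolynomial (Fin n) C) (x y : V),
      q (a • x + y) - q (a • x) - q y = a * (q (x + y) - q x - q y)) :
    (∀ e : (V × (MvPolynomial (Fin n) C × MvPolynomial (Fin n) C)) ≃ₗ[MvPolynomial (Fin n) C]
        (Fin (2 * r) → MvPolynomial (Fin n) C),
      (∀ v, quadE r (e v) = q v.1 + v.2.1 * v.2.2) →
      ∃ f : V ≃ₗ[MvPolynomial (Fin n) C] (Fin (2 * (r - 1)) → MvPolynomial (Fin n) C),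
        ∀ v, q v = quadE (r - 1) (f v)) ∧
    (∀ e : (V × (MvPolynomial (Fin n) C × MvPolynomial (Fin n) C)) ≃ₗ[MvPolynomial (Fin n) C]
        (Fin (2 * r + 1) → MvPolynomial (Fin n) C),
      (∀ v, quadO r (e v) = q v.1 + v.2.1 * v.2.2) →
      ∃ f : V ≃ₗ[MvPolynomial (Fin n) C] (Fin (2 * (r - 1) + 1) → MvPolynomial (Fin n) C),
        ∀ v, q v = quadO (r - 1) (f v)) := by
  obtain ⟨h3, hD⟩ := max_le_iff.1 hr
  have hq0 : q 0 = 0 := by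
    have := hq_smul 0 0
    simpa using this
  obtain ⟨s, rfl⟩ : ∃ s, r = s + 1 := ⟨r - 1, by omega⟩
  have hcard : Fintype.card (Option (Fin s)) = s + 1 := by simp
  have hs : s + 1 - 1 = s := rfl
  refine ⟨fun e he => ?_, fun e he => ?_⟩
  · obtain ⟨ε, hε⟩ := hc_eqE (A := MvPolynomial (Fin n) C) (s + 1) (finSuccEquiv s).symm
    obtain ⟨ε', hε'⟩ := hc_eqE (A := MvPolynomial (Fin n) C) s (Equiv.refl _)
    obtain ⟨f, hf⟩ := hc_cancel (κ := Fin 0)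
      (hc_main (none : Option (Fin s)) D (hcard ▸ h3) (hcard ▸ hD) n C hdim.le) V q hq0
      (e.trans (LinearEquiv.funCongrLeft _ _ ε)) (fun v => by
        rw [← he, hε]; rfl)
    refine ⟨f.trans (LinearEquiv.funCongrLeft _ _ ε').symm, fun v => ?_⟩
    rw [hf]
    refine Eq.trans ?_ (hε' _).symm
    congr 1
    exact ((LinearEquiv.funCongrLeft _ _ ε').apply_symm_apply (f v)).symm
  · obtain ⟨ε, hε⟩ := hc_eqO (A := MvPolynomial (Fin n) C) (s + 1) (finSuccEquiv s).symm
    obtain ⟨ε', hε'⟩ := hc_eqO (A := MvPolynomial (Fin n) C) s (Equiv.refl _)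
    obtain ⟨f, hf⟩ := hc_cancel (κ := Fin 1)
      (hc_main (none : Option (Fin s)) D (hcard ▸ h3) (hcard ▸ hD) n C hdim.le) V q hq0
      (e.trans (LinearEquiv.funCongrLeft _ _ ε)) (fun v => by
        rw [← he, hε]; rfl)
    refine ⟨f.trans (LinearEquiv.funCongrLeft _ _ ε').symm, fun v => ?_⟩
    rw [hf]
    refine Eq.trans ?_ (hε' _).symm
    congr 1
    exact ((LinearEquiv.funCongrLeft _ _ ε').apply_symm_apply (f v)).symm
end

section
/- Let C be a commutative Noetherian ring with Krull dimension D < ∞, A = C[x_1,…,x_n], and r ≥ max(3, D+2). Then for every column b ∈ IUm_{2r}(A) there exists a column b′ ∈ EO(2r,A)^{≤ 11r−7} · b such that its entry b′_{−2} is lexicographically monic. -/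
open Matrix

/-- A multivariate polynomial is lexicographically monic if the coefficient at the
lexicographically largest occurring monomial equals `1` (variables with smaller index
are more significant). -/
def LexMonic {C : Type*} [CommRing C] {n : ℕ} (f : MvPolynomial (Fin n) C) : Prop :=
  ∃ d : Fin n →₀ ℕ, f.coeff d = 1 ∧ ∀ e : Fin n →₀ ℕ, toLex d < toLex e → f.coeff e = 0

open Polynomial in
theorem aux_height_le_add_one {B : Type*} [CommRing B] [IsNoetherianRing B]
    (P : Ideal B[X]) [P.IsPrime] : P.height ≤ (P.comap (C : B →+* B[X])).height + 1 := by
  set p : Ideal B := P.comap (C : B →+* B[X]) with hp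
  have : p.IsPrime := Ideal.IsPrime.comap _
  have : P.LiesOver p := ⟨rfl⟩
  let Rₚ := Localization.AtPrime p
  let : Algebra B[X] Rₚ[X] := Polynomial.algebra B Rₚ
  have := Polynomial.isLocalization p.primeCompl Rₚ
  set p' : Ideal Rₚ := p.map (algebraMap B Rₚ) with p'_def
  have hp'max : p'.IsMaximal := by
    rw [p'_def, Localization.AtPrime.map_eq_maximalIdeal]
    exact IsLocalRing.maximalIdeal.isMaximal Rₚ
  let P' : Ideal Rₚ[X] := P.map (algebraMap B[X] Rₚ[X])
  have disj : Disjoint (p.primeCompl.map C : Set B[X]) P := by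
    refine Set.disjoint_left.mpr fun a ⟨b, hb⟩ ha ↦ hb.1 ?_
    show C b ∈ P
    rw [hb.2]; exact ha
  have hP' : P'.IsPrime :=
    IsLocalization.isPrime_of_isPrime_disjoint (p.primeCompl.map C) _ P inferInstance disj
  have hl : P'.LiesOver p' := IsLocalization.liesOver_of_isPrime_of_disjoint p.primeCompl _ _ disj
  have eq1 : p.height = p'.height := by
    rw [IsLocalization.height_map_of_disjoint p.primeCompl]
    exact Disjoint.symm <| Set.disjoint_left.mpr fun _ a b ↦ b a
  have eq2 : P.height = P'.height := by
    rw [IsLocalization.height_map_of_disjoint (Submonoid.map C <| p.primeCompl) _ disj]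
  obtain ⟨M, hM, hPM⟩ := Ideal.exists_le_maximal P' hP'.ne_top
  have : M.LiesOver p' := by
    constructor
    refine hp'max.eq_of_le (Ideal.IsPrime.ne_top (Ideal.IsPrime.comap _)) ?_
    rw [hl.over]
    exact Ideal.comap_mono hPM
  rw [eq1, eq2, ← Polynomial.height_eq_height_add_one p' M]
  exact Ideal.height_mono hPM

open Polynomial in
/-- One-variable step of the Suslin type lemma. -/
theorem aux_suslin_step {B : Type*} [CommRing B] [IsNoetherianRing B] (S : Submonoid B) (D : ℕ)
    (hS : ∀ p : Ideal B, p.IsPrime → (∀ s ∈ S, s ∉ p) → p.height ≤ D)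
    (P : Ideal B[X]) (hPp : P.IsPrime)
    (hP : ∀ f : B[X], (∃ d, f.coeff d ∈ S ∧ ∀ e, d < e → f.coeff e = 0) → f ∉ P) :
    P.height ≤ D := by
  set p : Ideal B := P.comap (C : B →+* B[X]) with hp
  have : p.IsPrime := Ideal.IsPrime.comap _
  have : P.LiesOver p := ⟨rfl⟩
  have hpd : ∀ s ∈ S, s ∉ p := fun s hs hsp => hP (C s)
    ⟨0, by simpa using hs, fun e he => by rw [coeff_C, if_neg (by omega)]⟩ hsp
  have hpD := hS p inferInstance hpd
  have hle : p.map C ≤ P := Ideal.map_comap_le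
  by_cases hPeq : P = p.map C
  · have h := Ideal.height_le_height_add_of_liesOver p P
    have h0 : P.map (Ideal.Quotient.mk <| p.map (algebraMap B B[X])) = ⊥ := by
      rw [Ideal.map_eq_bot_iff_le_ker, Ideal.mk_ker]
      exact hPeq.le
    have : Nontrivial (B[X] ⧸ p.map (algebraMap B B[X])) := by
      apply Ideal.Quotient.nontrivial_iff.mpr
      intro h
      apply hPp.ne_top
      rw [hPeq]; exact h
    rw [h0, Ideal.height_bot, add_zero] at h
    exact h.trans hpD
  · have h1 := aux_height_le_add_one P
    rw [← hp] at h1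
    suffices h : p.height < D from h1.trans (Order.add_one_le_of_lt h)
    by_contra hlt
    have hpe : p.height = D := le_antisymm hpD (not_lt.mp hlt)
    -- an element of `P` whose leading coefficient is not in `p`
    have hex : ∃ d, ∃ f ∈ P, f.natDegree ≤ d ∧ f.coeff d ∉ p := by
      by_contra hno
      push Not at hno
      apply hPeq
      refine le_antisymm ?_ hle
      have key : ∀ d, ∀ f ∈ P, f.natDegree ≤ d → f ∈ p.map C := by
        intro d
        induction d with
        | zero =>
          intro f hf hd
          have := hno 0 f hf hd
          rw [eq_C_of_natDegree_le_zero hd]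
          exact Ideal.mem_map_of_mem _ this
        | succ d ih =>
          intro f hf hd
          have hc := hno _ f hf hd
          have hm : C (f.coeff (d+1)) * X ^ (d+1) ∈ p.map C :=
            Ideal.mul_mem_right _ _ (Ideal.mem_map_of_mem _ hc)
          have h2 := ih (f - C (f.coeff (d+1)) * X ^ (d+1)) (P.sub_mem hf (hle hm)) (by
            rw [natDegree_le_iff_coeff_eq_zero]
            intro N hN
            rw [coeff_sub, coeff_C_mul_X_pow]
            split_ifs with h
            · rw [h, sub_self]
            · rw [sub_zero]; exact coeff_eq_zero_of_natDegree_lt (by omega))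
          have := Ideal.add_mem _ h2 hm
          simpa using this
      intro f hf
      exact key _ f hf le_rfl
    obtain ⟨d, f, hfP, hfd, hfp⟩ := hex
    have hmeet : ∃ s ∈ S, s ∈ p ⊔ Ideal.span {f.coeff d} := by
      by_contra hno
      push Not at hno
      obtain ⟨q, hq, hle', hdis⟩ := Ideal.exists_le_prime_disjoint (p ⊔ Ideal.span {f.coeff d}) S
        (Set.disjoint_left.mpr fun a ha hs => hno a hs ha)
      have hqD := hS q hq (fun s hs hsq => Set.disjoint_left.mp hdis hsq hs)
      have hlt' : p < q := lt_of_le_of_ne (le_sup_left.trans hle') (by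
        rintro rfl
        exact hfp (hle' (Ideal.mem_sup_right (Ideal.mem_span_singleton_self _))))
      have := Ideal.height_add_one_le_of_lt_of_isPrime hlt'
      rw [hpe] at this
      have h3 := this.trans hqD
      have h4 : D + 1 ≤ D := by exact_mod_cast h3
      omega
    obtain ⟨s, hs, hsm⟩ := hmeet
    obtain ⟨y, hy, z, hz, rfl⟩ := Submodule.mem_sup.mp hsm
    obtain ⟨w, rfl⟩ := Ideal.mem_span_singleton'.mp hz
    refine hP (C w * f + C y * X ^ d) ⟨d, ?_, ?_⟩ ?_
    · simpa [add_comm] using hs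
    · intro e he
      rw [coeff_add, coeff_C_mul, coeff_C_mul_X_pow, if_neg (by omega),
        coeff_eq_zero_of_natDegree_lt (by omega)]
      simp
    · exact P.add_mem (P.mul_mem_left _ hfP) (P.mul_mem_right _ hy)

/-- Avoiding finitely many incomparable primes inside a coset of an ideal. -/
theorem aux_avoid {A : Type*} [CommRing A] (Q : Finset (Ideal A)) (hQ : ∀ q ∈ Q, q.IsPrime)
    (hinc : ∀ q ∈ Q, ∀ q' ∈ Q, q ≤ q' → q = q') (K : Ideal A) (hK : ∀ q ∈ Q, ¬ K ≤ q) (a : A) :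
    ∃ t ∈ K, ∀ q ∈ Q, a + t ∉ q := by
  classical
  let J : Ideal A := K ⊓ (Q.filter (fun q => a ∉ q)).inf id
  have h : ¬ ((J : Set A) ⊆ ⋃ i ∈ (↑(Q.filter (fun q => a ∈ q)) : Set (Ideal A)), (id i : Ideal A)) := by
    rw [Ideal.subset_union_prime (f := id) ⊥ ⊥ (fun i hi _ _ => hQ i (Finset.mem_filter.mp hi).1)]
    rintro ⟨q, hq, hle⟩
    rw [Finset.mem_filter] at hq
    have hqp := hQ q hq.1
    rcases hqp.inf_le.mp hle with h | h
    · exact hK q hq.1 h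
    · obtain ⟨q', hq', hle'⟩ := hqp.inf_le'.mp h
      rw [Finset.mem_filter] at hq'
      have := hinc q' hq'.1 q hq.1 hle'
      exact hq'.2 (this ▸ hq.2)
  rw [Set.not_subset] at h
  obtain ⟨t, ht, hn⟩ := h
  refine ⟨t, ht.1, fun q hq hmem => ?_⟩
  by_cases haq : a ∈ q
  · apply hn
    simp only [Set.mem_iUnion]
    refine ⟨q, by simp [hq, haq], ?_⟩
    have := q.sub_mem hmem haq
    simpa using this
  · have : t ∈ q := (Finset.inf_le (f := id) (Finset.mem_filter.mpr ⟨hq, haq⟩)) ht.2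
    apply haq
    have := q.sub_mem hmem this
    simpa using this

/-- General position. -/
theorem aux_gp {A : Type*} [CommRing A] [IsNoetherianRing A] {ι : Type*} (s : Finset ι)
    (a : ι → A) (K : Ideal A) :
    ∃ t : ι → A, (∀ i, t i ∈ K) ∧ ∀ p : Ideal A, p.IsPrime → (∀ i ∈ s, a i + t i ∈ p) →
      ¬ K ≤ p → (s.card : ℕ∞) ≤ p.height := by
  classical
  induction s using Finset.induction_on with
  | empty => exact ⟨fun _ => 0, fun _ => K.zero_mem, fun p _ _ _ => by simp⟩
  | insert j s hj ih =>
    obtain ⟨t, ht, hp⟩ := ih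
    let I : Ideal A := Ideal.span ((fun i => a i + t i) '' (s : Set ι))
    have hfin := I.finite_minimalPrimes_of_isNoetherianRing A
    let Q : Finset (Ideal A) := hfin.toFinset.filter (fun q => ¬ K ≤ q)
    obtain ⟨u, hu, huQ⟩ := aux_avoid Q
      (fun q hq => by
        have : q ∈ I.minimalPrimes := by simpa using (Finset.mem_filter.mp hq).1
        exact this.isPrime)
      (fun q hq q' hq' hle => by
        have h1 : q ∈ I.minimalPrimes := by simpa using (Finset.mem_filter.mp hq).1
        have h2 : q' ∈ I.minimalPrimes := by simpa using (Finset.mem_filter.mp hq').1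
        exact le_antisymm hle (h2.2 h1.1 hle))
      K (fun q hq => (Finset.mem_filter.mp hq).2) (a j)
    refine ⟨Function.update t j u, fun i => ?_, fun p hpp hmem hK => ?_⟩
    · by_cases h : i = j
      · subst h; simpa using hu
      · simpa [h] using ht i
    · have hIp : I ≤ p := by
        rw [Ideal.span_le]
        rintro _ ⟨i, hi, rfl⟩
        have := hmem i (Finset.mem_insert_of_mem hi)
        rwa [Function.update_of_ne (by rintro rfl; exact hj hi)] at this
      obtain ⟨q, hq, hqp⟩ := Ideal.exists_minimalPrimes_le hIp
      have hqprime := hq.isPrime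
      have hqK : ¬ K ≤ q := fun h => hK (h.trans hqp)
      have hqQ : q ∈ Q := Finset.mem_filter.mpr ⟨by simpa using hq, hqK⟩
      have hlt : q < p := lt_of_le_of_ne hqp (by
        rintro rfl
        have := hmem j (Finset.mem_insert_self _ _)
        rw [Function.update_self] at this
        exact huQ q hqQ this)
      have h1 := hp q hqprime (fun i hi => hq.le (Ideal.subset_span ⟨i, hi, rfl⟩)) hqK
      have h2 := Ideal.height_add_one_le_of_lt_of_isPrime hlt
      rw [Finset.card_insert_of_notMem hj]
      push_cast
      exact (add_le_add_left h1 1).trans h2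

theorem aux_lex_cons_lt {n : ℕ} (i j : ℕ) (m m' : Fin n →₀ ℕ) :
    toLex (Finsupp.cons i m) < toLex (Finsupp.cons j m') ↔
      i < j ∨ (i = j ∧ toLex m < toLex m') := by
  rw [Finsupp.Lex.lt_iff, Finsupp.Lex.lt_iff]
  constructor
  · rintro ⟨k, hk, hlt⟩
    induction k using Fin.cases with
    | zero => left; simpa using hlt
    | succ k =>
      right
      refine ⟨by simpa using hk 0 (Fin.succ_pos k), k, fun d hd => ?_, by simpa using hlt⟩
      simpa using hk d.succ (Fin.succ_lt_succ_iff.mpr hd)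
  · rintro (h | ⟨rfl, k, hk, h⟩)
    · exact ⟨0, fun d hd => absurd hd (Fin.not_lt_zero d), by simpa using h⟩
    · refine ⟨k.succ, fun d hd => ?_, by simpa using h⟩
      induction d using Fin.cases with
      | zero => simp
      | succ d => simpa using hk d (Fin.succ_lt_succ_iff.mp hd)

theorem aux_lexMonic_succ {C : Type*} [CommRing C] {n : ℕ} (f : MvPolynomial (Fin (n + 1)) C) :
    LexMonic f ↔ ∃ d, LexMonic ((MvPolynomial.finSuccEquiv C n f).coeff d) ∧
      ∀ e, d < e → (MvPolynomial.finSuccEquiv C n f).coeff e = 0 := by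
  constructor
  · rintro ⟨d, hd, he⟩
    refine ⟨d 0, ⟨Finsupp.tail d, ?_, fun e hlt => ?_⟩, fun e hlt => ?_⟩
    · rw [MvPolynomial.finSuccEquiv_coeff_coeff, Finsupp.cons_tail, hd]
    · rw [MvPolynomial.finSuccEquiv_coeff_coeff]
      apply he
      rw [← Finsupp.cons_tail d, aux_lex_cons_lt]
      right; exact ⟨by simp, by simpa using hlt⟩
    · ext m
      rw [MvPolynomial.finSuccEquiv_coeff_coeff, MvPolynomial.coeff_zero]
      apply he
      rw [← Finsupp.cons_tail d, aux_lex_cons_lt]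
      left; simpa using hlt
  · rintro ⟨i, ⟨d, hd, hd'⟩, hi⟩
    refine ⟨Finsupp.cons i d, by rw [← MvPolynomial.finSuccEquiv_coeff_coeff, hd], fun e hlt => ?_⟩
    rw [← Finsupp.cons_tail e, aux_lex_cons_lt] at hlt
    rw [← Finsupp.cons_tail e, ← MvPolynomial.finSuccEquiv_coeff_coeff]
    rcases hlt with h | ⟨h, h'⟩
    · rw [hi _ h, MvPolynomial.coeff_zero]
    · rw [← h]; exact hd' _ h'

theorem aux_lexMonic_zero {C : Type*} [CommRing C] (f : MvPolynomial (Fin 0) C) :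
    LexMonic f ↔ f = 1 := by
  constructor
  · rintro ⟨d, hd, -⟩
    ext m
    rw [Subsingleton.elim m d, hd, Subsingleton.elim d 0, MvPolynomial.coeff_zero_one]
  · rintro rfl
    exact ⟨0, MvPolynomial.coeff_zero_one, fun e he => by
      rw [Subsingleton.elim e 0] at he; exact absurd he (lt_irrefl _)⟩

theorem aux_lexMonic_one (C : Type*) [CommRing C] (n : ℕ) :
    LexMonic (1 : MvPolynomial (Fin n) C) := by
  induction n with
  | zero => rw [aux_lexMonic_zero]
  | succ n ih =>
    rw [aux_lexMonic_succ]
    refine ⟨0, by simpa using ih, fun e he => ?_⟩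
    rw [map_one, Polynomial.coeff_one, if_neg (by omega)]

theorem aux_lexMonic_mul {C : Type*} [CommRing C] {n : ℕ} (f g : MvPolynomial (Fin n) C)
    (hf : LexMonic f) (hg : LexMonic g) : LexMonic (f * g) := by
  induction n with
  | zero =>
    rw [aux_lexMonic_zero] at *
    rw [hf, hg, one_mul]
  | succ n ih =>
    rw [aux_lexMonic_succ] at *
    obtain ⟨d, hd, hd'⟩ := hf
    obtain ⟨e, he, he'⟩ := hg
    have h1 := Polynomial.natDegree_le_iff_coeff_eq_zero.mpr hd'
    have h2 := Polynomial.natDegree_le_iff_coeff_eq_zero.mpr he'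
    refine ⟨d + e, ?_, fun k hk => ?_⟩
    · rw [map_mul, Polynomial.coeff_mul_add_eq_of_natDegree_le h1 h2]
      exact ih _ _ hd he
    · rw [map_mul]
      exact Polynomial.coeff_eq_zero_of_natDegree_lt
        (lt_of_le_of_lt (Polynomial.natDegree_mul_le_of_le h1 h2) hk)

/-- The submonoid of lexicographically monic polynomials. -/
def auxLexS (C : Type*) [CommRing C] (n : ℕ) : Submonoid (MvPolynomial (Fin n) C) where
  carrier := {f | LexMonic f}
  one_mem' := aux_lexMonic_one C n
  mul_mem' := fun {a b} ha hb => aux_lexMonic_mul a b ha hb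

theorem aux_lexMonic_add {C : Type*} [CommRing C] {n : ℕ} (f y : MvPolynomial (Fin n) C)
    (hf : LexMonic f) : ∃ h, LexMonic (y + h * f) := by
  cases n with
  | zero =>
    rw [aux_lexMonic_zero] at hf
    refine ⟨1 - y, ?_⟩
    rw [aux_lexMonic_zero, hf]; ring
  | succ n =>
    rw [aux_lexMonic_succ] at hf
    obtain ⟨d, hd, hd'⟩ := hf
    set N := (MvPolynomial.finSuccEquiv C n y).natDegree + 1 with hN
    refine ⟨MvPolynomial.X 0 ^ N, ?_⟩
    rw [aux_lexMonic_succ]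
    have hc : ∀ k, d ≤ k → (MvPolynomial.finSuccEquiv C n (y + MvPolynomial.X 0 ^ N * f)).coeff
        (k + N) = (MvPolynomial.finSuccEquiv C n f).coeff k := by
      intro k hk
      rw [map_add, map_mul, map_pow, MvPolynomial.finSuccEquiv_X_zero, Polynomial.coeff_add,
        Polynomial.coeff_X_pow_mul, Polynomial.coeff_eq_zero_of_natDegree_lt (by omega), zero_add]
    refine ⟨d + N, by rw [hc d le_rfl]; exact hd, fun e he => ?_⟩
    obtain ⟨k, rfl⟩ : ∃ k, e = k + N := ⟨e - N, by omega⟩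
    rw [hc k (by omega)]
    exact hd' k (by omega)

/-- Suslin type lemma: primes without lexicographically monic elements have height `≤ D`. -/
theorem aux_suslin (C : Type*) [CommRing C] [IsNoetherianRing C] (n D : ℕ)
    (hdim : ringKrullDim C = (D : WithBot ℕ∞)) (P : Ideal (MvPolynomial (Fin n) C))
    (hP : P.IsPrime) (hd : ∀ s, LexMonic s → s ∉ P) : P.height ≤ D := by
  induction n with
  | zero =>
    have h := P.height_le_ringKrullDim_of_isPrime
    rw [ringKrullDim_eq_of_ringEquiv (MvPolynomial.isEmptyRingEquiv C (Fin 0)), hdim] at h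
    exact_mod_cast h
  | succ n ih =>
    let e := (MvPolynomial.finSuccEquiv C n).toRingEquiv
    have hprime : (P.map e).IsPrime := Ideal.map_isPrime_of_equiv e
    rw [← e.height_map]
    refine aux_suslin_step (auxLexS C n) D (fun p hp h => ih p hp h) _ hprime ?_
    intro f hf hfP
    rw [← Ideal.comap_symm, Ideal.mem_comap] at hfP
    refine hd _ ?_ hfP
    rw [aux_lexMonic_succ]
    have : MvPolynomial.finSuccEquiv C n (e.symm f) = f := e.apply_symm_apply f
    rw [this]
    exact hf

/-- An ideal not contained in a bad prime contains a lexicographically monic element. -/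
theorem aux_good {C : Type*} [CommRing C] {n : ℕ} (I : Ideal (MvPolynomial (Fin n) C))
    (h : ∀ p : Ideal (MvPolynomial (Fin n) C), p.IsPrime → (∀ s, LexMonic s → s ∉ p) → ¬ I ≤ p) :
    ∃ f ∈ I, LexMonic f := by
  by_contra hno
  push Not at hno
  obtain ⟨q, hq, hle, hdis⟩ := Ideal.exists_le_prime_disjoint I (auxLexS C n)
    (Set.disjoint_left.mpr fun a ha hs => hno a ha hs)
  exact h q hq (fun s hs hsq => Set.disjoint_left.mp hdis hsq hs) hle

theorem aux_negE_negE (r : ℕ) (i : Fin (2 * r)) : negE r (negE r i) = i := by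
  ext; simp only [negE]; omega

theorem aux_negE_ne (r : ℕ) (i : Fin (2 * r)) : negE r i ≠ i := by
  intro h; have := congrArg Fin.val h; simp only [negE] at this; omega

theorem aux_negE_inj (r : ℕ) {i j : Fin (2 * r)} (h : negE r i = negE r j) : i = j := by
  rw [← aux_negE_negE r i, h, aux_negE_negE]

theorem aux_TE_mulVec {R : Type*} [CommRing R] (r : ℕ) (i j : Fin (2 * r)) (ξ : R)
    (b : Fin (2 * r) → R) (m : Fin (2 * r)) :
    (TE r i j ξ).mulVec b m = b m + (if m = i then ξ * b j else 0)
      - (if m = negE r j then ξ * b (negE r i) else 0) := by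
  simp [TE, Matrix.sub_mulVec, Matrix.add_mulVec, Matrix.smul_mulVec, Matrix.single_mulVec,
    Function.update_apply]

theorem aux_EOE_mul {R : Type*} [CommRing R] {r N M : ℕ}
    {g h : Matrix (Fin (2 * r)) (Fin (2 * r)) R} (hg : g ∈ EOE r N R) (hh : h ∈ EOE r M R) :
    g * h ∈ EOE r (N + M) R := by
  obtain ⟨L, hL, hL', rfl⟩ := hg
  obtain ⟨K, hK, hK', rfl⟩ := hh
  refine ⟨L ++ K, by rw [List.length_append]; omega, fun m hm => ?_, by rw [List.prod_append]⟩
  rcases List.mem_append.mp hm with h | h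
  · exact hL' m h
  · exact hK' m h

theorem aux_EOE_TE {R : Type*} [CommRing R] {r : ℕ} (i j : Fin (2 * r)) (ξ : R) (h1 : i ≠ j)
    (h2 : i ≠ negE r j) : TE r i j ξ ∈ EOE r 1 R :=
  ⟨[TE r i j ξ], by simp, fun m hm => ⟨i, j, ξ, h1, h2, by simpa using hm⟩, by simp⟩

theorem aux_batch0 {R : Type*} [CommRing R] (r : ℕ) (b : Fin (2 * r) → R) (k : Fin (2 * r))
    (t : Fin (2 * r) → R) (s : Finset (Fin (2 * r)))
    (hs : ∀ a ∈ s, a ≠ k ∧ a ≠ negE r k) (hs2 : ∀ a ∈ s, negE r a ∉ s) :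
    ∃ E ∈ EOE r s.card R, ∀ m, E.mulVec b m = if m ∈ s then b m + t m * b k else
      if m = negE r k then b m - ∑ a ∈ s, t a * b (negE r a) else b m := by
  classical
  induction s using Finset.induction_on with
  | empty =>
    refine ⟨1, ⟨[], by simp, by simp, by simp⟩, fun m => by simp⟩
  | insert a s ha ih =>
    obtain ⟨E, hE, hEb⟩ := ih (fun x hx => hs x (Finset.mem_insert_of_mem hx))
      (fun x hx h => hs2 x (Finset.mem_insert_of_mem hx) (Finset.mem_insert_of_mem h))
    have hak := hs a (Finset.mem_insert_self _ _)
    have hna : negE r a ∉ s := fun h => hs2 a (Finset.mem_insert_self _ _)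
      (Finset.mem_insert_of_mem h)
    have hks : k ∉ s := fun h => (hs k (Finset.mem_insert_of_mem h)).1 rfl
    have hnks : negE r k ∉ s := fun h => (hs _ (Finset.mem_insert_of_mem h)).2 rfl
    refine ⟨TE r a k (t a) * E, ?_, fun m => ?_⟩
    · rw [Finset.card_insert_of_notMem ha, add_comm]
      exact aux_EOE_mul (aux_EOE_TE a k (t a) hak.1 hak.2) hE
    · rw [← Matrix.mulVec_mulVec, aux_TE_mulVec, hEb k, hEb (negE r a), hEb m, if_neg hks,
        if_neg (aux_negE_ne r k).symm, if_neg hna,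
        if_neg (fun h => hak.1 (aux_negE_inj r h)), Finset.sum_insert ha]
      by_cases hma : m = a
      · subst hma
        simp [ha, hak.2]
      · by_cases hmk : m = negE r k
        · subst hmk
          simp [hma, hnks]
          ring
        · simp [hma, hmk]

theorem aux_batch {R : Type*} [CommRing R] (r : ℕ) (b : Fin (2 * r) → R) (k : Fin (2 * r))
    (t : Fin (2 * r) → R) (s : Finset (Fin (2 * r)))
    (hs : ∀ a ∈ s, a ≠ k ∧ a ≠ negE r k) (hs2 : ∀ a ∈ s, negE r a ∉ s) :
    ∃ E ∈ EOE r s.card R, ∃ b' : Fin (2 * r) → R, E.mulVec b = b' ∧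
      (∀ m ∈ s, b' m = b m + t m * b k) ∧ (∀ m ∈ s, b' (negE r m) = b (negE r m)) ∧
      b' k = b k ∧ b' (negE r k) = b (negE r k) - ∑ a ∈ s, t a * b (negE r a) := by
  obtain ⟨E, hE, h⟩ := aux_batch0 r b k t s hs hs2
  refine ⟨E, hE, _, rfl, fun m hm => ?_, fun m hm => ?_, ?_, ?_⟩
  · rw [h, if_pos hm]
  · rw [h, if_neg (hs2 m hm), if_neg (fun h => (hs m hm).1 (aux_negE_inj r h))]
  · rw [h, if_neg (fun h => (hs k h).1 rfl), if_neg (aux_negE_ne r k).symm]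
  · rw [h, if_neg (fun h => (hs _ h).2 rfl), if_pos rfl]

theorem aux_mem_span_image {R ι : Type*} [CommRing R] (s : Finset ι) (v : ι → R) (f : R)
    (hf : f ∈ Ideal.span (v '' (s : Set ι))) : ∃ ξ : ι → R, f = ∑ m ∈ s, ξ m * v m := by
  classical
  obtain ⟨c, hc⟩ := (Submodule.mem_span_image_finset_iff_exists_fun R).mp hf
  refine ⟨fun m => if hm : m ∈ s then c ⟨m, hm⟩ else 0, ?_⟩
  rw [← hc, ← Finset.sum_coe_sort s]
  exact Finset.sum_congr rfl (fun i _ => by simp)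

theorem aux_gp_bad {A : Type*} [CommRing A] [IsNoetherianRing A] {ι : Type*}
    (Bad : Ideal A → Prop) (D : ℕ) (hBad : ∀ p, Bad p → p.IsPrime ∧ p.height ≤ D)
    (s : Finset ι) (hs : D + 1 ≤ s.card) (a : ι → A) (K : Ideal A) :
    ∃ t : ι → A, (∀ i, t i ∈ K) ∧ ∀ p, Bad p → (∀ i ∈ s, a i + t i ∈ p) → K ≤ p := by
  obtain ⟨t, ht, h⟩ := aux_gp s a K
  refine ⟨t, ht, fun p hp hmem => ?_⟩
  by_contra hK
  have h1 := (h p (hBad p hp).1 hmem hK).trans (hBad p hp).2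
  have h2 : s.card ≤ D := by exact_mod_cast h1
  omega

theorem aux_gp_bad_single {A : Type*} [CommRing A] [IsNoetherianRing A] {ι : Type*}
    (Bad : Ideal A → Prop) (D : ℕ) (hBad : ∀ p, Bad p → p.IsPrime ∧ p.height ≤ D)
    (s : Finset ι) (hs : D + 1 ≤ s.card) (a : ι → A) (x : A) :
    ∃ t : ι → A, ∀ p, Bad p → (∀ i ∈ s, a i + t i * x ∈ p) → x ∈ p := by
  obtain ⟨t, ht, h⟩ := aux_gp_bad Bad D hBad s hs a (Ideal.span {x})
  choose u hu using fun i => Ideal.mem_span_singleton'.mp (ht i)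
  refine ⟨u, fun p hp hmem => ?_⟩
  have := h p hp (fun i hi => by rw [← hu i]; exact hmem i hi)
  exact this (Ideal.mem_span_singleton_self x)

/-- Obtaining a lexicographically monic entry (even case): any
`b ∈ IUm_{2r}(C[x_1,…,x_n])` can be transformed by at most `11r−7` elementary
orthogonal transvections into a column whose entry at position `−2` is
lexicographically monic. -/
theorem even_make_lexMonic
    (C : Type*) [CommRing C] [IsNoetherianRing C] (n D : ℕ)
    (hdim : ringKrullDim C = (D : WithBot ℕ∞))
    (r : ℕ) (hr : max 3 (D + 2) ≤ r)
    (b : Fin (2 * r) → MvPolynomial (Fin n) C)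
    (hb : b ∈ IUmE r (MvPolynomial (Fin n) C)) :
    ∃ E ∈ EOE r (11 * r - 7) (MvPolynomial (Fin n) C),
      LexMonic (E.mulVec b ⟨2 * r - 2, by omega⟩) := by
  classical
  have hr' : D + 2 ≤ r := le_trans (le_max_right _ _) hr
  have hr3 : 3 ≤ r := le_trans (le_max_left _ _) hr
  obtain ⟨hb1, -⟩ := hb
  let A := MvPolynomial (Fin n) C
  let Bad : Ideal A → Prop := fun p => p.IsPrime ∧ ∀ s, LexMonic s → s ∉ p
  have hBad : ∀ p, Bad p → p.IsPrime ∧ p.height ≤ D := fun p hp =>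
    ⟨hp.1, aux_suslin C n D hdim p hp.1 hp.2⟩
  -- the special indices `2` and `-2`
  obtain ⟨ρ, hρ⟩ : ∃ ρ : Fin (2 * r), ρ.val = 1 := ⟨⟨1, by omega⟩, rfl⟩
  obtain ⟨σ, hσ⟩ : ∃ σ : Fin (2 * r), σ = negE r ρ := ⟨_, rfl⟩
  have hσρ : negE r σ = ρ := by rw [hσ, aux_negE_negE]
  have hσv : (⟨2 * r - 2, by omega⟩ : Fin (2 * r)) = σ := by
    ext; rw [hσ]; simp only [negE]; omega
  rw [hσv]
  -- the two halves
  obtain ⟨s, hs⟩ : ∃ s : Finset (Fin (2 * r)), ∀ m, m ∈ s ↔ m.val < r ∧ m ≠ ρ :=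
    ⟨Finset.univ.filter (fun m => m.val < r ∧ m ≠ ρ), fun m => by simp⟩
  have hscard : s.card = r - 1 := by
    have h1 : insert ρ s = (Finset.univ : Finset (Fin r)).map
        (Fin.castLEEmb (by omega : r ≤ 2 * r)) := by
      ext m
      simp only [Finset.mem_insert, hs, Finset.mem_map, Finset.mem_univ, true_and]
      constructor
      · intro h
        have : m.val < r := by
          rcases h with rfl | h
          · omega
          · exact h.1
        exact ⟨⟨m.val, this⟩, by ext; simp⟩
      · rintro ⟨a, rfl⟩
        by_cases h : Fin.castLEEmb (by omega : r ≤ 2 * r) a = ρ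
        · left; exact h
        · right; exact ⟨by simp, h⟩
    have h2 := congrArg Finset.card h1
    rw [Finset.card_map, Finset.card_insert_of_notMem (by rw [hs]; tauto), Finset.card_univ,
      Fintype.card_fin] at h2
    omega
  obtain ⟨s', hs'⟩ : ∃ s' : Finset (Fin (2 * r)), s' = s.image (negE r) := ⟨_, rfl⟩
  have hs'card : s'.card = r - 1 := by
    rw [hs', Finset.card_image_of_injective _ (fun _ _ h => aux_negE_inj r h), hscard]
  have hmem' : ∀ m, m ∈ s' ↔ negE r m ∈ s := by
    intro m
    rw [hs', Finset.mem_image]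
    constructor
    · rintro ⟨a, ha, rfl⟩; rwa [aux_negE_negE]
    · intro h; exact ⟨_, h, aux_negE_negE r m⟩
  have hsum' : ∀ g : Fin (2 * r) → A, ∑ m ∈ s', g m = ∑ m ∈ s, g (negE r m) := by
    intro g
    rw [hs', Finset.sum_image (fun _ _ _ _ h => aux_negE_inj r h)]
  have hsneg : ∀ m ∈ s, negE r m ∉ s := by
    intro m hm h
    rw [hs] at hm h
    have := h.1
    simp only [negE] at this
    omega
  have hs'neg : ∀ m ∈ s', negE r m ∉ s' := by
    intro m hm h
    rw [hmem'] at hm h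
    exact hsneg _ hm h
  have hsρσ : ∀ m ∈ s, m ≠ ρ ∧ m ≠ σ := by
    intro m hm
    rw [hs] at hm
    refine ⟨hm.2, ?_⟩
    rintro rfl
    have := hm.1
    rw [hσ] at this
    simp only [negE] at this
    omega
  have hs'ρσ : ∀ m ∈ s', m ≠ ρ ∧ m ≠ σ := by
    intro m hm
    rw [hmem'] at hm
    have := hsρσ _ hm
    constructor
    · rintro rfl; exact this.2 hσ.symm
    · rintro rfl; exact this.1 hσρ
  have hcover : ∀ m, m = ρ ∨ m = σ ∨ m ∈ s ∨ m ∈ s' := by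
    intro m
    by_cases h1 : m = ρ
    · exact Or.inl h1
    by_cases h2 : m = σ
    · exact Or.inr (Or.inl h2)
    by_cases h3 : m.val < r
    · right; right; left; rw [hs]; exact ⟨h3, h1⟩
    · right; right; right
      rw [hmem', hs]
      refine ⟨by simp only [negE]; omega, fun h => h2 ?_⟩
      rw [hσ, ← h, aux_negE_negE]
  have hsρ : ∀ m ∈ s, m ≠ ρ ∧ m ≠ negE r ρ := fun m hm => by rw [← hσ]; exact hsρσ m hm
  have hs'ρ : ∀ m ∈ s', m ≠ ρ ∧ m ≠ negE r ρ := fun m hm => by rw [← hσ]; exact hs'ρσ m hm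
  have hsσ : ∀ m ∈ s, m ≠ σ ∧ m ≠ negE r σ := fun m hm => by rw [hσρ]; exact (hsρσ m hm).symm
  have hs'σ : ∀ m ∈ s', m ≠ σ ∧ m ≠ negE r σ := fun m hm => by rw [hσρ]; exact (hs'ρσ m hm).symm
  -- Step A
  obtain ⟨t1, ht1⟩ := aux_gp_bad_single Bad D hBad s (by omega) b (b ρ)
  obtain ⟨E1, hE1, b1, hb1E, hA1, hA2, hA3, hA4⟩ := aux_batch r b ρ t1 s hsρ hsneg
  rw [← hσ] at hA4
  have HA : ∀ p, Bad p → (∀ m ∈ s, b1 m ∈ p) → b ρ ∈ p := fun p hp h =>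
    ht1 p hp (fun i hi => by rw [← hA1 i hi]; exact h i hi)
  -- Step B
  obtain ⟨t2, ht2⟩ := aux_gp_bad_single Bad D hBad s' (by omega) b1 (b1 σ)
  obtain ⟨E2, hE2, b2, hb2E, hB1, hB2, hB3, hB4⟩ := aux_batch r b1 σ t2 s' hs'σ hs'neg
  rw [hσρ] at hB4
  have HB : ∀ p, Bad p → (∀ m ∈ s', b2 m ∈ p) → b1 σ ∈ p := fun p hp h =>
    ht2 p hp (fun i hi => by rw [← hB1 i hi]; exact h i hi)
  have hB2' : ∀ m ∈ s, b2 m = b1 m := by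
    intro m hm
    have := hB2 (negE r m) (by rw [hmem', aux_negE_negE]; exact hm)
    rwa [aux_negE_negE] at this
  have HBρ : ∀ p, Bad p → (∀ m ∈ s, b2 m ∈ p) → b2 ρ ∈ p := by
    intro p hp h
    have h1 : ∀ m ∈ s, b1 m ∈ p := fun m hm => by rw [← hB2' m hm]; exact h m hm
    rw [hB4, hA3]
    refine p.sub_mem (HA p hp h1) (p.sum_mem fun a ha => p.mul_mem_left _ (h1 _ ?_))
    rwa [← hmem']
  have hgood2 : ∃ f ∈ Ideal.span (b2 '' (s : Set (Fin (2 * r)))) ⊔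
      Ideal.span (b2 '' (s' : Set (Fin (2 * r)))), LexMonic f := by
    apply aux_good
    intro p hp1 hp2 hle
    have hp : Bad p := ⟨hp1, hp2⟩
    have hc2 : ∀ m ∈ s, b2 m ∈ p := fun m hm =>
      hle (Ideal.mem_sup_left (Ideal.subset_span ⟨m, hm, rfl⟩))
    have hd2 : ∀ m ∈ s', b2 m ∈ p := fun m hm =>
      hle (Ideal.mem_sup_right (Ideal.subset_span ⟨m, hm, rfl⟩))
    have hy1 := HB p hp hd2
    have hc1 : ∀ m ∈ s, b1 m ∈ p := fun m hm => by rw [← hB2' m hm]; exact hc2 m hm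
    have hx := HA p hp hc1
    have hd1 : ∀ m ∈ s', b1 m ∈ p := by
      intro m hm
      have := hd2 m hm
      rw [hB1 m hm] at this
      exact (Ideal.add_mem_iff_left p (p.mul_mem_left _ hy1)).mp this
    have hd : ∀ m ∈ s', b m ∈ p := by
      intro m hm
      have := hA2 (negE r m) ((hmem' m).mp hm)
      rw [aux_negE_negE] at this
      rw [← this]; exact hd1 m hm
    have hc : ∀ m ∈ s, b m ∈ p := by
      intro m hm
      have := hc1 m hm
      rw [hA1 m hm] at this
      exact (Ideal.add_mem_iff_left p (p.mul_mem_left _ hx)).mp this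
    have hy : b σ ∈ p := by
      have h2 : b σ = b1 σ + ∑ a ∈ s, t1 a * b (negE r a) := by rw [hA4]; ring
      rw [h2]
      refine p.add_mem hy1 (p.sum_mem fun a ha => p.mul_mem_left _ (hd _ ?_))
      rw [hmem', aux_negE_negE]; exact ha
    apply hp1.ne_top
    rw [eq_top_iff, ← hb1, Ideal.span_le]
    rintro _ ⟨m, rfl⟩
    rcases hcover m with rfl | rfl | h | h
    · exact hx
    · exact hy
    · exact hc m h
    · exact hd m h
  obtain ⟨f, hf, hfm⟩ := hgood2
  obtain ⟨f1, hf1, f2, hf2, rfl⟩ := Submodule.mem_sup.mp hf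
  obtain ⟨ξ, rfl⟩ := aux_mem_span_image s' b2 f2 hf2
  obtain ⟨h, hh⟩ := aux_lexMonic_add _ (b2 σ) hfm
  -- Step C
  obtain ⟨μ, hμ, HC0⟩ := aux_gp_bad Bad D hBad s (by omega)
    (fun m => b2 m - b2 ρ * (h * ξ (negE r m)))
    (Ideal.span {b2 ρ} * Ideal.span (b2 '' (s : Set (Fin (2 * r)))))
  choose l hl hlμ using fun m => Ideal.mem_span_singleton_mul.mp (hμ m)
  obtain ⟨E3, hE3, b3, hb3E, hC1, hC2, hC3, hC4⟩ :=
    aux_batch r b2 ρ (fun m => -(h * ξ (negE r m)) + l m) s hsρ hsneg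
  rw [← hσ] at hC4
  have HC : ∀ p, Bad p → (∀ m ∈ s, b3 m ∈ p) → b3 σ ∈ p → False := by
    intro p hp hc3 hy3
    have hp1 := hp.1
    have hK := HC0 p hp (fun m hm => by
      have := hc3 m hm
      rw [hC1 m hm] at this
      rw [← hlμ m]
      convert this using 1
      ring)
    have hboth : b2 ρ ∈ p ∧ ∀ m ∈ s, b2 m ∈ p := by
      rcases hp1.mul_le.mp hK with h1 | h1
      · have hx : b2 ρ ∈ p := h1 (Ideal.mem_span_singleton_self _)
        refine ⟨hx, fun m hm => ?_⟩
        have := hc3 m hm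
        rw [hC1 m hm] at this
        exact (Ideal.add_mem_iff_left p (p.mul_mem_left _ hx)).mp this
      · have hc : ∀ m ∈ s, b2 m ∈ p := fun m hm => h1 (Ideal.subset_span ⟨m, hm, rfl⟩)
        exact ⟨HBρ p hp hc, hc⟩
    have hI : Ideal.span (b2 '' (s : Set (Fin (2 * r)))) ≤ p := by
      rw [Ideal.span_le]
      rintro _ ⟨m, hm, rfl⟩
      exact hboth.2 m hm
    apply hp.2 _ hh
    have heq : b2 σ + h * (f1 + ∑ m ∈ s', ξ m * b2 m) =
        b3 σ + h * f1 + ∑ m ∈ s, l m * b2 (negE r m) := by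
      rw [hC4, hsum']
      simp only [add_mul, Finset.sum_add_distrib, neg_mul, Finset.sum_neg_distrib, mul_assoc,
        ← Finset.mul_sum]
      ring
    rw [heq]
    exact p.add_mem (p.add_mem hy3 (p.mul_mem_left _ (hI hf1)))
      (p.sum_mem fun m hm => p.mul_mem_right _ (hI (hl m)))
  -- Step D
  obtain ⟨t4, ht4⟩ := aux_gp_bad_single Bad D hBad s (by omega) b3 (b3 σ)
  obtain ⟨E4, hE4, b4, hb4E, hD1, hD2, hD3, hD4⟩ := aux_batch r b3 σ t4 s hsσ hsneg
  have hgood4 : ∃ f ∈ Ideal.span (b4 '' (s : Set (Fin (2 * r)))), LexMonic f := by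
    apply aux_good
    intro p hp1 hp2 hle
    have hp : Bad p := ⟨hp1, hp2⟩
    have hc4 : ∀ m ∈ s, b3 m + t4 m * b3 σ ∈ p := fun m hm => by
      rw [← hD1 m hm]; exact hle (Ideal.subset_span ⟨m, hm, rfl⟩)
    have hy := ht4 p hp hc4
    exact HC p hp (fun m hm => (Ideal.add_mem_iff_left p (p.mul_mem_left _ hy)).mp (hc4 m hm)) hy
  obtain ⟨g, hg, hgm⟩ := hgood4
  obtain ⟨ζ, rfl⟩ := aux_mem_span_image s b4 g hg
  obtain ⟨k, hk⟩ := aux_lexMonic_add _ (b4 σ) hgm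
  -- Step E
  obtain ⟨E5, hE5, b5, hb5E, hF1, hF2, hF3, hF4⟩ :=
    aux_batch r b4 ρ (fun m => -(k * ζ (negE r m))) s' hs'ρ hs'neg
  rw [← hσ] at hF4
  have hfin : b5 σ = b4 σ + k * ∑ m ∈ s, ζ m * b4 m := by
    rw [hF4, hsum']
    simp only [aux_negE_negE, neg_mul, Finset.sum_neg_distrib, mul_assoc, ← Finset.mul_sum]
    ring
  refine ⟨E5 * (E4 * (E3 * (E2 * E1))), ?_, ?_⟩
  · have := aux_EOE_mul hE5 (aux_EOE_mul hE4 (aux_EOE_mul hE3 (aux_EOE_mul hE2 hE1)))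
    obtain ⟨L, hL, hL'⟩ := this
    refine ⟨L, ?_, hL'⟩
    omega
  · rw [← Matrix.mulVec_mulVec, ← Matrix.mulVec_mulVec, ← Matrix.mulVec_mulVec,
      ← Matrix.mulVec_mulVec, hb1E, hb2E, hb3E, hb4E, hb5E, hfin]
    exact hk
end
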